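/- arXiv:2503.13201 — 2 statements merged into one kernel-verified Lean document; each statement's English description precedes it below -/
import Mathlib

section
/- Let p ≥ 2 be an integer and set c₂ = −(1/p)[(p(p+1)/192)·(2/p)^{2(p−1)/p}·(p+1)!/(p−1)! + (3/32)·(2/p)^{(p−2)/p}·(p+1)!/(p−2)!]. There exist a₀ > 0 and C > 0 such that for every a ∈ (0,a₀) there are a real number c(a) and a smooth, doubly 2π-periodic, symmetric function φ_a : ℝ² → ℝ satisfying −Δφ_a + c(a)φ_a = φ_a^{p+1} on ℝ², such that for all (x,y) ∈ ℝ²: |φ_a(x,y) − ((2/p)^{1/p} + a cos x cos y)| ≤ C a², and |c(a) − (2/p + c₂ a²)| ≤ C a⁴. -/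
/-!
Even `2π`-periodic functions are represented by double cosine series whose coefficients lie in an
exponentially weighted `ℓ¹` space; this is a Banach algebra and its members are smooth. Modes
`cos (k x) cos (l y)` with `k` odd are measured in units of the amplitude `a`, so that pointwise
multiplication becomes a product that depends on `s = a ^ 2` only and the wave has size one.

At `s = 0` products of odd modes vanish. The wave is sought as `β + a cos x cos y + v`, where `β` is
the equilibrium for the frequency `c = β ^ p` and `v` contains no `cos x cos y`, so that `β` takes
the place of the missing coefficient as an unknown. With a suitable inverse of `-Δ - 2` the
linearisation at `s = 0` is `1 - N` with `N ^ 2 = 0`, and the implicit function theorem yields a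
smooth branch in `s`. Hence `c` has an expansion with error `O(s ^ 2) = O(a ^ 4)`, whose linear
coefficient is read off from `(1 - N)⁻¹ = 1 + N`.
-/

noncomputable section
open Real MeasureTheory Filter

/-- doubly 2π-periodic -/
def DblPeriodic (u : ℝ → ℝ → ℝ) : Prop :=
  ∀ x y : ℝ, u (x + 2*π) y = u x y ∧ u x (y + 2*π) = u x y

/-- symmetric: even in each variable separately -/
def SymFun (u : ℝ → ℝ → ℝ) : Prop :=
  ∀ x y : ℝ, u (-x) y = u x y ∧ u x (-y) = u x y

/-- smooth as a function on ℝ² -/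
def Smooth2 (u : ℝ → ℝ → ℝ) : Prop :=
  ContDiff ℝ (⊤ : ℕ∞) fun p : ℝ × ℝ => u p.1 p.2

/-- the Laplacian Δu = u_xx + u_yy -/
def lap (u : ℝ → ℝ → ℝ) (x y : ℝ) : ℝ :=
  deriv (fun t => deriv (fun s => u s y) t) x + deriv (fun t => deriv (fun s => u x s) t) y

open scoped lp

/-! ### Cosine sequences with exponentially weighted summable coefficients -/

section SummableLift

variable {ι 𝕜 E : Type*} [NontriviallyNormedField 𝕜] [NormedAddCommGroup E] [NormedSpace 𝕜 E]
  [CompleteSpace E]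

/-- The continuous linear map out of `ℓ¹` that sends the `i`-th unit vector to `f i`, for a
bounded family `f`. -/
def l1Lift (f : ι → E) (C : ℝ) (hC : 0 ≤ C) (hf : ∀ i, ‖f i‖ ≤ C) : ℓ¹(ι, 𝕜) →L[𝕜] E :=
  lp.tsumCLM 𝕜 ι E ∘L
    lp.mapCLM 1 (fun i => .toSpanSingleton 𝕜 (f i)) hC fun i => by simpa using hf i

lemma l1Lift_single (f : ι → E) (C : ℝ) (hC : 0 ≤ C) (hf : ∀ i, ‖f i‖ ≤ C) [DecidableEq ι]
    (i : ι) (t : 𝕜) : l1Lift (𝕜 := 𝕜) f C hC hf (lp.single 1 i t) = t • f i := by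
  rw [l1Lift, ContinuousLinearMap.comp_apply, lp.tsumCLM_apply, tsum_eq_single i]
  · simp [lp.mapCLM]
  · intro j hj
    simp [lp.mapCLM, hj]

lemma norm_l1Lift_le (f : ι → E) (C : ℝ) (hC : 0 ≤ C) (hf : ∀ i, ‖f i‖ ≤ C) :
    ‖l1Lift (𝕜 := 𝕜) f C hC hf‖ ≤ C := by
  refine (ContinuousLinearMap.opNorm_comp_le _ _).trans ?_
  exact (mul_le_of_le_one_left (norm_nonneg _) lp.norm_tsumCLM_le).trans (lp.norm_mapCLM_le ..)

end SummableLift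

/-- Coefficient space of the double cosine series. The vector with `i`-th coordinate `v i` stands
for the series with Fourier coefficients `v i / weight i`, see `mode`. -/
abbrev CosSeq : Type := ℓ¹(ℕ × ℕ, ℝ)

/-- The exponential weight of a frequency, which forces the cosine series to be real analytic. -/
def weight (i : ℕ × ℕ) : ℝ := 2 ^ (i.1 + i.2)

lemma weight_pos (i : ℕ × ℕ) : 0 < weight i := by unfold weight; positivity

lemma one_le_weight (i : ℕ × ℕ) : 1 ≤ weight i := one_le_pow₀ one_le_two

/-- The element of `CosSeq` standing for the function `cos (k x) cos (l y)`, where `i = (k, l)`. -/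
def mode (i : ℕ × ℕ) : CosSeq := lp.single 1 i (weight i)

lemma norm_mode (i : ℕ × ℕ) : ‖mode i‖ = weight i := by
  rw [mode, lp.norm_single zero_lt_one, Real.norm_of_nonneg (weight_pos i).le]

section OfModes

variable {E : Type*} [NormedAddCommGroup E] [NormedSpace ℝ E]

lemma CosSeq.ext_mode {S T : CosSeq →L[ℝ] E} (h : ∀ i, S (mode i) = T (mode i)) : S = T := by
  refine lp.ext_continuousLinearMap ENNReal.one_ne_top fun i => ContinuousLinearMap.ext_ring ?_
  have hsmul : lp.single 1 i (1 : ℝ) = (weight i)⁻¹ • mode i := by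
    rw [mode, ← lp.single_smul, smul_eq_mul, inv_mul_cancel₀ (weight_pos i).ne']
  change S (lp.single 1 i 1) = T (lp.single 1 i 1)
  rw [hsmul, map_smul, map_smul, h]

lemma CosSeq.ext_mode₂ {S T : CosSeq →L[ℝ] CosSeq →L[ℝ] E}
    (h : ∀ i j, S (mode i) (mode j) = T (mode i) (mode j)) : S = T :=
  CosSeq.ext_mode fun i => CosSeq.ext_mode (h i)

variable [CompleteSpace E]

/-- The continuous linear map with prescribed values `f i` on the modes. -/
def ofModes (f : ℕ × ℕ → E) (C : ℝ) (hf : ∀ i, ‖f i‖ ≤ C * weight i) : CosSeq →L[ℝ] E :=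
  l1Lift (fun i => (weight i)⁻¹ • f i) C
    (nonneg_of_mul_nonneg_left ((norm_nonneg _).trans (hf 0)) (weight_pos 0)) fun i => by
      rw [norm_smul, norm_inv, Real.norm_of_nonneg (weight_pos i).le,
        inv_mul_le_iff₀' (weight_pos i)]
      exact hf i

variable {f : ℕ × ℕ → E} {C : ℝ} (hf : ∀ i, ‖f i‖ ≤ C * weight i)

lemma ofModes_mode (i : ℕ × ℕ) : ofModes f C hf (mode i) = f i := by
  rw [ofModes, mode, l1Lift_single, smul_inv_smul₀ (weight_pos i).ne']

lemma norm_ofModes_le : ‖ofModes f C hf‖ ≤ C := norm_l1Lift_le ..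

end OfModes

/-- The Fourier coefficient of a cosine sequence at a frequency. -/
def coeff (i : ℕ × ℕ) : CosSeq →L[ℝ] ℝ :=
  ofModes (fun j => if j = i then 1 else 0) 1 fun j => by
    have := one_le_weight j
    split_ifs <;> simp <;> linarith

lemma coeff_mode (i j : ℕ × ℕ) : coeff i (mode j) = if j = i then 1 else 0 := ofModes_mode ..

lemma coeff_apply (i : ℕ × ℕ) (v : CosSeq) : coeff i v = v i / weight i := by
  have h : coeff i = (weight i)⁻¹ • lp.evalCLM ℝ (fun _ : ℕ × ℕ => ℝ) 1 i :=
    CosSeq.ext_mode fun j => by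
      change coeff i (mode j) = (weight i)⁻¹ * mode j i
      rw [coeff_mode, mode]
      split_ifs with hij
      · rw [hij, lp.single_apply_self, inv_mul_cancel₀ (weight_pos i).ne']
      · rw [lp.single_apply_ne _ _ _ (Ne.symm hij), mul_zero]
  rw [h, div_eq_inv_mul]
  rfl

lemma hasSum_abs_coeff_mul_weight (v : CosSeq) :
    HasSum (fun i => |coeff i v| * weight i) ‖v‖ := by
  have h := lp.hasSum_norm (by simp) v
  simpa [coeff_apply, abs_div, abs_of_pos (weight_pos _), (weight_pos _).ne'] using h

lemma hasSum_coeff_smul_mode (v : CosSeq) : HasSum (fun i => coeff i v • mode i) v := by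
  have h := lp.hasSum_single ENNReal.one_ne_top v
  refine h.congr_fun fun i => ?_
  rw [mode, ← lp.single_smul, coeff_apply, smul_eq_mul, div_mul_cancel₀ _ (weight_pos i).ne']

lemma CosSeq.ext_coeff {v w : CosSeq} (h : ∀ i, coeff i v = coeff i w) : v = w :=
  (hasSum_coeff_smul_mode v).unique (by simpa only [h] using hasSum_coeff_smul_mode w)

/-- The Fourier multiplier with bounded symbol `m`. -/
def multiplier (m : ℕ × ℕ → ℝ) (C : ℝ) (hm : ∀ i, |m i| ≤ C) : CosSeq →L[ℝ] CosSeq :=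
  ofModes (fun i => m i • mode i) C fun i => by
    rw [norm_smul, norm_mode, Real.norm_eq_abs]
    exact mul_le_mul_of_nonneg_right (hm i) (weight_pos i).le

section Multiplier

variable {m : ℕ × ℕ → ℝ} {C : ℝ} (hm : ∀ i, |m i| ≤ C)

lemma multiplier_mode (i : ℕ × ℕ) : multiplier m C hm (mode i) = m i • mode i := ofModes_mode ..

lemma coeff_multiplier (i : ℕ × ℕ) (v : CosSeq) :
    coeff i (multiplier m C hm v) = m i * coeff i v := by
  have h : coeff i ∘L multiplier m C hm = m i • coeff i := CosSeq.ext_mode fun j => by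
    rw [ContinuousLinearMap.comp_apply, multiplier_mode, map_smul, smul_apply, coeff_mode]
    split_ifs with hij
    · rw [hij]
    · simp only [smul_zero]
  exact DFunLike.congr_fun h v

end Multiplier

/-! ### Products of cosine sequences -/

/-- The product of two modes, by the product-to-sum formula for cosines in each variable. -/
def modeMul (i j : ℕ × ℕ) : CosSeq :=
  (1 / 4 : ℝ) • (mode (i.1 + j.1, i.2 + j.2) + mode (i.1 + j.1, i.2.dist j.2)
    + (mode (i.1.dist j.1, i.2 + j.2) + mode (i.1.dist j.1, i.2.dist j.2)))

lemma modeMul_comm (i j : ℕ × ℕ) : modeMul i j = modeMul j i := by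
  simp only [modeMul, Nat.dist_comm, add_comm i.1, add_comm i.2]

lemma modeMul_zero_left (j : ℕ × ℕ) : modeMul 0 j = mode j := by
  simp only [modeMul, Prod.fst_zero, Prod.snd_zero, zero_add, Nat.dist_zero_left, Prod.mk.eta]
  module

lemma norm_modeMul_le (i j : ℕ × ℕ) : ‖modeMul i j‖ ≤ weight i * weight j := by
  have hmode : ∀ k l, k ≤ i.1 + j.1 → l ≤ i.2 + j.2 → ‖mode (k, l)‖ ≤ weight i * weight j := by
    intro k l hk hl
    rw [norm_mode, weight, weight, weight, ← pow_add]
    exact pow_le_pow_right₀ one_le_two (by dsimp only; omega)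
  have hdist : ∀ k l : ℕ, k.dist l ≤ k + l := fun k l => by unfold Nat.dist; omega
  rw [modeMul, norm_smul, Real.norm_of_nonneg (by norm_num)]
  have h := norm_add₄_le (a := mode (i.1 + j.1, i.2 + j.2)) (b := mode (i.1 + j.1, i.2.dist j.2))
    (c := mode (i.1.dist j.1, i.2 + j.2)) (d := mode (i.1.dist j.1, i.2.dist j.2))
  rw [add_assoc] at h
  linarith [hmode _ _ le_rfl le_rfl, hmode _ _ le_rfl (hdist i.2 j.2),
    hmode _ _ (hdist i.1 j.1) le_rfl, hmode _ _ (hdist i.1 j.1) (hdist i.2 j.2)]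

/-- The pointwise product of cosine series. -/
def seriesMul : CosSeq →L[ℝ] CosSeq →L[ℝ] CosSeq :=
  ofModes (fun i => ofModes (modeMul i) (weight i) (norm_modeMul_le i)) 1 fun i => by
    rw [one_mul]
    exact norm_ofModes_le _

lemma seriesMul_mode_mode (i j : ℕ × ℕ) : seriesMul (mode i) (mode j) = modeMul i j := by
  rw [seriesMul, ofModes_mode, ofModes_mode]

lemma seriesMul_symm (v w : CosSeq) : seriesMul v w = seriesMul w v := by
  have h : seriesMul = seriesMul.flip := CosSeq.ext_mode₂ fun i j => by
    rw [ContinuousLinearMap.flip_apply, seriesMul_mode_mode, seriesMul_mode_mode, modeMul_comm]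
  exact DFunLike.congr_fun (DFunLike.congr_fun h v) w

lemma seriesMul_mode_zero_left (v : CosSeq) : seriesMul (mode 0) v = v := by
  have h : seriesMul (mode 0) = .id ℝ CosSeq := CosSeq.ext_mode fun j => by
    rw [seriesMul_mode_mode, modeMul_zero_left, ContinuousLinearMap.id_apply]
  exact DFunLike.congr_fun h v

/-- The projection onto the modes `cos (k x) cos (l y)` with `k` odd. -/
def oddPart : CosSeq →L[ℝ] CosSeq :=
  multiplier (fun i => if Odd i.1 then 1 else 0) 1 fun i => by split_ifs <;> simp

lemma oddPart_mode (i : ℕ × ℕ) : oddPart (mode i) = if Odd i.1 then mode i else 0 := by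
  rw [oddPart, multiplier_mode]
  split_ifs <;> simp

lemma oddPart_oddPart (v : CosSeq) : oddPart (oddPart v) = oddPart v := by
  refine CosSeq.ext_coeff fun i => ?_
  rw [oddPart, coeff_multiplier, coeff_multiplier]
  split_ifs <;> simp

lemma oddPart_multiplier {m : ℕ × ℕ → ℝ} {C : ℝ} (hm : ∀ i, |m i| ≤ C) (v : CosSeq) :
    oddPart (multiplier m C hm v) = multiplier m C hm (oddPart v) := by
  refine CosSeq.ext_coeff fun i => ?_
  simp only [oddPart, coeff_multiplier, mul_left_comm]

lemma odd_natDist_iff {k l : ℕ} : Odd (k.dist l) ↔ Odd (k + l) := by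
  unfold Nat.dist
  grind

lemma oddPart_modeMul (i j : ℕ × ℕ) :
    oddPart (modeMul i j) = if Odd (i.1 + j.1) then modeMul i j else 0 := by
  simp only [modeMul, map_smul, map_add, oddPart_mode, odd_natDist_iff]
  split_ifs <;> simp

lemma oddPart_seriesMul (v w : CosSeq) : oddPart (seriesMul v w) =
    seriesMul (oddPart v) w + seriesMul v (oddPart w)
      - (2 : ℝ) • seriesMul (oddPart v) (oddPart w) := by
  have h : (ContinuousLinearMap.compL ℝ CosSeq CosSeq CosSeq oddPart) ∘L seriesMul =
      seriesMul ∘L oddPart + seriesMul.bilinearComp (.id ℝ CosSeq) oddPart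
        - (2 : ℝ) • seriesMul.bilinearComp oddPart oddPart := CosSeq.ext_mode₂ fun i j => by
    change oddPart (seriesMul (mode i) (mode j)) = seriesMul (oddPart (mode i)) (mode j)
      + seriesMul (mode i) (oddPart (mode j))
      - (2 : ℝ) • seriesMul (oddPart (mode i)) (oddPart (mode j))
    rw [seriesMul_mode_mode, oddPart_modeMul, oddPart_mode, oddPart_mode]
    by_cases hi : Odd i.1 <;> by_cases hj : Odd j.1 <;>
      simp [Nat.odd_add, hi, hj, seriesMul_mode_mode, ← Nat.not_odd_iff_even, two_smul]
  exact DFunLike.congr_fun (DFunLike.congr_fun h v) w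

/-- The product of the odd parts of two cosine sequences. -/
def oddMul : CosSeq →L[ℝ] CosSeq →L[ℝ] CosSeq := seriesMul.bilinearComp oddPart oddPart

/-- The product without the interaction of odd modes with odd modes. If odd modes are measured in
units of `a`, then `mixedMul v w + a ^ 2 • oddMul v w` represents the pointwise product. -/
def mixedMul : CosSeq →L[ℝ] CosSeq →L[ℝ] CosSeq := seriesMul - oddMul

lemma oddMul_apply (v w : CosSeq) : oddMul v w = seriesMul (oddPart v) (oddPart w) := rfl

lemma mixedMul_apply (v w : CosSeq) :
    mixedMul v w = seriesMul v w - seriesMul (oddPart v) (oddPart w) := rfl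

lemma mixedMul_symm (v w : CosSeq) : mixedMul v w = mixedMul w v := by
  rw [mixedMul_apply, mixedMul_apply, seriesMul_symm, seriesMul_symm (oddPart v)]

lemma oddPart_mode_zero : oddPart (mode 0) = 0 := by simp [oddPart_mode]

lemma oddMul_mode_zero_left : oddMul (mode 0) = 0 := by
  ext1 v
  rw [oddMul_apply, oddPart_mode_zero, map_zero]
  rfl

lemma oddMul_mode_zero_right (v : CosSeq) : oddMul v (mode 0) = 0 := by
  rw [oddMul_apply, oddPart_mode_zero, map_zero]

lemma mixedMul_mode_zero_left (v : CosSeq) : mixedMul (mode 0) v = v := by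
  rw [mixedMul, sub_apply, sub_apply, seriesMul_mode_zero_left, oddMul_mode_zero_left, zero_apply,
    sub_zero]

lemma mixedMul_eq_zero {v w : CosSeq} (hv : oddPart v = v) (hw : oddPart w = w) :
    mixedMul v w = 0 := by
  rw [mixedMul_apply, hv, hw, sub_self]

lemma oddPart_mixedMul {v : CosSeq} (hv : oddPart v = v) (w : CosSeq) :
    oddPart (mixedMul v w) = mixedMul v w := by
  rw [mixedMul_apply, map_sub, oddPart_seriesMul, oddPart_seriesMul, oddPart_oddPart,
    oddPart_oddPart, hv]
  module

/-! ### Rapidly decreasing cosine series -/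

/-- The Fourier mode with frequency `i`, even in each variable. -/
def cosMode (i : ℕ × ℕ) (x y : ℝ) : ℝ := cos (i.1 * x) * cos (i.2 * y)

/-- The sum of the double cosine series with coefficients `d`. -/
def cosSeries (d : ℕ × ℕ → ℝ) (x y : ℝ) : ℝ := ∑' i, d i * cosMode i x y

/-- Coefficients that decrease faster than any power of the frequency. -/
def RapidlyDecreasing (d : ℕ × ℕ → ℝ) : Prop :=
  ∀ n : ℕ, Summable fun i => |d i| * ((i.1 : ℝ) + i.2) ^ n

lemma abs_cosMode_le_one (i : ℕ × ℕ) (x y : ℝ) : |cosMode i x y| ≤ 1 := by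
  rw [cosMode, abs_mul]
  exact mul_le_one₀ (abs_cos_le_one _) (abs_nonneg _) (abs_cos_le_one _)

lemma norm_iteratedFDeriv_cos_comp_le {F : Type*} [NormedAddCommGroup F] [NormedSpace ℝ F]
    (L : F →L[ℝ] ℝ) (n : ℕ) (z : F) : ‖iteratedFDeriv ℝ n (fun z => cos (L z)) z‖ ≤ ‖L‖ ^ n := by
  change ‖iteratedFDeriv ℝ n (cos ∘ L) z‖ ≤ _
  rw [L.iteratedFDeriv_comp_right (Real.contDiff_cos (n := n)) z le_rfl]
  refine (ContinuousMultilinearMap.norm_compContinuousLinearMap_le _ _).trans ?_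
  rw [Finset.prod_const, Finset.card_univ, Fintype.card_fin,
    norm_iteratedFDeriv_eq_norm_iteratedDeriv, Real.norm_eq_abs]
  exact mul_le_of_le_one_left (by positivity) (Real.abs_iteratedDeriv_cos_le_one n _)

lemma contDiff_cosMode (i : ℕ × ℕ) {n : WithTop ℕ∞} :
    ContDiff ℝ n fun z : ℝ × ℝ => cosMode i z.1 z.2 := by
  unfold cosMode
  fun_prop

lemma norm_iteratedFDeriv_cosMode_le (i : ℕ × ℕ) (n : ℕ) (z : ℝ × ℝ) :
    ‖iteratedFDeriv ℝ n (fun z : ℝ × ℝ => cosMode i z.1 z.2) z‖ ≤ ((i.1 : ℝ) + i.2) ^ n := by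
  have hfst (m : ℕ) :
      ‖iteratedFDeriv ℝ m (fun z : ℝ × ℝ => cos (i.1 * z.1)) z‖ ≤ (i.1 : ℝ) ^ m := by
    simpa [norm_smul] using
      norm_iteratedFDeriv_cos_comp_le ((i.1 : ℝ) • ContinuousLinearMap.fst ℝ ℝ ℝ) m z
  have hsnd (m : ℕ) :
      ‖iteratedFDeriv ℝ m (fun z : ℝ × ℝ => cos (i.2 * z.2)) z‖ ≤ (i.2 : ℝ) ^ m := by
    simpa [norm_smul] using
      norm_iteratedFDeriv_cos_comp_le ((i.2 : ℝ) • ContinuousLinearMap.snd ℝ ℝ ℝ) m z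
  refine (norm_iteratedFDeriv_mul_le (N := n) (by fun_prop) (by fun_prop) z le_rfl).trans ?_
  rw [add_pow]
  refine Finset.sum_le_sum fun m _ => ?_
  calc (n.choose m : ℝ) * ‖iteratedFDeriv ℝ m (fun z : ℝ × ℝ => cos (i.1 * z.1)) z‖
        * ‖iteratedFDeriv ℝ (n - m) (fun z : ℝ × ℝ => cos (i.2 * z.2)) z‖
      ≤ n.choose m * (i.1 : ℝ) ^ m * (i.2 : ℝ) ^ (n - m) := by gcongr <;> apply_assumption
    _ = (i.1 : ℝ) ^ m * (i.2 : ℝ) ^ (n - m) * n.choose m := by ring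

lemma dblPeriodic_cosSeries (d : ℕ × ℕ → ℝ) : DblPeriodic (cosSeries d) := by
  intro x y
  simp only [cosSeries, cosMode, mul_add, cos_add_nat_mul_two_pi, and_self]

lemma symFun_cosSeries (d : ℕ × ℕ → ℝ) : SymFun (cosSeries d) := by
  intro x y
  simp only [cosSeries, cosMode, mul_neg, cos_neg, and_self]

/-- The symbol of `-Δ`. -/
def laplaceSymbol (i : ℕ × ℕ) : ℝ := (i.1 : ℝ) ^ 2 + (i.2 : ℝ) ^ 2

lemma deriv_deriv_tsum_cos {ι : Type*} {d k : ι → ℝ} (hd : Summable fun i => |d i|)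
    (hdk : Summable fun i => |d i| * k i ^ 2) (x : ℝ) :
    deriv (fun t => deriv (fun s => ∑' i, d i * cos (k i * s)) t) x
      = -∑' i, d i * k i ^ 2 * cos (k i * x) := by
  have hlin (i : ι) (t : ℝ) : HasDerivAt (fun s => k i * s) (k i) t := by
    simpa using (hasDerivAt_id t).const_mul (k i)
  have hdk₁ : Summable fun i => |d i| * |k i| := by
    refine .of_nonneg_of_le (fun i => by positivity) (fun i => ?_) (hd.add hdk)
    nlinarith [abs_nonneg (d i), sq_abs (k i), sq_nonneg (|k i| - 1), abs_nonneg (k i)]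
  have hfirst (t : ℝ) : HasDerivAt (fun s => ∑' i, d i * cos (k i * s))
      (∑' i, d i * (-sin (k i * t) * k i)) t := by
    refine hasDerivAt_tsum hdk₁ (fun i s => (hlin i s).cos.const_mul (d i)) (fun i s => ?_)
      (y₀ := 0) (by simpa using hd.of_abs) t
    rw [norm_mul, norm_mul, norm_neg, Real.norm_eq_abs (d i)]
    gcongr
    exact mul_le_of_le_one_left (abs_nonneg _) (abs_sin_le_one _)
  have hsecond : HasDerivAt (fun t => ∑' i, d i * (-sin (k i * t) * k i))
      (∑' i, d i * (-(cos (k i * x) * k i) * k i)) x := by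
    refine hasDerivAt_tsum hdk
      (fun i s => ((hlin i s).sin.neg.mul_const (k i)).const_mul (d i)) (fun i s => ?_)
      (y₀ := 0) (by simp) x
    rw [norm_mul, norm_mul, norm_neg, norm_mul, mul_assoc, ← sq, Real.norm_eq_abs (d i),
      Real.norm_eq_abs (k i), sq_abs]
    gcongr
    exact mul_le_of_le_one_left (sq_nonneg _) (abs_cos_le_one _)
  rw [funext fun t => (hfirst t).deriv, hsecond.deriv, ← tsum_neg]
  exact tsum_congr fun i => by ring

namespace RapidlyDecreasing

variable {d : ℕ × ℕ → ℝ} (hd : RapidlyDecreasing d)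
include hd

lemma mul_of_le {m : ℕ × ℕ → ℝ} {K : ℝ} {N : ℕ} (hm : ∀ i, |m i| ≤ K * ((i.1 : ℝ) + i.2) ^ N) :
    RapidlyDecreasing fun i => d i * m i := by
  intro n
  refine .of_nonneg_of_le (fun i => by positivity) (fun i => ?_) ((hd (N + n)).mul_left K)
  calc |d i * m i| * ((i.1 : ℝ) + i.2) ^ n
      ≤ |d i| * (K * ((i.1 : ℝ) + i.2) ^ N) * ((i.1 : ℝ) + i.2) ^ n := by
        rw [abs_mul]
        gcongr
        exact hm i
    _ = K * (|d i| * ((i.1 : ℝ) + i.2) ^ (N + n)) := by ring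

lemma mul_of_le_one {m : ℕ × ℕ → ℝ} (hm : ∀ i, |m i| ≤ 1) : RapidlyDecreasing fun i => d i * m i :=
  hd.mul_of_le (K := 1) (N := 0) fun i => by simpa using hm i

lemma mul_laplaceSymbol : RapidlyDecreasing fun i => d i * laplaceSymbol i :=
  hd.mul_of_le (K := 1) (N := 2) fun i => by
    rw [laplaceSymbol, abs_of_nonneg (by positivity), one_mul, add_sq]
    exact add_le_add_left (le_add_of_nonneg_right (by positivity)) _

lemma summable_abs : Summable fun i => |d i| := by simpa using hd 0

lemma summable_abs_mul_sq {k : ℕ × ℕ → ℝ} (hk : ∀ i, |k i| ≤ (i.1 : ℝ) + i.2) :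
    Summable fun i => |d i| * k i ^ 2 := by
  refine .of_nonneg_of_le (fun i => by positivity) (fun i => ?_) (hd 2)
  rw [← sq_abs (k i)]
  gcongr
  exact hk i

lemma summable_mul_cosMode (x y : ℝ) : Summable fun i => d i * cosMode i x y :=
  (hd.mul_of_le_one fun i => abs_cosMode_le_one i x y).summable_abs.of_abs

lemma smooth2_cosSeries : Smooth2 (cosSeries d) := by
  refine contDiff_tsum (fun i => contDiff_const.mul (contDiff_cosMode i)) (fun n _ => hd n)
    fun n i z _ => ?_
  have hconst := iteratedFDeriv_const_smul_apply' (𝕜 := ℝ) (a := d i)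
    (contDiff_cosMode i (n := n)).contDiffAt (x := z)
  simp only [smul_eq_mul] at hconst
  rw [hconst, norm_smul, Real.norm_eq_abs]
  gcongr
  exact norm_iteratedFDeriv_cosMode_le i n z

lemma deriv_deriv_cosSeries_fst (x y : ℝ) :
    deriv (fun t => deriv (fun s => cosSeries d s y) t) x
      = -∑' i, d i * (i.1 : ℝ) ^ 2 * cosMode i x y := by
  have hd' := hd.mul_of_le_one fun i => abs_cos_le_one (i.2 * y)
  have hseries (s : ℝ) : cosSeries d s y = ∑' i, d i * cos (i.2 * y) * cos (i.1 * s) :=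
    tsum_congr fun i => by rw [cosMode]; ring
  simp only [hseries]
  rw [deriv_deriv_tsum_cos hd'.summable_abs
    (hd'.summable_abs_mul_sq (k := fun i => i.1) fun i => by simp)]
  exact congrArg Neg.neg (tsum_congr fun i => by rw [cosMode]; ring)

lemma deriv_deriv_cosSeries_snd (x y : ℝ) :
    deriv (fun t => deriv (fun s => cosSeries d x s) t) y
      = -∑' i, d i * (i.2 : ℝ) ^ 2 * cosMode i x y := by
  have hd' := hd.mul_of_le_one fun i => abs_cos_le_one (i.1 * x)
  have hseries (s : ℝ) : cosSeries d x s = ∑' i, d i * cos (i.1 * x) * cos (i.2 * s) :=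
    tsum_congr fun i => by rw [cosMode]; ring
  simp only [hseries]
  rw [deriv_deriv_tsum_cos hd'.summable_abs
    (hd'.summable_abs_mul_sq (k := fun i => i.2) fun i => by simp)]
  exact congrArg Neg.neg (tsum_congr fun i => by rw [cosMode]; ring)

lemma neg_lap_cosSeries (x y : ℝ) :
    -lap (cosSeries d) x y = cosSeries (fun i => d i * laplaceSymbol i) x y := by
  have hsummable {m : ℕ × ℕ → ℝ} (hm : ∀ i, |m i| ≤ (i.1 : ℝ) + i.2) :
      Summable fun i => d i * m i ^ 2 * cosMode i x y :=
    (hd.mul_of_le (K := 1) (N := 2) fun i => by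
      rw [abs_pow, one_mul]; gcongr; exact hm i).summable_mul_cosMode x y
  rw [lap, hd.deriv_deriv_cosSeries_fst, hd.deriv_deriv_cosSeries_snd, neg_add, neg_neg, neg_neg,
    ← Summable.tsum_add (hsummable (m := fun i => i.1) fun i => by simp)
      (hsummable (m := fun i => i.2) fun i => by simp)]
  exact tsum_congr fun i => by unfold laplaceSymbol; ring

end RapidlyDecreasing

lemma rapidlyDecreasing_coeff (v : CosSeq) : RapidlyDecreasing fun i => coeff i v := by
  intro n
  obtain ⟨C, hC⟩ : ∃ C : ℝ, ∀ m : ℕ, (m : ℝ) ^ n ≤ C * 2 ^ m := by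
    obtain ⟨C, hC⟩ := (tendsto_pow_const_div_const_pow_of_one_lt n
      (one_lt_two (α := ℝ))).bddAbove_range
    exact ⟨C, fun m => (div_le_iff₀ (by positivity)).1 (hC ⟨m, rfl⟩)⟩
  refine .of_nonneg_of_le (fun i => by positivity) (fun i => ?_)
    ((hasSum_abs_coeff_mul_weight v).summable.mul_left C)
  calc |coeff i v| * ((i.1 : ℝ) + i.2) ^ n ≤ |coeff i v| * (C * weight i) := by
        gcongr
        simpa [weight] using hC (i.1 + i.2)
    _ = C * (|coeff i v| * weight i) := by ring

/-! ### Evaluation of cosine sequences -/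

/-- The factor by which evaluation rescales a mode: odd modes are measured in units of `a`. -/
def oddFactor (a : ℝ) (i : ℕ × ℕ) : ℝ := if Odd i.1 then a else 1

lemma abs_oddFactor_le (a : ℝ) (i : ℕ × ℕ) : |oddFactor a i| ≤ max 1 |a| := by
  unfold oddFactor
  split_ifs <;> simp

lemma rapidlyDecreasing_coeff_mul_oddFactor (a : ℝ) (v : CosSeq) :
    RapidlyDecreasing fun i => coeff i v * oddFactor a i :=
  (rapidlyDecreasing_coeff v).mul_of_le (K := max 1 |a|) (N := 0) fun i => by
    simpa using abs_oddFactor_le a i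

/-- Evaluation at a point of the plane, with odd modes measured in units of `a`. -/
def eval (a x y : ℝ) : CosSeq →L[ℝ] ℝ :=
  ofModes (fun i => oddFactor a i * cosMode i x y) (max 1 |a|) fun i => by
    rw [norm_mul]
    exact mul_le_mul (abs_oddFactor_le a i) ((abs_cosMode_le_one i x y).trans (one_le_weight i))
      (abs_nonneg _) (by positivity)

lemma eval_mode (a x y : ℝ) (i : ℕ × ℕ) : eval a x y (mode i) = oddFactor a i * cosMode i x y :=
  ofModes_mode ..

lemma eval_eq_cosSeries (a x y : ℝ) (v : CosSeq) :
    eval a x y v = cosSeries (fun i => coeff i v * oddFactor a i) x y := by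
  have h := (hasSum_coeff_smul_mode v).mapL (eval a x y)
  simp only [map_smul, eval_mode, smul_eq_mul, ← mul_assoc] at h
  exact h.tsum_eq.symm

lemma abs_eval_le (a x y : ℝ) (v : CosSeq) : |eval a x y v| ≤ max 1 |a| * ‖v‖ :=
  (eval a x y).le_of_opNorm_le (norm_ofModes_le _) v

lemma cos_natDist_mul (k m : ℕ) (x : ℝ) : cos ((k.dist m : ℕ) * x) = cos (k * x - m * x) := by
  rcases le_total k m with h | h
  · rw [Nat.dist_eq_sub_of_le h, Nat.cast_sub h, ← cos_neg]
    ring_nf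
  · rw [Nat.dist_eq_sub_of_le_right h, Nat.cast_sub h]
    ring_nf

lemma eval_modeMul (a x y : ℝ) (i j : ℕ × ℕ) :
    eval a x y (modeMul i j) = oddFactor a (i + j) * (cosMode i x y * cosMode j x y) := by
  simp only [modeMul, map_smul, map_add, eval_mode, oddFactor, odd_natDist_iff, cosMode,
    cos_natDist_mul, Nat.cast_add, add_mul, cos_add, cos_sub, smul_eq_mul, Prod.fst_add]
  ring

lemma eval_mixedMul_add_oddMul (a x y : ℝ) (v w : CosSeq) :
    eval a x y (mixedMul v w + a ^ 2 • oddMul v w) = eval a x y v * eval a x y w := by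
  have h : (ContinuousLinearMap.compL ℝ CosSeq CosSeq ℝ (eval a x y)) ∘L
      (mixedMul + a ^ 2 • oddMul) =
      (ContinuousLinearMap.mul ℝ ℝ).bilinearComp (eval a x y) (eval a x y) :=
    CosSeq.ext_mode₂ fun i j => by
      change eval a x y (mixedMul (mode i) (mode j) + a ^ 2 • oddMul (mode i) (mode j)) =
        eval a x y (mode i) * eval a x y (mode j)
      rw [mixedMul_apply, oddMul_apply, oddPart_mode, oddPart_mode, eval_mode, eval_mode]
      by_cases hi : Odd i.1 <;> by_cases hj : Odd j.1 <;>
        simp [hi, hj, seriesMul_mode_mode, eval_modeMul, oddFactor, Nat.odd_add,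
          ← Nat.not_odd_iff_even] <;> ring
  exact DFunLike.congr_fun (DFunLike.congr_fun h v) w

lemma smooth2_eval (a : ℝ) (v : CosSeq) : Smooth2 fun x y => eval a x y v := by
  simpa only [eval_eq_cosSeries] using
    (rapidlyDecreasing_coeff_mul_oddFactor a v).smooth2_cosSeries

lemma dblPeriodic_eval (a : ℝ) (v : CosSeq) : DblPeriodic fun x y => eval a x y v := by
  simpa only [eval_eq_cosSeries] using dblPeriodic_cosSeries _

lemma symFun_eval (a : ℝ) (v : CosSeq) : SymFun fun x y => eval a x y v := by
  simpa only [eval_eq_cosSeries] using symFun_cosSeries _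

lemma neg_lap_eval_add_mul_eval {c : ℝ} {v w : CosSeq}
    (h : ∀ i, laplaceSymbol i * coeff i v + c * coeff i v = coeff i w) (a x y : ℝ) :
    -lap (fun x y => eval a x y v) x y + c * eval a x y v = eval a x y w := by
  have hv := rapidlyDecreasing_coeff_mul_oddFactor a v
  simp only [eval_eq_cosSeries]
  rw [hv.neg_lap_cosSeries, cosSeries, cosSeries, cosSeries, ← tsum_mul_left,
    ← (hv.mul_laplaceSymbol.summable_mul_cosMode x y).tsum_add
      ((hv.summable_mul_cosMode x y).mul_left c)]
  exact tsum_congr fun i => by rw [← h i]; ring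

/-! ### Powers in a one-parameter family of products -/

/-- The coefficient of `X ^ k` in `(b + X) ^ n`. -/
def shiftCoeff {R : Type*} [Semiring R] (b : R) (n k : ℕ) : R := n.choose k * b ^ (n - k)

section ShiftCoeff

variable {R : Type*} [CommSemiring R] (b : R)

lemma shiftCoeff_zero_right (n : ℕ) : shiftCoeff b n 0 = b ^ n := by simp [shiftCoeff]

lemma shiftCoeff_succ_succ (n k : ℕ) :
    shiftCoeff b (n + 1) (k + 1) = b * shiftCoeff b n (k + 1) + shiftCoeff b n k := by
  simp only [shiftCoeff, Nat.choose_succ_succ, Nat.cast_add, Nat.add_sub_add_right]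
  rcases lt_or_ge n (k + 1) with hnk | hnk
  · simp [Nat.choose_eq_zero_of_lt hnk]
  · obtain ⟨m, rfl⟩ := Nat.exists_eq_add_of_le hnk
    rw [show k + 1 + m - k = m + 1 by omega, Nat.add_sub_cancel_left, pow_succ]
    ring

end ShiftCoeff

section DeformedPow

variable {𝕜 V : Type*} [NontriviallyNormedField 𝕜] [NormedAddCommGroup V] [NormedSpace 𝕜 V]

/-- The `n`-th power of `v` for the product `B₀ + s B₁`, as a function of `(s, v)`; powers are
bracketed to the right and start from `e`. -/
def deformedPow (B₀ B₁ : V →L[𝕜] V →L[𝕜] V) (e : V) : ℕ → 𝕜 × V → V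
  | 0, _ => e
  | n + 1, q => B₀ q.2 (deformedPow B₀ B₁ e n q) + q.1 • B₁ q.2 (deformedPow B₀ B₁ e n q)

variable {B₀ B₁ : V →L[𝕜] V →L[𝕜] V} {e u : V}

lemma contDiff_deformedPow {m : WithTop ℕ∞} (n : ℕ) :
    ContDiff 𝕜 m (deformedPow B₀ B₁ e n) := by
  induction n with
  | zero => exact contDiff_const
  | succ n ih =>
    exact ((B₀.contDiff.comp contDiff_snd).clm_apply ih).add
      (contDiff_fst.smul ((B₁.contDiff.comp contDiff_snd).clm_apply ih))

lemma map_deformedPow {R : Type*} [Monoid R] {ε : V → R} {s : 𝕜} (he : ε e = 1)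
    (hmul : ∀ v w, ε (B₀ v w + s • B₁ v w) = ε v * ε w) (n : ℕ) (v : V) :
    ε (deformedPow B₀ B₁ e n (s, v)) = ε v ^ n := by
  induction n with
  | zero => rw [deformedPow, he, pow_zero]
  | succ n ih => rw [deformedPow, hmul, ih, pow_succ']

variable (hone : ∀ v, B₀ e v = v) (hsymm : ∀ v w, B₀ v w = B₀ w v)
  (hnil : ∀ v, B₀ u (B₀ u v) = 0)
include hone hsymm hnil

lemma deformedPow_zero_smul_add (b : 𝕜) (n : ℕ) : deformedPow B₀ B₁ e n (0, b • e + u) =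
    shiftCoeff b n 0 • e + shiftCoeff b n 1 • u := by
  have hue : B₀ u e = u := by rw [hsymm, hone]
  have huu : B₀ u u = 0 := by simpa only [hue] using hnil e
  induction n with
  | zero => simp [deformedPow, shiftCoeff]
  | succ n ih =>
    rw [deformedPow, ih, shiftCoeff_succ_succ]
    simp only [map_add, map_smul, add_apply, smul_apply, hone, hue, huu, shiftCoeff_zero_right]
    module

lemma hasFDerivAt_deformedPow (hB₁e : B₁ e = 0) (hB₁u : B₁ u e = 0) (b : 𝕜) (n : ℕ) :
    HasFDerivAt (deformedPow B₀ B₁ e n)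
      ((ContinuousLinearMap.toSpanSingleton 𝕜
          (shiftCoeff b n 2 • B₁ u u + shiftCoeff b n 3 • B₀ u (B₁ u u))).coprod
        (shiftCoeff b n 1 • .id 𝕜 V + (2 * shiftCoeff b n 2) • B₀ u)) (0, b • e + u) := by
  induction n with
  | zero =>
    refine (hasFDerivAt_const e _).congr_fderiv ?_
    ext <;> simp [shiftCoeff]
  | succ n ih =>
    have hB (B : V →L[𝕜] V →L[𝕜] V) :=
      (B.hasFDerivAt.comp (0, b • e + u) hasFDerivAt_snd).clm_apply ih
    refine ((hB B₀).add (hasFDerivAt_fst.smul (hB B₁))).congr_fderiv ?_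
    have hvalue := deformedPow_zero_smul_add (B₁ := B₁) hone hsymm hnil b n
    refine ContinuousLinearMap.ext fun ⟨s, z⟩ => ?_
    change B₀ (b • e + u) (s • (shiftCoeff b n 2 • B₁ u u + shiftCoeff b n 3 • B₀ u (B₁ u u))
          + (shiftCoeff b n 1 • z + (2 * shiftCoeff b n 2) • B₀ u z))
        + B₀ z (deformedPow B₀ B₁ e n (0, b • e + u))
        + ((0 : 𝕜) • (_ : V) + s • B₁ (b • e + u) (deformedPow B₀ B₁ e n (0, b • e + u))) =
      s • (shiftCoeff b (n + 1) 2 • B₁ u u + shiftCoeff b (n + 1) 3 • B₀ u (B₁ u u))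
        + (shiftCoeff b (n + 1) 1 • z + (2 * shiftCoeff b (n + 1) 2) • B₀ u z)
    simp only [hvalue, shiftCoeff_succ_succ, map_add, map_smul, add_apply, smul_apply, hone, hnil,
      hB₁e, hB₁u, hsymm z, zero_apply]
    module

end DeformedPow

/-! ### Calculus along a solution curve -/

lemma exists_implicit_curve {𝕜 V W : Type*} [RCLike 𝕜] [NormedAddCommGroup V] [NormedSpace 𝕜 V]
    [CompleteSpace V] [NormedAddCommGroup W] [NormedSpace 𝕜 W] [CompleteSpace W] {n : WithTop ℕ∞}
    (hn : n ≠ 0) {F : 𝕜 × V → W} {q : 𝕜 × V} (hF : ContDiffAt 𝕜 n F q) {w : W} {A : V ≃L[𝕜] W}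
    (hF' : HasFDerivAt F ((ContinuousLinearMap.toSpanSingleton 𝕜 w).coprod (A : V →L[𝕜] W)) q) :
    ∃ g : 𝕜 → V, ContDiffAt 𝕜 n g q.1 ∧ g q.1 = q.2 ∧ HasDerivAt g (-A.symm w) q.1 ∧
      ∀ᶠ s in nhds q.1, F (s, g s) = F q := by
  have hinr : fderiv 𝕜 F q ∘L .inr 𝕜 𝕜 V = (A : V →L[𝕜] W) := by
    rw [hF'.fderiv, ContinuousLinearMap.coprod_comp_inr]
  have hinv : (fderiv 𝕜 F q ∘L .inr 𝕜 𝕜 V).IsInvertible := ⟨A, hinr.symm⟩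
  refine ⟨hF.implicitFunction hn hinv, hF.contDiffAt_implicitFunction hn hinv,
    hF.implicitFunction_apply_self hn hinv, ?_, hF.eventually_apply_implicitFunction hn hinv⟩
  have h := (hF.hasStrictFDerivAt_implicitFunction hn hinv).hasFDerivAt.hasDerivAt
  simpa [hinr, hF'.fderiv] using h

lemma isBigO_sub_sub_smul_deriv {𝕜 E : Type*} [RCLike 𝕜] [NormedAddCommGroup E] [NormedSpace 𝕜 E]
    {f : 𝕜 → E} {x : 𝕜} (hf : ContDiffAt 𝕜 2 f x) :
    (fun s => f s - f x - (s - x) • deriv f x) =O[nhds x] fun s => (s - x) ^ 2 := by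
  have hderiv : (fun s => deriv f s - deriv f x) =O[nhds x] fun s => s - x := by
    have h : ContDiffAt 𝕜 1 (fderiv 𝕜 f) x := hf.fderiv_right (by norm_num)
    exact ((h.differentiableAt one_ne_zero).clm_apply (differentiableAt_const 1)).isBigO_sub
  obtain ⟨C, hC, hbound⟩ := hderiv.exists_pos
  have hdiff : ∀ᶠ s in nhds x, DifferentiableAt 𝕜 f s :=
    (hf.eventually (by simp)).mono fun s hs => hs.differentiableAt two_ne_zero
  obtain ⟨r, hr, hball⟩ := Metric.eventually_nhds_iff_ball.1 (hbound.bound.and hdiff)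
  refine .of_bound C ?_
  filter_upwards [Metric.ball_mem_nhds x hr] with s hs
  have hmean := (convex_closedBall x ‖s - x‖).norm_image_sub_le_of_norm_hasDerivWithin_le
    (𝕜 := 𝕜) (f := fun t => f t - t • deriv f x) (f' := fun t => deriv f t - deriv f x)
    (C := C * ‖s - x‖) (x := x) (y := s) (fun t ht => ?_) (fun t ht => ?_)
    (Metric.mem_closedBall_self (norm_nonneg _)) (by simp [dist_eq_norm])
  · calc ‖f s - f x - (s - x) • deriv f x‖
        = ‖f s - s • deriv f x - (f x - x • deriv f x)‖ := by congr 1; module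
      _ ≤ C * ‖s - x‖ * ‖s - x‖ := hmean
      _ = C * ‖(s - x) ^ 2‖ := by rw [norm_pow]; ring
  all_goals have htr : t ∈ Metric.ball x r :=
    (Metric.mem_closedBall.1 ht).trans_lt (by simpa [dist_eq_norm] using hs)
  · simpa only [one_smul] using ((hball t htr).2.hasDerivAt.fun_sub
      ((hasDerivAt_id' t).smul_const (deriv f x))).hasDerivWithinAt
  · refine (hball t htr).1.trans (mul_le_mul_of_nonneg_left ?_ hC.le)
    simpa [dist_eq_norm] using ht

/-- `1 - N` as an automorphism when `N ^ 2 = 0`; its inverse is `1 + N`. -/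
def oneSubEquiv {𝕜 V : Type*} [NontriviallyNormedField 𝕜] [NormedAddCommGroup V] [NormedSpace 𝕜 V]
    (N : V →L[𝕜] V) (hN : ∀ v, N (N v) = 0) : V ≃L[𝕜] V :=
  .equivOfInverse (.id 𝕜 V - N) (.id 𝕜 V + N) (fun v => by simp [hN]) fun v => by simp [hN]

/-! ### The bifurcation equation -/

lemma laplaceSymbol_one_one : laplaceSymbol (1, 1) = 2 := by norm_num [laplaceSymbol]

lemma one_le_abs_laplaceSymbol_sub_two {i : ℕ × ℕ} (hi : i ≠ (1, 1)) :
    1 ≤ |laplaceSymbol i - 2| := by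
  obtain ⟨k, l⟩ := i
  have hne : (k : ℤ) ^ 2 + (l : ℤ) ^ 2 - 2 ≠ 0 := by
    intro h
    have hk : k < 2 := by nlinarith [sq_nonneg (l : ℤ)]
    have hl : l < 2 := by nlinarith [sq_nonneg (k : ℤ)]
    interval_cases k <;> interval_cases l <;> simp_all
  rw [laplaceSymbol]
  exact_mod_cast Int.one_le_abs hne

/-- The symbol of the inverse of `-Δ - 2`, with the value `γ` at the resonant frequency. -/
def parametrixSymbol (γ : ℝ) (i : ℕ × ℕ) : ℝ :=
  if i = (1, 1) then γ else 1 / (laplaceSymbol i - 2)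

lemma abs_parametrixSymbol_le (γ : ℝ) (i : ℕ × ℕ) : |parametrixSymbol γ i| ≤ max 1 |γ| := by
  unfold parametrixSymbol
  split_ifs with hi
  · exact le_max_right _ _
  · have hlam := one_le_abs_laplaceSymbol_sub_two hi
    rw [abs_div, abs_one]
    exact le_max_of_le_left ((div_le_one (by linarith)).2 hlam)

/-- The inverse of `-Δ - 2` off the resonant mode `cos x cos y`, on which it is multiplication
by `γ`. -/
def parametrix (γ : ℝ) : CosSeq →L[ℝ] CosSeq :=
  multiplier (parametrixSymbol γ) _ (abs_parametrixSymbol_le γ)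

lemma parametrix_mode (γ : ℝ) (i : ℕ × ℕ) :
    parametrix γ (mode i) = parametrixSymbol γ i • mode i := multiplier_mode ..

lemma coeff_parametrix (γ : ℝ) (i : ℕ × ℕ) (v : CosSeq) :
    coeff i (parametrix γ v) = parametrixSymbol γ i * coeff i v := coeff_multiplier ..

lemma parametrix_mode_zero (γ : ℝ) : parametrix γ (mode 0) = -(1 / 2 : ℝ) • mode 0 := by
  rw [parametrix_mode]
  norm_num [parametrixSymbol, laplaceSymbol, Prod.ext_iff]

lemma parametrix_resonantMode (γ : ℝ) : parametrix γ (mode (1, 1)) = γ • mode (1, 1) := by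
  rw [parametrix_mode, parametrixSymbol, if_pos rfl]

lemma oddPart_resonantMode : oddPart (mode (1, 1)) = mode (1, 1) := by simp [oddPart_mode]

lemma mixedMul_resonantMode_eq_zero {v : CosSeq} (hv : oddPart v = v) :
    mixedMul (mode (1, 1)) v = 0 := mixedMul_eq_zero oddPart_resonantMode hv

lemma oddPart_mixedMul_resonantMode (v : CosSeq) :
    oddPart (mixedMul (mode (1, 1)) v) = mixedMul (mode (1, 1)) v :=
  oddPart_mixedMul oddPart_resonantMode v

lemma mixedMul_resonantMode_parametrix (γ : ℝ) (v : CosSeq) :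
    mixedMul (mode (1, 1)) (parametrix γ (mixedMul (mode (1, 1)) v)) = 0 :=
  mixedMul_resonantMode_eq_zero <| by
    rw [parametrix, oddPart_multiplier, oddPart_mixedMul_resonantMode]

/-- The change of variables that spends the coefficient of `cos x cos y`, which is normalised in the
wave, on a shift of the equilibrium, which parametrises the frequency. -/
def perturbation : CosSeq →L[ℝ] CosSeq :=
  .id ℝ CosSeq + (coeff (1, 1)).smulRight (mode 0 - mode (1, 1))

lemma perturbation_apply (z : CosSeq) :
    perturbation z = z + coeff (1, 1) z • (mode 0 - mode (1, 1)) := rfl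

/-- The wave profile, with odd modes measured in units of the amplitude. -/
def wave (b : ℝ) (z : CosSeq) : CosSeq := b • mode 0 + mode (1, 1) + perturbation z

lemma wave_zero (b : ℝ) : wave b 0 = b • mode 0 + mode (1, 1) := by
  rw [wave, map_zero, add_zero]

lemma coeff_one_one_wave (b : ℝ) (z : CosSeq) : coeff (1, 1) (wave b z) = 1 := by
  simp [wave, perturbation_apply, coeff_mode, Prod.ext_iff]

/-- The frequency of `wave b z`: the one whose equilibrium is `b + coeff (1, 1) z`. -/
def freq (p : ℕ) (b : ℝ) (z : CosSeq) : ℝ := (b + coeff (1, 1) z) ^ p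

lemma freq_zero (p : ℕ) (b : ℝ) : freq p b 0 = b ^ p := by rw [freq, map_zero, add_zero]

lemma contDiff_freq (p : ℕ) (b : ℝ) {n : WithTop ℕ∞} : ContDiff ℝ n (freq p b) := by
  unfold freq
  fun_prop

lemma hasFDerivAt_freq (p : ℕ) (b : ℝ) :
    HasFDerivAt (freq p b) ((p * b ^ (p - 1)) • coeff (1, 1)) 0 := by
  unfold freq
  simpa using ((coeff (1, 1)).hasFDerivAt.const_add b (x := 0)).pow p

/-- The value of the parametrix at the resonant mode for which `waveEq` has unipotent linearisation
in its second argument. -/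
def resonantValue (p : ℕ) (b : ℝ) : ℝ := -1 / (p ^ 2 * b ^ (p - 1))

/-- The standing-wave equation for `wave b z` at squared amplitude `s`, in the fixed-point form
`w - cos x cos y = (-Δ - 2)⁻¹ (w ^ (p + 1) - (c + 2) w)`. -/
def waveEq (p : ℕ) (b : ℝ) (q : ℝ × CosSeq) : CosSeq :=
  wave b q.2 - mode (1, 1) - parametrix (resonantValue p b)
    (deformedPow mixedMul oddMul (mode 0) (p + 1) (q.1, wave b q.2)
      - (freq p b q.2 + 2) • wave b q.2)

lemma contDiff_waveEq (p : ℕ) (b : ℝ) {n : WithTop ℕ∞} : ContDiff ℝ n (waveEq p b) := by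
  have hwave : ContDiff ℝ n fun q : ℝ × CosSeq => wave b q.2 := by unfold wave; fun_prop
  have hfreq : ContDiff ℝ n fun q : ℝ × CosSeq => freq p b q.2 :=
    (contDiff_freq p b).comp contDiff_snd
  have hpow := (contDiff_deformedPow (B₀ := mixedMul) (B₁ := oddMul) (e := mode 0) (m := n)
    (p + 1)).comp (contDiff_fst.prodMk hwave)
  exact (hwave.sub contDiff_const).sub <|
    (parametrix _).contDiff.comp (hpow.sub ((hfreq.add contDiff_const).smul hwave))

lemma two_mul_shiftCoeff_succ_two (p : ℕ) (b : ℝ) :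
    2 * shiftCoeff b (p + 1) 2 = (p + 1) * p * b ^ (p - 1) := by
  rw [shiftCoeff, Nat.cast_choose_two, show p + 1 - 2 = p - 1 by omega]
  push_cast
  ring

section Equilibrium

variable {p : ℕ} {b : ℝ} (hb : p * b ^ p = 2)
include hb

lemma exponent_ne_zero : p ≠ 0 := by
  rintro rfl
  simp at hb

lemma equilibrium_ne_zero : b ≠ 0 := by
  rintro rfl
  simp [zero_pow (exponent_ne_zero hb)] at hb

lemma equilibrium_pow : b ^ p = 2 / p :=
  eq_div_of_mul_eq (Nat.cast_ne_zero.2 (exponent_ne_zero hb)) (by rw [mul_comm, hb])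

lemma mul_pow_pred_mul_equilibrium : p * b ^ (p - 1) * b = 2 := by
  rw [mul_assoc, pow_sub_one_mul (exponent_ne_zero hb), hb]

lemma shiftCoeff_succ_one : shiftCoeff b (p + 1) 1 = b ^ p + 2 := by
  rw [← hb]; simp [shiftCoeff]; ring

lemma sq_mul_pow_pred_mul_resonantValue : p ^ 2 * b ^ (p - 1) * resonantValue p b = -1 := by
  have hp := exponent_ne_zero hb
  have hb' := equilibrium_ne_zero hb
  rw [resonantValue]
  field_simp

lemma deformedPow_wave_zero : deformedPow mixedMul oddMul (mode 0) (p + 1) (0, wave b 0) =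
    (b ^ p + 2) • wave b 0 - (2 * b) • mode 0 := by
  rw [wave_zero, deformedPow_zero_smul_add mixedMul_mode_zero_left mixedMul_symm
    (fun v => mixedMul_resonantMode_eq_zero (oddPart_mixedMul_resonantMode v)),
    shiftCoeff_succ_one hb, shiftCoeff_zero_right]
  module

lemma waveEq_zero : waveEq p b 0 = 0 := by
  rw [waveEq, Prod.fst_zero, Prod.snd_zero, deformedPow_wave_zero hb, freq_zero,
    sub_sub_cancel_left, map_neg, map_smul, parametrix_mode_zero, wave_zero]
  module

end Equilibrium

/-- The nilpotent part of the linearisation of `waveEq` in its second argument. -/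
def waveNilpotent (p : ℕ) (b : ℝ) : CosSeq →L[ℝ] CosSeq :=
  (2 * shiftCoeff b (p + 1) 2) • parametrix (resonantValue p b) ∘L mixedMul (mode (1, 1))

lemma waveNilpotent_apply (p : ℕ) (b : ℝ) (v : CosSeq) : waveNilpotent p b v =
    (2 * shiftCoeff b (p + 1) 2) • parametrix (resonantValue p b) (mixedMul (mode (1, 1)) v) := rfl

lemma waveNilpotent_waveNilpotent (p : ℕ) (b : ℝ) (v : CosSeq) :
    waveNilpotent p b (waveNilpotent p b v) = 0 := by
  rw [waveNilpotent_apply, waveNilpotent_apply, map_smul, mixedMul_resonantMode_parametrix,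
    smul_zero, map_zero, smul_zero]

/-- The derivative of the `n`-th power of the wave in the squared amplitude. -/
def waveSource (n : ℕ) (b : ℝ) : CosSeq :=
  shiftCoeff b n 2 • oddMul (mode (1, 1)) (mode (1, 1))
    + shiftCoeff b n 3 • mixedMul (mode (1, 1)) (oddMul (mode (1, 1)) (mode (1, 1)))

lemma mixedMul_resonantMode_perturbation (z : CosSeq) :
    mixedMul (mode (1, 1)) (perturbation z) =
      mixedMul (mode (1, 1)) z + coeff (1, 1) z • mode (1, 1) := by
  rw [perturbation_apply, map_add, map_smul, map_sub, mixedMul_symm _ (mode 0),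
    mixedMul_mode_zero_left, mixedMul_resonantMode_eq_zero oddPart_resonantMode, sub_zero]

lemma hasFDerivAt_wave_snd (b : ℝ) : HasFDerivAt (fun q : ℝ × CosSeq => wave b q.2)
    (perturbation ∘L .snd ℝ ℝ CosSeq) 0 :=
  (perturbation.hasFDerivAt.comp 0 hasFDerivAt_snd).const_add _

lemma hasFDerivAt_freq_snd (p : ℕ) (b : ℝ) : HasFDerivAt (fun q : ℝ × CosSeq => freq p b q.2)
    (((p * b ^ (p - 1)) • coeff (1, 1)) ∘L .snd ℝ ℝ CosSeq) 0 :=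
  HasFDerivAt.comp (f := Prod.snd) (0 : ℝ × CosSeq) (hasFDerivAt_freq p b) hasFDerivAt_snd

lemma hasFDerivAt_deformedPow_wave (n : ℕ) (b : ℝ) :
    HasFDerivAt (fun q : ℝ × CosSeq => deformedPow mixedMul oddMul (mode 0) n (q.1, wave b q.2))
      ((ContinuousLinearMap.toSpanSingleton ℝ (waveSource n b)).coprod
        ((shiftCoeff b n 1 • .id ℝ CosSeq + (2 * shiftCoeff b n 2) • mixedMul (mode (1, 1)))
          ∘L perturbation)) 0 := by
  have hpow := hasFDerivAt_deformedPow mixedMul_mode_zero_left mixedMul_symm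
    (fun v => mixedMul_resonantMode_eq_zero (oddPart_mixedMul_resonantMode v))
    oddMul_mode_zero_left (oddMul_mode_zero_right (mode (1, 1))) b n
  rw [← wave_zero] at hpow
  exact hpow.comp (0 : ℝ × CosSeq) (hasFDerivAt_fst.prodMk (hasFDerivAt_wave_snd b))

/-- The choices of `b` and of `resonantValue` make the terms containing `coeff (1, 1) z` cancel. -/
lemma perturbation_sub_parametrix {p : ℕ} {b : ℝ} (hb : p * b ^ p = 2) (z : CosSeq) :
    perturbation z - parametrix (resonantValue p b)
      ((2 * shiftCoeff b (p + 1) 2) • mixedMul (mode (1, 1)) (perturbation z)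
        - (p * b ^ (p - 1) * coeff (1, 1) z) • wave b 0) = z - waveNilpotent p b z := by
  rw [mixedMul_resonantMode_perturbation, wave_zero, perturbation_apply, waveNilpotent_apply,
    two_mul_shiftCoeff_succ_two]
  simp only [map_add, map_sub, map_smul, parametrix_mode_zero, parametrix_resonantMode]
  match_scalars
  · ring
  · linear_combination -(coeff (1, 1) z / 2) * mul_pow_pred_mul_equilibrium hb
  · linear_combination -coeff (1, 1) z * sq_mul_pow_pred_mul_resonantValue hb
  · ring

lemma hasFDerivAt_waveEq {p : ℕ} {b : ℝ} (hb : p * b ^ p = 2) : HasFDerivAt (waveEq p b)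
    ((ContinuousLinearMap.toSpanSingleton ℝ
        (-parametrix (resonantValue p b) (waveSource (p + 1) b))).coprod
      (.id ℝ CosSeq - waveNilpotent p b)) 0 := by
  have hwave := hasFDerivAt_wave_snd b
  have hrhs := (hasFDerivAt_deformedPow_wave (p + 1) b).sub
    (((hasFDerivAt_freq_snd p b).add_const 2).smul hwave)
  refine ((hwave.sub_const (mode (1, 1))).sub
    ((parametrix (resonantValue p b)).hasFDerivAt.comp _ hrhs)).congr_fderiv ?_
  refine ContinuousLinearMap.ext fun ⟨s, z⟩ => ?_
  change perturbation z - parametrix (resonantValue p b)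
      (s • waveSource (p + 1) b + (shiftCoeff b (p + 1) 1 • perturbation z
          + (2 * shiftCoeff b (p + 1) 2) • mixedMul (mode (1, 1)) (perturbation z))
        - ((freq p b 0 + 2) • perturbation z
          + (p * b ^ (p - 1) * coeff (1, 1) z) • wave b 0)) =
    s • -parametrix (resonantValue p b) (waveSource (p + 1) b) + (z - waveNilpotent p b z)
  rw [← perturbation_sub_parametrix hb, freq_zero, shiftCoeff_succ_one hb]
  simp only [map_add, map_sub, map_smul]
  module

/-! ### The bifurcating branch -/

lemma oddMul_resonantMode : oddMul (mode (1, 1)) (mode (1, 1)) =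
    (1 / 4 : ℝ) • mode (2, 2) + (1 / 4 : ℝ) • mode (2, 0)
      + (1 / 4 : ℝ) • mode (0, 2) + (1 / 4 : ℝ) • mode (0, 0) := by
  rw [oddMul_apply, oddPart_resonantMode, seriesMul_mode_mode, modeMul]
  simp only [Nat.dist_self, Nat.reduceAdd]
  module

lemma coeff_one_one_mixedMul_mode {j : ℕ × ℕ} (hj : ¬ Odd j.1) :
    coeff (1, 1) (mixedMul (mode (1, 1)) (mode j)) = coeff (1, 1) (modeMul (1, 1) j) := by
  rw [mixedMul_apply, oddPart_mode j, if_neg hj, map_zero, sub_zero, seriesMul_mode_mode]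

lemma coeff_one_one_mixedMul (t₁ t₂ t₃ t₄ : ℝ) :
    coeff (1, 1) (mixedMul (mode (1, 1))
      (t₁ • mode (2, 2) + t₂ • mode (2, 0) + t₃ • mode (0, 2) + t₄ • mode (0, 0))) =
    t₁ / 4 + t₂ / 2 + t₃ / 2 + t₄ := by
  simp only [map_add, map_smul]
  repeat rw [coeff_one_one_mixedMul_mode (by decide)]
  simp [modeMul, coeff_mode, Nat.dist]
  ring

lemma coeff_one_one_oddMul_resonantMode :
    coeff (1, 1) (oddMul (mode (1, 1)) (mode (1, 1))) = 0 := by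
  simp [oddMul_resonantMode, coeff_mode]

lemma coeff_one_one_mixedMul_oddMul :
    coeff (1, 1) (mixedMul (mode (1, 1)) (oddMul (mode (1, 1)) (mode (1, 1)))) = 9 / 16 := by
  rw [oddMul_resonantMode, coeff_one_one_mixedMul]
  norm_num

lemma coeff_one_one_mixedMul_parametrix_oddMul (γ : ℝ) :
    coeff (1, 1) (mixedMul (mode (1, 1))
      (parametrix γ (oddMul (mode (1, 1)) (mode (1, 1))))) = 1 / 96 := by
  rw [oddMul_resonantMode]
  simp only [map_add (parametrix γ), map_smul (parametrix γ), parametrix_mode, smul_smul]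
  rw [coeff_one_one_mixedMul]
  norm_num [parametrixSymbol, laplaceSymbol]

/-- The derivative of the frequency in the squared amplitude at the equilibrium. -/
def freqCoeff (p : ℕ) (b : ℝ) : ℝ :=
  -(1 / p) * (shiftCoeff b (p + 1) 2 ^ 2 / 48 + 9 / 16 * shiftCoeff b (p + 1) 3)

lemma mul_coeff_parametrix_waveSource {p : ℕ} {b : ℝ} (hb : p * b ^ p = 2) :
    p * b ^ (p - 1) * coeff (1, 1) (parametrix (resonantValue p b) (waveSource (p + 1) b)
      + waveNilpotent p b (parametrix (resonantValue p b) (waveSource (p + 1) b))) =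
    freqCoeff p b := by
  have hp : (p : ℝ) ≠ 0 := Nat.cast_ne_zero.2 (exponent_ne_zero hb)
  have hγ : p * b ^ (p - 1) * resonantValue p b = -(1 / p) := by
    rw [← neg_div, eq_div_iff hp, ← sq_mul_pow_pred_mul_resonantValue hb]
    ring
  rw [waveNilpotent_apply, waveSource]
  simp only [map_add, map_smul, coeff_parametrix, mixedMul_resonantMode_parametrix,
    coeff_one_one_oddMul_resonantMode, coeff_one_one_mixedMul_oddMul,
    coeff_one_one_mixedMul_parametrix_oddMul, parametrixSymbol, if_true, smul_eq_mul, map_zero]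
  rw [freqCoeff]
  linear_combination
    (shiftCoeff b (p + 1) 2 ^ 2 / 48 + 9 / 16 * shiftCoeff b (p + 1) 3) * hγ

lemma exists_branch {p : ℕ} {b : ℝ} (hb : p * b ^ p = 2) :
    ∃ g : ℝ → CosSeq, ContDiffAt ℝ 2 g 0 ∧ g 0 = 0 ∧
      HasDerivAt (fun s => freq p b (g s)) (freqCoeff p b) 0 ∧
      ∀ᶠ s in nhds 0, waveEq p b (s, g s) = 0 := by
  obtain ⟨g, hg, hg₀, hg', hsol⟩ := exists_implicit_curve two_ne_zero
    (contDiff_waveEq p b (n := 2)).contDiffAt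
    (A := oneSubEquiv (waveNilpotent p b) (waveNilpotent_waveNilpotent p b))
    (hasFDerivAt_waveEq hb)
  rw [Prod.fst_zero] at hg hg₀ hg' hsol
  rw [Prod.snd_zero] at hg₀
  have hfreq : HasFDerivAt (freq p b) ((p * b ^ (p - 1)) • coeff (1, 1)) (g 0) := by
    rw [hg₀]; exact hasFDerivAt_freq p b
  refine ⟨g, hg, hg₀, ?_, by simpa only [waveEq_zero hb] using hsol⟩
  refine (hfreq.comp_hasDerivAt 0 hg').congr_deriv ?_
  rw [← mul_coeff_parametrix_waveSource hb, map_neg (oneSubEquiv _ _).symm, neg_neg]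
  rfl

lemma exists_small_waveEq_solution {p : ℕ} {b : ℝ} (hb : p * b ^ p = 2) :
    ∃ C > 0, ∀ᶠ s in nhds 0, ∃ z, waveEq p b (s, z) = 0 ∧ ‖z‖ ≤ C * |s| ∧
      |freq p b z - (b ^ p + freqCoeff p b * s)| ≤ C * s ^ 2 := by
  obtain ⟨g, hg, hg₀, hderiv, hsol⟩ := exists_branch hb
  have hlin : g =O[nhds 0] fun s => s := by
    simpa [hg₀] using (hg.differentiableAt two_ne_zero).isBigO_sub
  have hquad : (fun s => freq p b (g s) - (b ^ p + freqCoeff p b * s)) =O[nhds 0]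
      fun s => s ^ 2 := by
    have h := isBigO_sub_sub_smul_deriv ((contDiff_freq p b).contDiffAt.comp (0 : ℝ) hg)
    simpa [Function.comp_def, hderiv.deriv, hg₀, freq_zero, sub_sub, mul_comm] using h
  obtain ⟨C₁, hC₁, hbound₁⟩ := hlin.exists_pos
  obtain ⟨C₂, -, hbound₂⟩ := hquad.exists_pos
  refine ⟨max C₁ C₂, lt_max_of_lt_left hC₁, ?_⟩
  filter_upwards [hsol, hbound₁.bound, hbound₂.bound] with s hs h₁ h₂
  refine ⟨g s, hs, h₁.trans ?_, ?_⟩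
  · exact mul_le_mul_of_nonneg_right (le_max_left ..) (abs_nonneg s)
  · rw [Real.norm_eq_abs, norm_pow, Real.norm_eq_abs, sq_abs] at h₂
    exact h₂.trans (mul_le_mul_of_nonneg_right (le_max_right ..) (sq_nonneg s))

/-! ### Back to the standing-wave equation -/

lemma coeff_wave_of_waveEq_eq_zero {p : ℕ} {b s : ℝ} {z : CosSeq} (hb : p * b ^ p = 2)
    (hz : waveEq p b (s, z) = 0) (i : ℕ × ℕ) :
    laplaceSymbol i * coeff i (wave b z) + freq p b z * coeff i (wave b z) =
      coeff i (deformedPow mixedMul oddMul (mode 0) (p + 1) (s, wave b z)) := by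
  have hcoeff := congrArg (coeff i) (sub_eq_zero.1 hz)
  simp only [coeff_parametrix, map_sub, map_smul, coeff_mode, smul_eq_mul, parametrixSymbol]
    at hcoeff
  by_cases hi : i = (1, 1)
  · subst hi
    have hγ : resonantValue p b ≠ 0 := fun h => by
      simpa [h] using sq_mul_pow_pred_mul_resonantValue hb
    simp only [if_true, coeff_one_one_wave, sub_self] at hcoeff
    rw [coeff_one_one_wave, laplaceSymbol_one_one]
    refine mul_left_cancel₀ hγ ?_
    linear_combination hcoeff
  · have hlam : laplaceSymbol i - 2 ≠ 0 :=
      abs_pos.1 (one_pos.trans_le (one_le_abs_laplaceSymbol_sub_two hi))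
    rw [if_neg hi, if_neg (Ne.symm hi), sub_zero] at hcoeff
    field_simp at hcoeff
    linear_combination hcoeff

lemma eval_wave (a x y b : ℝ) (z : CosSeq) :
    eval a x y (wave b z) = b + a * cos x * cos y + eval a x y (perturbation z) := by
  rw [wave, map_add, map_add, map_smul, eval_mode, eval_mode]
  simp [oddFactor, cosMode, mul_assoc]

lemma neg_lap_eval_wave_add {p : ℕ} {a b : ℝ} {z : CosSeq} (hb : p * b ^ p = 2)
    (hz : waveEq p b (a ^ 2, z) = 0) (x y : ℝ) :
    -lap (fun x y => eval a x y (wave b z)) x y + freq p b z * eval a x y (wave b z) =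
      eval a x y (wave b z) ^ (p + 1) := by
  rw [neg_lap_eval_add_mul_eval (coeff_wave_of_waveEq_eq_zero hb hz)]
  refine map_deformedPow ?_ (eval_mixedMul_add_oddMul a x y) _ _
  simp [eval_mode, oddFactor, cosMode]

theorem small_amplitude_waves_p_ge_two_general {p : ℕ} {b : ℝ} (hb : p * b ^ p = 2) :
    ∃ a₀ > (0 : ℝ), ∃ C > (0 : ℝ), ∀ a, |a| < a₀ → ∃ (c : ℝ) (φ : ℝ → ℝ → ℝ),
      Smooth2 φ ∧ DblPeriodic φ ∧ SymFun φ ∧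
      (∀ x y : ℝ, -(lap φ x y) + c * φ x y = φ x y ^ (p + 1)) ∧
      (∀ x y : ℝ, |φ x y - (b + a * cos x * cos y)| ≤ C * a ^ 2) ∧
      |c - (2 / p + freqCoeff p b * a ^ 2)| ≤ C * a ^ 4 := by
  obtain ⟨C, hC, hsol⟩ := exists_small_waveEq_solution hb
  have hsq : Tendsto (fun a : ℝ => a ^ 2) (nhds 0) (nhds 0) := by
    simpa using (continuous_pow 2).tendsto (0 : ℝ)
  obtain ⟨r, hr, hball⟩ := Metric.eventually_nhds_iff_ball.1 (hsq.eventually hsol)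
  refine ⟨min r 1, by positivity, (‖perturbation‖ + 1) * C, by positivity, fun a ha => ?_⟩
  obtain ⟨z, hz, hzle, hfreq⟩ := hball a (by simpa using ha.trans_le (min_le_left ..))
  refine ⟨freq p b z, fun x y => eval a x y (wave b z), smooth2_eval a _, dblPeriodic_eval a _,
    symFun_eval a _, neg_lap_eval_wave_add hb hz, fun x y => ?_, ?_⟩
  · have ha₁ : max 1 |a| = 1 := max_eq_left (ha.trans_le (min_le_right ..)).le
    rw [abs_sq] at hzle
    calc |eval a x y (wave b z) - (b + a * cos x * cos y)|
        = |eval a x y (perturbation z)| := by rw [eval_wave, add_sub_cancel_left]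
      _ ≤ ‖perturbation z‖ := by simpa [ha₁] using abs_eval_le a x y (perturbation z)
      _ ≤ ‖perturbation‖ * (C * a ^ 2) := perturbation.le_opNorm_of_le hzle
      _ ≤ (‖perturbation‖ + 1) * C * a ^ 2 := by nlinarith [mul_nonneg hC.le (sq_nonneg a)]
  · calc |freq p b z - (2 / p + freqCoeff p b * a ^ 2)|
        ≤ C * (a ^ 2) ^ 2 := by rwa [← equilibrium_pow hb]
      _ = C * a ^ 4 := by ring
      _ ≤ (‖perturbation‖ + 1) * C * a ^ 4 := by
        gcongr
        exact le_mul_of_one_le_left hC.le (by simp)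

lemma equilibrium_rpow_div {p : ℕ} {b : ℝ} (hb : p * b ^ p = 2) (hb₀ : 0 ≤ b) (t : ℝ) :
    (2 / (p : ℝ)) ^ (t / (p : ℝ)) = b ^ t := by
  have hp : (p : ℝ) ≠ 0 := Nat.cast_ne_zero.2 (exponent_ne_zero hb)
  rw [← equilibrium_pow hb, ← rpow_natCast, ← rpow_mul hb₀, mul_div_cancel₀ _ hp]

lemma mul_rpow_one_div_pow {p : ℕ} (hp : p ≠ 0) :
    p * ((2 / (p : ℝ)) ^ ((1 : ℝ) / (p : ℝ))) ^ p = 2 := by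
  rw [one_div, rpow_inv_natCast_pow (by positivity) hp, mul_div_cancel₀ _ (Nat.cast_ne_zero.2 hp)]

lemma factorial_div_factorial_eq_choose_mul {n k : ℕ} (hk : k ≤ n) :
    (n.factorial : ℝ) / ((n - k).factorial : ℝ) = n.choose k * k.factorial := by
  rw [Nat.cast_choose ℝ hk]
  field_simp

lemma freqCoeff_eq_factorial {p : ℕ} (hp : 2 ≤ p) {b : ℝ} (hb : p * b ^ p = 2) (hb₀ : 0 ≤ b) :
    freqCoeff p b = -(1 / (p : ℝ)) *
      (((p : ℝ) * ((p : ℝ) + 1) / 192) * ((2 / (p : ℝ)) ^ ((2 * ((p : ℝ) - 1)) / (p : ℝ)))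
          * ((Nat.factorial (p + 1) : ℝ) / (Nat.factorial (p - 1) : ℝ))
        + (3 / 32) * ((2 / (p : ℝ)) ^ (((p : ℝ) - 2) / (p : ℝ)))
          * ((Nat.factorial (p + 1) : ℝ) / (Nat.factorial (p - 2) : ℝ))) := by
  have hpow_pred : (2 / (p : ℝ)) ^ ((2 * ((p : ℝ) - 1)) / (p : ℝ)) = (b ^ (p - 1)) ^ 2 := by
    rw [equilibrium_rpow_div hb hb₀, ← Nat.cast_pred (by omega), mul_comm, rpow_mul hb₀,
      rpow_natCast, rpow_two]
  have hpow_sub : (2 / (p : ℝ)) ^ (((p : ℝ) - 2) / (p : ℝ)) = b ^ (p - 2) := by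
    rw [equilibrium_rpow_div hb hb₀, ← Nat.cast_ofNat, ← Nat.cast_sub hp, rpow_natCast]
  have hfact₂ := factorial_div_factorial_eq_choose_mul (show 2 ≤ p + 1 by omega)
  have hfact₃ := factorial_div_factorial_eq_choose_mul (show 3 ≤ p + 1 by omega)
  rw [show p + 1 - 2 = p - 1 by omega, Nat.cast_choose_two] at hfact₂
  rw [show p + 1 - 3 = p - 2 by omega] at hfact₃
  rw [hpow_pred, hpow_sub, hfact₂, hfact₃, freqCoeff, shiftCoeff, shiftCoeff,
    Nat.cast_choose_two, show p + 1 - 2 = p - 1 by omega, show p + 1 - 3 = p - 2 by omega]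
  simp only [Nat.factorial]
  push_cast
  ring

/-- Existence of small-amplitude periodic waves for an integer p ≥ 2, with the
first-order expansion `(2/p)^{1/p} + a cos x cos y` and frequency `c = 2/p + c₂ a² + O(a⁴)`. -/
theorem small_amplitude_waves_p_ge_two (p : ℕ) (hp : 2 ≤ p) :
    let c₂ : ℝ := -(1/(p:ℝ)) *
      (((p:ℝ) * ((p:ℝ)+1) / 192) * ((2/(p:ℝ)) ^ ((2*((p:ℝ)-1))/(p:ℝ)))
          * ((Nat.factorial (p+1) : ℝ) / (Nat.factorial (p-1) : ℝ))
        + (3/32) * ((2/(p:ℝ)) ^ (((p:ℝ)-2)/(p:ℝ)))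
          * ((Nat.factorial (p+1) : ℝ) / (Nat.factorial (p-2) : ℝ)))
    ∃ a₀ > (0:ℝ), ∃ C > (0:ℝ), ∀ a ∈ Set.Ioo (0:ℝ) a₀,
      ∃ (c : ℝ) (φ : ℝ → ℝ → ℝ),
        Smooth2 φ ∧ DblPeriodic φ ∧ SymFun φ ∧
        (∀ x y : ℝ, -(lap φ x y) + c * φ x y = (φ x y)^(p+1)) ∧
        (∀ x y : ℝ,
          |φ x y - ((2/(p:ℝ)) ^ ((1:ℝ)/(p:ℝ)) + a * Real.cos x * Real.cos y)| ≤ C * a^2) ∧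
        |c - (2/(p:ℝ) + c₂ * a^2)| ≤ C * a^4 := by
  intro c₂
  have hb := mul_rpow_one_div_pow (p := p) (by omega)
  obtain ⟨a₀, ha₀, C, hC, hwaves⟩ := small_amplitude_waves_p_ge_two_general hb
  rw [freqCoeff_eq_factorial hp hb (by positivity)] at hwaves
  exact ⟨a₀, ha₀, C, hC, fun a ha => hwaves a ((abs_of_pos ha.1).trans_lt ha.2)⟩
end
end

section
/- Let p ≥ 1 be an integer, c > 0 and λ > 0. Then there exists a smooth, doubly 2π-periodic, symmetric function Ψ : ℝ² → ℂ with ∫|Ψ|^{p+2} dxdy = λ such that B_c(Ψ) ≤ B_c(u) for every smooth, doubly 2π-periodic, symmetric function u : ℝ² → ℂ with ∫|u|^{p+2} dxdy = λ; that is, the constrained minimization problem inf{B_c(u) : ∫|u|^{p+2} = λ} admits a ground state. -/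
/-!
By homogeneity it is enough to maximise `F(φ) = ∫ |φ|^{p+2}` over the symmetric functions on the
torus `(ℝ/ℤ)²` whose energy `Σ (c + |k|²) |φ̂(k)|²` is at most one; by Parseval the energy is
`2 B_c / (2π)²`. Continuous functions with summable Fourier coefficients suffice for this, and no
Sobolev space is needed.

The two-dimensional Sobolev inequality bounds `F` there. Replace each member `φ` of a maximising
sequence by the multiple of `(c - Δ)⁻¹ |φ|^{p+1}` of energy one. By duality, positivity of the
resolvent (maximum principle) and convexity of `x ↦ x^{p+2}`, this does not decrease `F`, so the
new sequence is again maximising. Now it consists of resolvents of functions bounded in `L²`,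
hence it has a uniformly convergent subsequence, whose limit `v` is a nonnegative maximiser.

For `v` all the inequalities are equalities, which forces `(c - Δ) v = s v^{p+1}` with a constant
`s`. Each use of this equation gains two powers of decay of the Fourier coefficients, so `v` is
smooth, and a multiple of `v` is the ground state.
-/

noncomputable section
open Real MeasureTheory Filter

/-- doubly 2π-periodic (complex-valued) -/
def DblPeriodicC (u : ℝ → ℝ → ℂ) : Prop :=
  ∀ x y : ℝ, u (x + 2*π) y = u x y ∧ u x (y + 2*π) = u x y

/-- symmetric: even in each variable separately (complex-valued) -/
def SymFunC (u : ℝ → ℝ → ℂ) : Prop :=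
  ∀ x y : ℝ, u (-x) y = u x y ∧ u x (-y) = u x y

/-- smooth as a function on ℝ² (complex-valued) -/
def Smooth2C (u : ℝ → ℝ → ℂ) : Prop :=
  ContDiff ℝ (⊤ : ℕ∞) fun p : ℝ × ℝ => u p.1 p.2

/-- integral over the fundamental square [0,2π] × [0,2π] -/
def integ2 (f : ℝ → ℝ → ℝ) : ℝ :=
  ∫ x in (0:ℝ)..(2*π), ∫ y in (0:ℝ)..(2*π), f x y

/-- the functional B_c(u) = (1/2)∫(|∇u|² + c|u|²) dxdy -/
def BcC (c : ℝ) (u : ℝ → ℝ → ℂ) : ℝ :=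
  (1/2) * integ2 (fun x y =>
    ‖deriv (fun s => u s y) x‖^2 + ‖deriv (fun s => u x s) y‖^2 + c * ‖u x y‖^2)

namespace GroundState

open UnitAddTorus ComplexConjugate Topology

attribute [local instance] instMeasureSpaceUnitAddCircle
  instIsAddHaarMeasureUnitAddCircleVolume instIsProbabilityMeasureUnitAddCircleVolume

lemma integrable_of_continuous {X E : Type*} [TopologicalSpace X] [CompactSpace X]
    [MeasurableSpace X] [OpensMeasurableSpace X] {μ : Measure X} [IsFiniteMeasureOnCompacts μ]
    [NormedAddCommGroup E] {g : X → E} (hg : Continuous g) : Integrable g μ :=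
  hg.integrable_of_hasCompactSupport (HasCompactSupport.of_compactSpace g)

section FourierCoefficients

variable {d : Type*} [Fintype d]

/-- The `k`-th Fourier coefficient of a continuous function on the torus `(ℝ/ℤ)ᵈ`, as a continuous
linear functional; the torus carries its Haar probability measure. -/
def coeff (k : d → ℤ) : C(UnitAddTorus d, ℂ) →L[ℂ] ℂ :=
  innerSL ℂ (mFourierLp 2 k) ∘L ContinuousMap.toLp 2 volume ℂ

lemma coeff_apply (k : d → ℤ) (f : C(UnitAddTorus d, ℂ)) :
    coeff k f = ∫ t, mFourier (-k) t * f t := by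
  simp only [coeff, ContinuousLinearMap.comp_apply, innerSL_apply_apply, mFourierLp,
    ContinuousMap.inner_toLp, mFourier_neg, mul_comm]

lemma coeff_eq_mFourierCoeff (f : C(UnitAddTorus d, ℂ)) :
    (fun k => coeff k f) = mFourierCoeff f :=
  funext fun k => coeff_apply k f

lemma norm_mFourier_apply (k : d → ℤ) (t : UnitAddTorus d) : ‖mFourier k t‖ = 1 := by
  simp [mFourier, fourier_apply, Circle.norm_coe]

lemma coeff_mFourier (j k : d → ℤ) :
    coeff k (mFourier j) = if k = j then 1 else 0 :=
  orthonormal_iff_ite.mp orthonormal_mFourier k j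

lemma hasSum_conj_coeff_mul_coeff (f g : C(UnitAddTorus d, ℂ)) :
    HasSum (fun k => conj (coeff k f) * coeff k g) (∫ t, conj (f t) * g t) := by
  have h := hasSum_prod_mFourierCoeff (f.toLp 2 volume ℂ) (g.toLp 2 volume ℂ)
  simp only [mFourierCoeff_toLp, ← coeff_eq_mFourierCoeff] at h
  convert! h using 1
  refine integral_congr_ae ?_
  filter_upwards [ContinuousMap.coeFn_toLp (p := 2) (𝕜 := ℂ) volume f,
    ContinuousMap.coeFn_toLp (p := 2) (𝕜 := ℂ) volume g] with t hf hg
  rw [hf, hg]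

lemma hasSum_norm_sq_coeff (f : C(UnitAddTorus d, ℂ)) :
    HasSum (fun k => ‖coeff k f‖ ^ 2) (∫ t, ‖f t‖ ^ 2) := by
  have h := hasSum_sq_mFourierCoeff (f.toLp 2 volume ℂ)
  simp only [mFourierCoeff_toLp, ← coeff_eq_mFourierCoeff] at h
  convert! h using 1
  refine integral_congr_ae ?_
  filter_upwards [ContinuousMap.coeFn_toLp (p := 2) (𝕜 := ℂ) volume f] with t hf
  rw [hf]

/-- The trigonometric series with coefficients `a`; only meaningful when `a` is summable. -/
def trigSeries (a : (d → ℤ) → ℂ) : C(UnitAddTorus d, ℂ) := ∑' k, a k • mFourier k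

variable {a : (d → ℤ) → ℂ} {f g : C(UnitAddTorus d, ℂ)}

lemma hasSum_trigSeries (ha : Summable fun k => ‖a k‖) :
    HasSum (fun k => a k • mFourier k) (trigSeries a) :=
  (Summable.of_norm (by simpa only [norm_smul, mFourier_norm, mul_one] using ha)).hasSum

lemma coeff_trigSeries (ha : Summable fun k => ‖a k‖) (k : d → ℤ) :
    coeff k (trigSeries a) = a k := by
  have h := (coeff k).hasSum (hasSum_trigSeries ha)
  simp only [map_smul, coeff_mFourier, smul_eq_mul, mul_ite, mul_one, mul_zero] at h
  refine h.unique ?_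
  convert hasSum_single k fun j hj => if_neg hj.symm using 1
  rw [if_pos rfl]

lemma norm_trigSeries_le (ha : Summable fun k => ‖a k‖) : ‖trigSeries a‖ ≤ ∑' k, ‖a k‖ := by
  have hnorm (k : d → ℤ) : ‖a k • (mFourier k : C(UnitAddTorus d, ℂ))‖ = ‖a k‖ := by
    rw [norm_smul, mFourier_norm, mul_one]
  have h := norm_tsum_le_tsum_norm (f := fun k => a k • (mFourier k : C(UnitAddTorus d, ℂ)))
    (by simpa only [hnorm] using ha)
  simpa only [hnorm] using! h

lemma trigSeries_coeff (hf : Summable fun k => ‖coeff k f‖) :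
    trigSeries (fun k => coeff k f) = f := by
  refine (hasSum_trigSeries hf).unique ?_
  have h := hf.of_norm
  rw [coeff_eq_mFourierCoeff] at h
  simpa only [← coeff_eq_mFourierCoeff] using hasSum_mFourier_series_of_summable h

lemma norm_le_tsum_norm_coeff (hf : Summable fun k => ‖coeff k f‖) : ‖f‖ ≤ ∑' k, ‖coeff k f‖ := by
  simpa only [trigSeries_coeff hf] using norm_trigSeries_le hf

lemma eq_of_coeff_eq (h : ∀ k, coeff k f = coeff k g) : f = g := by
  have hzero (k : d → ℤ) : ‖coeff k (f - g)‖ = 0 := by rw [map_sub, h k, sub_self, norm_zero]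
  have hle := norm_le_tsum_norm_coeff (f := f - g) (by simp only [hzero, summable_zero])
  rw [tsum_congr hzero, tsum_zero] at hle
  exact sub_eq_zero.mp (norm_le_zero_iff.mp hle)

end FourierCoefficients

section Coordinates

variable {d : Type*}

/-- The point of the torus `(ℝ/ℤ)ᵈ` with angular coordinates `x`: an angle of period `2π`
corresponds to `x i / (2π)` in `ℝ/ℤ`. -/
def toTorus : (d → ℝ) →+ UnitAddTorus d where
  toFun x i := ((x i / (2 * π) : ℝ) : UnitAddCircle)
  map_zero' := by ext i; simp
  map_add' x y := by ext i; simp [add_div]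

@[fun_prop]
lemma continuous_toTorus : Continuous (toTorus : (d → ℝ) → UnitAddTorus d) :=
  continuous_pi fun i =>
    (AddCircle.continuous_mk' 1).comp (f := fun x : d → ℝ => x i / (2 * π)) (by fun_prop)

variable [Fintype d]

lemma mFourier_add_apply (k : d → ℤ) (s t : UnitAddTorus d) :
    mFourier k (s + t) = mFourier k s * mFourier k t := by
  simp only [mFourier, ContinuousMap.coe_mk, Pi.add_apply, fourier_apply, smul_add,
    AddCircle.toCircle_add, Circle.coe_mul, Finset.prod_mul_distrib]

lemma mFourier_toTorus (k : d → ℤ) (x : d → ℝ) :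
    mFourier k (toTorus x) = Complex.exp ((∑ i, k i * x i : ℝ) * Complex.I) := by
  have hfactor (i : d) : fourier (k i) (toTorus x i) = Complex.exp (k i * x i * Complex.I) := by
    change fourier (k i) ((x i / (2 * π) : ℝ) : UnitAddCircle) = _
    rw [fourier_coe_apply]
    congr 1
    push_cast
    field_simp
  simp only [mFourier, ContinuousMap.coe_mk, hfactor, ← Complex.exp_sum, ← Finset.sum_mul]
  push_cast
  rfl

end Coordinates

section PartialDerivatives

variable {d : Type*} [DecidableEq d]

/-- `g` is the partial derivative of `f` with respect to the `i`-th angular coordinate. -/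
def HasPartialDeriv (i : d) (f g : C(UnitAddTorus d, ℂ)) : Prop :=
  ∀ t, HasDerivAt (fun s : ℝ => f (t + toTorus (Pi.single i s))) (g t) 0

variable {i : d} {f g : C(UnitAddTorus d, ℂ)}

lemma HasPartialDeriv.hasDerivAt (h : HasPartialDeriv i f g) (t : UnitAddTorus d) (s : ℝ) :
    HasDerivAt (fun s : ℝ => f (t + toTorus (Pi.single i s)))
      (g (t + toTorus (Pi.single i s))) s := by
  have hs := h (t + toTorus (Pi.single i s))
  rw [← sub_self s] at hs
  simpa only [add_assoc, ← map_add, ← Pi.single_add, add_sub_cancel] using hs.comp_sub_const s s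

lemma HasPartialDeriv.pow (h : HasPartialDeriv i f g) (n : ℕ) :
    HasPartialDeriv i (f ^ n) ((n : ℂ) • (f ^ (n - 1) * g)) := fun t => by
  simpa [mul_assoc] using! (h t).fun_pow n

lemma HasPartialDeriv.const_smul (h : HasPartialDeriv i f g) (b : ℂ) :
    HasPartialDeriv i (b • f) (b • g) := fun t => (h t).const_smul b

lemma HasPartialDeriv.sum {ι : Type*} {s : Finset ι} {F G : ι → C(UnitAddTorus d, ℂ)}
    (h : ∀ j ∈ s, HasPartialDeriv i (F j) (G j)) :
    HasPartialDeriv i (∑ j ∈ s, F j) (∑ j ∈ s, G j) := fun t => by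
  simpa only [ContinuousMap.sum_apply] using HasDerivAt.fun_sum fun j hj => h j hj t

variable [Fintype d]

lemma mFourier_add_toTorus_single (k : d → ℤ) (i : d) (t : UnitAddTorus d) (s : ℝ) :
    mFourier k (t + toTorus (Pi.single i s)) =
      mFourier k t * Complex.exp (k i * s * Complex.I) := by
  rw [mFourier_add_apply, mFourier_toTorus]
  simp [Pi.single_apply]

lemma hasDerivAt_exp_intCast_mul_I (n : ℤ) :
    HasDerivAt (fun s : ℝ => Complex.exp (n * s * Complex.I)) (n * Complex.I) 0 := by
  have hlin : HasDerivAt (fun s : ℝ => (n * s * Complex.I : ℂ)) (n * Complex.I) 0 := by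
    simpa using ((hasDerivAt_id (0 : ℝ)).ofReal_comp.const_mul (n : ℂ)).mul_const Complex.I
  simpa using hlin.cexp

lemma hasPartialDeriv_mFourier (i : d) (k : d → ℤ) :
    HasPartialDeriv i (mFourier k) ((k i * Complex.I) • mFourier k) := fun t => by
  simp only [mFourier_add_toTorus_single]
  simpa [mul_comm] using (hasDerivAt_exp_intCast_mul_I (k i)).const_mul (mFourier k t)

lemma integral_mFourier_neg_mul_translate (k : d → ℤ) (f : C(UnitAddTorus d, ℂ)) (i : d)
    (s : ℝ) :
    ∫ t, mFourier (-k) t * f (t + toTorus (Pi.single i s)) =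
      Complex.exp (k i * s * Complex.I) * coeff k f := by
  rw [coeff_apply, ← integral_add_right_eq_self (fun t => mFourier (-k) t * f t)
    (toTorus (Pi.single i s)), ← integral_const_mul]
  refine integral_congr_ae (.of_forall fun t => ?_)
  have hexp : Complex.exp (k i * s * Complex.I) * Complex.exp ((-k) i * s * Complex.I) = 1 := by
    rw [← Complex.exp_add]
    simp
  simp only [mFourier_add_toTorus_single]
  linear_combination -(mFourier (-k) t * f (t + toTorus (Pi.single i s))) * hexp

lemma HasPartialDeriv.coeff_eq (h : HasPartialDeriv i f g) (k : d → ℤ) :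
    coeff k g = k i * Complex.I * coeff k f := by
  have htranslate : HasDerivAt (fun s : ℝ => Complex.exp (k i * s * Complex.I) * coeff k f)
      (k i * Complex.I * coeff k f) 0 := (hasDerivAt_exp_intCast_mul_I (k i)).mul_const _
  simp only [← integral_mFourier_neg_mul_translate] at htranslate
  have hdiff := hasDerivAt_integral_of_dominated_loc_of_deriv_le (μ := volume) (x₀ := (0 : ℝ))
    (F := fun s t => mFourier (-k) t * f (t + toTorus (Pi.single i s)))
    (F' := fun s t => mFourier (-k) t * g (t + toTorus (Pi.single i s)))
    (bound := fun _ => ‖g‖) univ_mem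
    (.of_forall fun s => (integrable_of_continuous (by fun_prop)).aestronglyMeasurable)
    (integrable_of_continuous (by fun_prop))
    (integrable_of_continuous (by fun_prop)).aestronglyMeasurable
    (.of_forall fun t s _ => by
      rw [norm_mul, norm_mFourier_apply, one_mul]
      exact g.norm_coe_le_norm _)
    (integrable_const _)
    (.of_forall fun t s _ => (h.hasDerivAt t s).const_mul _)
  have heq := hdiff.2.unique htranslate
  simpa [coeff_apply] using heq

end PartialDerivatives

section Energy

variable {d : Type*} [Fintype d] {c : ℝ}

/-- The symbol `c + |k|²` of the operator `c - Δ` on functions of the angular coordinates. -/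
def symbol (c : ℝ) (k : d → ℤ) : ℝ := c + ∑ i, (k i : ℝ) ^ 2

lemma le_symbol (c : ℝ) (k : d → ℤ) : c ≤ symbol c k :=
  le_add_of_nonneg_right (Finset.sum_nonneg fun _ _ => sq_nonneg _)

lemma symbol_pos (hc : 0 < c) (k : d → ℤ) : 0 < symbol c k := hc.trans_le (le_symbol c k)

lemma symbol_add_le (hc : 0 < c) (j k : d → ℤ) :
    symbol c (j + k) ≤ 2 / c * (symbol c j * symbol c k) := by
  have hsq : ∑ i, (((j + k) i : ℤ) : ℝ) ^ 2 ≤ 2 * ∑ i, (j i : ℝ) ^ 2 + 2 * ∑ i, (k i : ℝ) ^ 2 := by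
    simp only [Finset.mul_sum, ← Finset.sum_add_distrib, Pi.add_apply, Int.cast_add]
    exact Finset.sum_le_sum fun i _ => by linarith [sq_nonneg ((j i : ℝ) - k i)]
  have hj : 0 ≤ ∑ i, (j i : ℝ) ^ 2 := Finset.sum_nonneg fun _ _ => sq_nonneg _
  have hk : 0 ≤ ∑ i, (k i : ℝ) ^ 2 := Finset.sum_nonneg fun _ _ => sq_nonneg _
  rw [div_mul_eq_mul_div, le_div_iff₀ hc]
  unfold symbol
  nlinarith [mul_nonneg hj hk, mul_le_mul_of_nonneg_right hsq hc.le, sq_nonneg c]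

lemma sum_abs_le_symbol (hc : 0 ≤ c) (k : d → ℤ) : ∑ i, |(k i : ℝ)| ≤ symbol c k := by
  refine le_add_of_nonneg_of_le hc (Finset.sum_le_sum fun i _ => ?_)
  exact_mod_cast (Int.abs_eq_natAbs (k i)).trans_le (Int.natAbs_le_self_sq (k i))

/-- The quadratic form `∫ (c|φ|² + |∇φ|²)` of `c - Δ` on the torus, through the Fourier
coefficients. It is `0` by convention when the series diverges. -/
def energy (c : ℝ) (φ : C(UnitAddTorus d, ℂ)) : ℝ := ∑' k, symbol c k * ‖coeff k φ‖ ^ 2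

/-- The class in which the variational problem is solved: continuous functions of finite energy
with an absolutely convergent Fourier series. -/
structure HasFiniteEnergy (c : ℝ) (φ : C(UnitAddTorus d, ℂ)) : Prop where
  summable_coeff : Summable fun k => ‖coeff k φ‖
  summable_energy : Summable fun k => symbol c k * ‖coeff k φ‖ ^ 2

variable {φ : C(UnitAddTorus d, ℂ)}

lemma energy_term_nonneg (hc : 0 < c) (φ : C(UnitAddTorus d, ℂ)) (k : d → ℤ) :
    0 ≤ symbol c k * ‖coeff k φ‖ ^ 2 :=
  mul_nonneg (symbol_pos hc k).le (sq_nonneg _)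

lemma energy_nonneg (hc : 0 < c) (φ : C(UnitAddTorus d, ℂ)) : 0 ≤ energy c φ :=
  tsum_nonneg (energy_term_nonneg hc φ)

lemma energy_smul (c : ℝ) (b : ℂ) (φ : C(UnitAddTorus d, ℂ)) :
    energy c (b • φ) = ‖b‖ ^ 2 * energy c φ := by
  simp only [energy, map_smul, smul_eq_mul, norm_mul, mul_pow, ← tsum_mul_left, mul_left_comm]

lemma HasFiniteEnergy.hasSum_energy (h : HasFiniteEnergy c φ) :
    HasSum (fun k => symbol c k * ‖coeff k φ‖ ^ 2) (energy c φ) :=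
  h.summable_energy.hasSum

lemma HasFiniteEnergy.smul (h : HasFiniteEnergy c φ) (b : ℂ) : HasFiniteEnergy c (b • φ) where
  summable_coeff := by
    simpa only [map_smul, smul_eq_mul, norm_mul] using h.summable_coeff.mul_left ‖b‖
  summable_energy := by
    simpa only [map_smul, smul_eq_mul, norm_mul, mul_pow, mul_left_comm]
      using h.summable_energy.mul_left (‖b‖ ^ 2)

lemma hasSum_energy_of_hasPartialDeriv [DecidableEq d] {g : d → C(UnitAddTorus d, ℂ)}
    (h : ∀ i, HasPartialDeriv i φ (g i)) (c : ℝ) :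
    HasSum (fun k => symbol c k * ‖coeff k φ‖ ^ 2)
      (c * (∫ t, ‖φ t‖ ^ 2) + ∑ i, ∫ t, ‖g i t‖ ^ 2) := by
  refine (((hasSum_norm_sq_coeff φ).mul_left c).add
    (hasSum_sum fun i _ => hasSum_norm_sq_coeff (g i))).congr_fun fun k => ?_
  simp [symbol, (h _).coeff_eq, mul_pow, add_mul, Finset.sum_mul]

end Energy

section Decay

variable {d : Type*} [Fintype d] {c : ℝ} {f g : C(UnitAddTorus d, ℂ)}

lemma coeff_mFourier_mul (j k : d → ℤ) (g : C(UnitAddTorus d, ℂ)) :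
    coeff k (mFourier j * g) = coeff (k - j) g := by
  simp only [coeff_apply, ContinuousMap.mul_apply, ← mul_assoc, ← mFourier_add]
  congr! 5
  abel

lemma hasSum_coeff_mul (hf : Summable fun k => ‖coeff k f‖) (g : C(UnitAddTorus d, ℂ))
    (k : d → ℤ) : HasSum (fun j => coeff j f * coeff (k - j) g) (coeff k (f * g)) := by
  have hseries := hasSum_trigSeries hf
  rw [trigSeries_coeff hf] at hseries
  simpa only [smul_mul_assoc, map_smul, coeff_mFourier_mul, smul_eq_mul]
    using (coeff k).hasSum (hseries.mul_right g)

lemma summable_weight_mul_norm_coeff_mul {w : (d → ℤ) → ℝ} {K : ℝ} (hw : ∀ k, 0 ≤ w k)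
    (hwadd : ∀ j k, w (j + k) ≤ K * (w j * w k)) (hf0 : Summable fun k => ‖coeff k f‖)
    (hf : Summable fun k => w k * ‖coeff k f‖) (hg : Summable fun k => w k * ‖coeff k g‖) :
    Summable fun k => w k * ‖coeff k (f * g)‖ := by
  have hpair : Summable fun x : (d → ℤ) × (d → ℤ) =>
      w x.2 * ‖coeff x.2 f‖ * (w (x.1 - x.2) * ‖coeff (x.1 - x.2) g‖) := by
    have hprod := hf.mul_of_nonneg hg (fun k => mul_nonneg (hw k) (norm_nonneg _))
      (fun k => mul_nonneg (hw k) (norm_nonneg _))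
    have hshear := ((Equiv.prodComm _ _).trans
      (Equiv.prodShear (Equiv.refl (d → ℤ)) fun j => Equiv.subRight j)).summable_iff.mpr hprod
    exact hshear.congr fun x => rfl
  have hle (k j : d → ℤ) : w k * ‖coeff j f * coeff (k - j) g‖ ≤
      K * (w j * ‖coeff j f‖ * (w (k - j) * ‖coeff (k - j) g‖)) := by
    have h := hwadd j (k - j)
    rw [add_sub_cancel] at h
    rw [norm_mul]
    calc w k * (‖coeff j f‖ * ‖coeff (k - j) g‖)
        ≤ K * (w j * w (k - j)) * (‖coeff j f‖ * ‖coeff (k - j) g‖) := by gcongr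
      _ = _ := by ring
  refine Summable.of_nonneg_of_le (fun k => mul_nonneg (hw k) (norm_nonneg _)) (fun k => ?_)
    (hpair.prod.mul_left K)
  have hbound := ((hasSum_coeff_mul hf0 g k).mul_left (w k : ℂ)).norm_le_of_bounded
    ((hpair.prod_factor k).hasSum.mul_left K) fun j => by
      simpa only [norm_mul, Complex.norm_of_nonneg (hw k)] using hle k j
  simpa only [norm_mul, Complex.norm_of_nonneg (hw k)] using hbound

lemma summable_symbol_pow_mul_norm_coeff_pow (hc : 0 < c) {n : ℕ}
    (hf0 : Summable fun k => ‖coeff k f‖)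
    (hf : Summable fun k => symbol c k ^ n * ‖coeff k f‖) (m : ℕ) :
    Summable fun k => symbol c k ^ n * ‖coeff k (f ^ (m + 1))‖ := by
  induction m with
  | zero => simpa using hf
  | succ m ih =>
    rw [pow_succ']
    refine summable_weight_mul_norm_coeff_mul (K := (2 / c) ^ n)
      (fun k => pow_nonneg (symbol_pos hc k).le n) (fun j k => ?_) hf0 hf ih
    rw [← mul_pow, ← mul_pow]
    exact pow_le_pow_left₀ (symbol_pos hc _).le (symbol_add_le hc j k) n

lemma iteratedDeriv_exp_mul_I (n : ℕ) :
    iteratedDeriv n (fun s : ℝ => Complex.exp (s * Complex.I)) =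
      fun s : ℝ => Complex.I ^ n * Complex.exp (s * Complex.I) := by
  induction n with
  | zero => simp
  | succ n ih =>
    rw [iteratedDeriv_succ, ih]
    funext s
    have hlin : HasDerivAt (fun s : ℝ => (s : ℂ) * Complex.I) Complex.I s := by
      simpa using (hasDerivAt_id s).ofReal_comp.mul_const Complex.I
    rw [(hlin.cexp.const_mul (Complex.I ^ n)).deriv]
    ring

lemma contDiff_exp_mul_I : ContDiff ℝ (⊤ : ℕ∞) fun s : ℝ => Complex.exp (s * Complex.I) :=
  (Complex.ofRealCLM.contDiff.mul contDiff_const).cexp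

/-- The phase `x ↦ Σ kᵢ xᵢ` of the monomial of frequency `k`. -/
def phase (k : d → ℤ) : (d → ℝ) →L[ℝ] ℝ := ∑ i, (k i : ℝ) • ContinuousLinearMap.proj i

lemma norm_phase_le (hc : 0 ≤ c) (k : d → ℤ) : ‖phase k‖ ≤ symbol c k := by
  refine (norm_sum_le_of_le _ fun i _ => ?_).trans (sum_abs_le_symbol hc k)
  rw [norm_smul, Real.norm_eq_abs]
  exact mul_le_of_le_one_right (abs_nonneg _)
    (ContinuousLinearMap.opNorm_le_bound _ zero_le_one fun x => by
      simpa using norm_le_pi_norm x i)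

lemma norm_iteratedFDeriv_exp_phase_le (k : d → ℤ) (n : ℕ) (x : d → ℝ) :
    ‖iteratedFDeriv ℝ n (fun x => Complex.exp (phase k x * Complex.I)) x‖ ≤ ‖phase k‖ ^ n := by
  change ‖iteratedFDeriv ℝ n ((fun s : ℝ => Complex.exp (s * Complex.I)) ∘ phase k) x‖ ≤ _
  rw [(phase k).iteratedFDeriv_comp_right contDiff_exp_mul_I x (by exact_mod_cast le_top)]
  refine (ContinuousMultilinearMap.norm_compContinuousLinearMap_le _ _).trans ?_
  rw [norm_iteratedFDeriv_eq_norm_iteratedDeriv, iteratedDeriv_exp_mul_I]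
  simp [Complex.norm_exp_ofReal_mul_I]

lemma contDiff_comp_toTorus (hc : 0 ≤ c)
    (h : ∀ n : ℕ, Summable fun k => symbol c k ^ n * ‖coeff k f‖) :
    ContDiff ℝ (⊤ : ℕ∞) fun x : d → ℝ => f (toTorus x) := by
  have hcoeff : Summable fun k => ‖coeff k f‖ := by simpa using h 0
  have hseries : (fun x : d → ℝ => f (toTorus x)) =
      fun x => ∑' k, coeff k f • Complex.exp (phase k x * Complex.I) := by
    funext x
    have hsum := (ContinuousMap.evalCLM ℂ (toTorus x)).hasSum (hasSum_trigSeries hcoeff)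
    rw [trigSeries_coeff hcoeff] at hsum
    refine hsum.tsum_eq.symm.trans (tsum_congr fun k => ?_)
    simp [mFourier_toTorus, phase]
  have hsmooth (k : d → ℤ) :
      ContDiff ℝ (⊤ : ℕ∞) fun x : d → ℝ => Complex.exp (phase k x * Complex.I) :=
    contDiff_exp_mul_I.comp (phase k).contDiff
  rw [hseries]
  refine contDiff_tsum (v := fun n k => symbol c k ^ n * ‖coeff k f‖)
    (fun k => (hsmooth k).const_smul (coeff k f)) (fun n _ => h n) fun n k x _ => ?_
  rw [iteratedFDeriv_const_smul_apply' ((hsmooth k).contDiffAt.of_le (by exact_mod_cast le_top)),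
    norm_smul, mul_comm]
  gcongr
  exact (norm_iteratedFDeriv_exp_phase_le k n x).trans
    (pow_le_pow_left₀ (norm_nonneg _) (norm_phase_le hc k) n)

end Decay

section Resolvent

/-- The two-dimensional torus `(ℝ/ℤ)²`. -/
abbrev Torus := UnitAddTorus (Fin 2)

lemma tendsto_tsum_mul_of_tsum_sq_le {ι : Type*} {w : ι → ℝ} {x : ℕ → ι → ℝ} {K : ℝ}
    (hw : Summable fun i => w i ^ 2) (hx : ∀ n, Summable fun i => x n i ^ 2)
    (hK : ∀ n, ∑' i, x n i ^ 2 ≤ K) (hlim : ∀ i, Tendsto (fun n => x n i) atTop (𝓝 0)) :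
    Tendsto (fun n => ∑' i, |w i * x n i|) atTop (𝓝 0) := by
  have hK0 : 0 ≤ K := (tsum_nonneg fun _ => sq_nonneg _).trans (hK 0)
  rw [Metric.tendsto_atTop']
  intro ε hε
  obtain ⟨δ, hδ, hδK⟩ : ∃ δ > 0, δ * K ≤ ε / 2 :=
    ⟨ε / (2 * (K + 1)), by positivity, by
      rw [div_mul_eq_mul_div, div_le_div_iff₀ (by positivity) two_pos]
      nlinarith⟩
  have hyoung (n : ℕ) (i : ι) : |w i * x n i| - δ * x n i ^ 2 ≤ w i ^ 2 / (4 * δ) := by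
    rw [abs_mul, le_div_iff₀ (by positivity), ← sq_abs (w i), ← sq_abs (x n i)]
    nlinarith [sq_nonneg (|w i| - 2 * δ * |x n i|)]
  set y : ℕ → ι → ℝ := fun n i => max (|w i * x n i| - δ * x n i ^ 2) 0
  have hybound (n : ℕ) (i : ι) : ‖y n i‖ ≤ w i ^ 2 / (4 * δ) := by
    rw [Real.norm_of_nonneg (le_max_right _ _)]
    exact max_le (hyoung n i) (by positivity)
  have hysum (n : ℕ) : Summable (y n) := .of_norm_bounded (hw.div_const _) (hybound n)
  have hylim : Tendsto (fun n => ∑' i, y n i) atTop (𝓝 0) := by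
    have hterm (i : ι) : Tendsto (fun n => y n i) atTop (𝓝 0) := by
      have h := ((((hlim i).const_mul (w i)).abs).sub
        (((hlim i).pow 2).const_mul δ)).max (tendsto_const_nhds (x := (0 : ℝ)))
      simpa only [mul_zero, abs_zero, ne_eq, two_ne_zero, not_false_eq_true, zero_pow, sub_zero,
        max_self] using h
    simpa only [tsum_zero] using
      tendsto_tsum_of_dominated_convergence (hw.div_const (4 * δ)) hterm (.of_forall hybound)
  obtain ⟨N, hN⟩ := (Metric.tendsto_atTop'.mp hylim) (ε / 2) (half_pos hε)
  refine ⟨N, fun n hn => ?_⟩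
  have hle : ∑' i, |w i * x n i| ≤ ∑' i, y n i + δ * ∑' i, x n i ^ 2 := by
    rw [← tsum_mul_left, ← (hysum n).tsum_add ((hx n).mul_left δ)]
    have hterm (i : ι) : |w i * x n i| ≤ y n i + δ * x n i ^ 2 := by
      linarith [le_max_left (|w i * x n i| - δ * x n i ^ 2) 0]
    have hsum := (hysum n).add ((hx n).mul_left δ)
    exact (hsum.of_nonneg_of_le (fun _ => abs_nonneg _) hterm).tsum_le_tsum hterm hsum
  have hyn := hN n hn
  rw [Real.dist_0_eq_abs, abs_of_nonneg (tsum_nonneg fun i => le_max_right _ _)] at hyn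
  rw [Real.dist_0_eq_abs, abs_of_nonneg (tsum_nonneg fun i => abs_nonneg _)]
  linarith [mul_le_mul_of_nonneg_left (hK n) hδ.le]

lemma summable_norm_sq_of_tendsto_coeff {d : Type*} [Fintype d]
    {f : ℕ → C(UnitAddTorus d, ℂ)} {a : (d → ℤ) → ℂ} {K : ℝ}
    (hK : ∀ n, ∫ t, ‖f n t‖ ^ 2 ≤ K)
    (ha : ∀ k, Tendsto (fun n => coeff k (f n)) atTop (𝓝 (a k))) :
    (Summable fun k => ‖a k‖ ^ 2) ∧ ∑' k, ‖a k‖ ^ 2 ≤ K := by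
  have hpartial (s : Finset (d → ℤ)) : ∑ k ∈ s, ‖a k‖ ^ 2 ≤ K :=
    le_of_tendsto (tendsto_finsetSum s fun k _ => (ha k).norm.pow 2) (.of_forall fun n =>
      (sum_le_hasSum s (fun _ _ => sq_nonneg _) (hasSum_norm_sq_coeff (f n))).trans (hK n))
  have hsum := summable_of_sum_le (fun k => sq_nonneg ‖a k‖) hpartial
  exact ⟨hsum, hsum.tsum_le_of_sum_le hpartial⟩

variable {c : ℝ}

lemma norm_sq_le_symbol {d : Type*} [Fintype d] (hc : 0 ≤ c) (k : d → ℤ) :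
    ‖k‖ ^ 2 ≤ symbol c k := by
  have hcoord (i : d) : ‖k i‖ ≤ √(symbol c k) := by
    refine Real.le_sqrt_of_sq_le ?_
    rw [Int.norm_eq_abs, sq_abs]
    exact le_add_of_nonneg_of_le hc (Finset.single_le_sum
      (f := fun j => (k j : ℝ) ^ 2) (fun j _ => sq_nonneg _) (Finset.mem_univ i))
  exact (Real.le_sqrt (norm_nonneg k) (hc.trans (le_symbol c k))).mp
    ((pi_norm_le_iff_of_nonneg (Real.sqrt_nonneg _)).mpr hcoord)

lemma summable_inv_symbol_sq (hc : 0 < c) :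
    Summable fun k : Fin 2 → ℤ => (symbol c k)⁻¹ ^ 2 := by
  have hfour : Summable fun k : Fin 2 → ℤ => ‖k‖ ^ (-4 : ℝ) :=
    EisensteinSeries.summable_one_div_norm_rpow (by norm_num)
  refine .of_norm_bounded_eventually hfour ?_
  filter_upwards [(Set.finite_singleton 0).compl_mem_cofinite] with k hk
  have hknorm : 0 < ‖k‖ := norm_pos_iff.mpr hk
  rw [Real.norm_of_nonneg (by positivity), Real.rpow_neg hknorm.le, inv_pow]
  norm_cast
  refine inv_anti₀ (pow_pos hknorm 4) ?_
  calc ‖k‖ ^ 4 = (‖k‖ ^ 2) ^ 2 := by ring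
    _ ≤ symbol c k ^ 2 := by gcongr; exact norm_sq_le_symbol hc.le k

lemma summable_inv_symbol_mul (hc : 0 < c) {x : (Fin 2 → ℤ) → ℝ}
    (hx : Summable fun k => x k ^ 2) : Summable fun k => |(symbol c k)⁻¹ * x k| := by
  refine .of_nonneg_of_le (fun k => abs_nonneg _) (fun k => ?_) ((summable_inv_symbol_sq hc).add hx)
  rw [abs_le]
  constructor <;> nlinarith [sq_nonneg ((symbol c k)⁻¹ - x k), sq_nonneg ((symbol c k)⁻¹ + x k)]

/-- The resolvent `(c - Δ)⁻¹`, as a Fourier multiplier. -/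
def resolvent (c : ℝ) (f : C(Torus, ℂ)) : C(Torus, ℂ) :=
  trigSeries fun k => ((symbol c k)⁻¹ : ℝ) * coeff k f

variable {f g φ : C(Torus, ℂ)}

lemma summable_norm_inv_symbol_mul (hc : 0 < c) {a : (Fin 2 → ℤ) → ℂ}
    (ha : Summable fun k => ‖a k‖ ^ 2) : Summable fun k => ‖((symbol c k)⁻¹ : ℝ) * a k‖ := by
  simpa only [norm_mul, Complex.norm_real, Real.norm_eq_abs, abs_mul, abs_norm] using
    summable_inv_symbol_mul hc ha

lemma hasFiniteEnergy_trigSeries (hc : 0 < c) {a : (Fin 2 → ℤ) → ℂ}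
    (ha : Summable fun k => ‖a k‖ ^ 2) :
    HasFiniteEnergy c (trigSeries fun k => ((symbol c k)⁻¹ : ℝ) * a k) := by
  have hsum := summable_norm_inv_symbol_mul hc ha
  constructor
  · simpa only [coeff_trigSeries hsum] using hsum
  · refine .of_nonneg_of_le (energy_term_nonneg hc _) (fun k => ?_) (ha.mul_left c⁻¹)
    have hk := symbol_pos hc k
    rw [coeff_trigSeries hsum, norm_mul, Complex.norm_real, Real.norm_of_nonneg (by positivity),
      mul_pow, ← mul_assoc, show symbol c k * (symbol c k)⁻¹ ^ 2 = (symbol c k)⁻¹ by field_simp]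
    gcongr
    exact le_symbol c k

lemma hasFiniteEnergy_resolvent (hc : 0 < c) (f : C(Torus, ℂ)) :
    HasFiniteEnergy c (resolvent c f) :=
  hasFiniteEnergy_trigSeries hc (hasSum_norm_sq_coeff f).summable

lemma coeff_resolvent (hc : 0 < c) (f : C(Torus, ℂ)) (k : Fin 2 → ℤ) :
    coeff k (resolvent c f) = ((symbol c k)⁻¹ : ℝ) * coeff k f :=
  coeff_trigSeries (summable_norm_inv_symbol_mul hc (hasSum_norm_sq_coeff f).summable) k

lemma resolvent_sub (hc : 0 < c) (f g : C(Torus, ℂ)) :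
    resolvent c (f - g) = resolvent c f - resolvent c g :=
  eq_of_coeff_eq fun k => by simp only [map_sub, coeff_resolvent hc, mul_sub]

lemma resolvent_smul (hc : 0 < c) (b : ℂ) (f : C(Torus, ℂ)) :
    resolvent c (b • f) = b • resolvent c f :=
  eq_of_coeff_eq fun k => by simp only [map_smul, coeff_resolvent hc, smul_eq_mul, mul_left_comm]

lemma tendsto_resolvent (hc : 0 < c) {f : ℕ → C(Torus, ℂ)} {a : (Fin 2 → ℤ) → ℂ} {K : ℝ}
    (hK : ∀ n, ∫ t, ‖f n t‖ ^ 2 ≤ K)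
    (ha : ∀ k, Tendsto (fun n => coeff k (f n)) atTop (𝓝 (a k))) :
    Tendsto (fun n => resolvent c (f n)) atTop
      (𝓝 (trigSeries fun k => ((symbol c k)⁻¹ : ℝ) * a k)) := by
  have hsum (n : ℕ) := hasSum_norm_sq_coeff (f n)
  obtain ⟨hasq, haK⟩ := summable_norm_sq_of_tendsto_coeff hK ha
  have hdiff (n : ℕ) (k : Fin 2 → ℤ) :
      ‖coeff k (f n) - a k‖ ^ 2 ≤ 2 * ‖coeff k (f n)‖ ^ 2 + 2 * ‖a k‖ ^ 2 := by
    nlinarith [norm_sub_le (coeff k (f n)) (a k), norm_nonneg (coeff k (f n) - a k),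
      sq_nonneg (‖coeff k (f n)‖ - ‖a k‖)]
  have hdiffsum (n : ℕ) : Summable fun k => ‖coeff k (f n) - a k‖ ^ 2 :=
    .of_nonneg_of_le (fun k => sq_nonneg _) (hdiff n)
      (((hsum n).summable.mul_left 2).add (hasq.mul_left 2))
  have hzero := tendsto_tsum_mul_of_tsum_sq_le (w := fun k => (symbol c k)⁻¹)
    (x := fun n k => ‖coeff k (f n) - a k‖) (K := 2 * K + 2 * K)
    (summable_inv_symbol_sq hc) hdiffsum
    (fun n => by
      refine ((hdiffsum n).tsum_le_tsum (hdiff n)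
        (((hsum n).summable.mul_left 2).add (hasq.mul_left 2))).trans ?_
      rw [((hsum n).summable.mul_left 2).tsum_add (hasq.mul_left 2), tsum_mul_left, tsum_mul_left,
        (hsum n).tsum_eq]
      linarith [hK n, haK])
    (fun k => by simpa using ((ha k).sub_const (a k)).norm)
  refine tendsto_iff_norm_sub_tendsto_zero.mpr
    (squeeze_zero (fun n => norm_nonneg _) (fun n => ?_) hzero)
  have hcoeff (k : Fin 2 → ℤ) : ‖coeff k (resolvent c (f n) -
      trigSeries fun k => ((symbol c k)⁻¹ : ℝ) * a k)‖ =
      |(symbol c k)⁻¹ * ‖coeff k (f n) - a k‖| := by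
    rw [map_sub, coeff_resolvent hc, coeff_trigSeries (summable_norm_inv_symbol_mul hc hasq),
      ← mul_sub, norm_mul, Complex.norm_real, Real.norm_eq_abs, abs_mul, abs_norm]
  refine (norm_le_tsum_norm_coeff ?_).trans_eq (tsum_congr hcoeff)
  simpa only [hcoeff] using summable_inv_symbol_mul hc (hdiffsum n)

lemma exists_tendsto_resolvent_comp (hc : 0 < c) {f : ℕ → C(Torus, ℂ)} {K : ℝ}
    (hK : ∀ n, ∫ t, ‖f n t‖ ^ 2 ≤ K) :
    ∃ φ : C(Torus, ℂ), HasFiniteEnergy c φ ∧ ∃ ψ : ℕ → ℕ, StrictMono ψ ∧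
      Tendsto (fun n => resolvent c (f (ψ n))) atTop (𝓝 φ) := by
  have hball (n : ℕ) (k : Fin 2 → ℤ) : coeff k (f n) ∈ Metric.closedBall (0 : ℂ) √K := by
    rw [mem_closedBall_zero_iff]
    exact Real.le_sqrt_of_sq_le ((le_hasSum (hasSum_norm_sq_coeff (f n)) k
      fun _ _ => sq_nonneg _).trans (hK n))
  obtain ⟨a, -, ψ, hψ, ha⟩ := (isCompact_univ_pi fun _ : Fin 2 → ℤ =>
    isCompact_closedBall (0 : ℂ) √K).isSeqCompact
    (x := fun n k => coeff k (f n)) fun n k _ => hball n k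
  rw [tendsto_pi_nhds] at ha
  have hasq := (summable_norm_sq_of_tendsto_coeff (fun n => hK (ψ n)) ha).1
  exact ⟨_, hasFiniteEnergy_trigSeries hc hasq, ψ, hψ, tendsto_resolvent hc (fun n => hK (ψ n)) ha⟩

end Resolvent

section MaximumPrinciple

lemma nonneg_of_hasDerivAt_of_isLocalMin {f f' : ℝ → ℝ} {x l : ℝ}
    (hf : ∀ᶠ y in 𝓝 x, HasDerivAt f (f' y) y) (hf' : HasDerivAt f' l x)
    (hmin : IsLocalMin f x) : 0 ≤ l := by
  by_contra! hl
  have hderiv : deriv f =ᶠ[𝓝 x] f' := hf.mono fun y hy => hy.deriv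
  have hmax : IsLocalMax f x := isLocalMax_of_deriv_deriv_neg
    (by rwa [hderiv.deriv_eq, hf'.deriv]) hmin.deriv_eq_zero hf.self_of_nhds.continuousAt
  have hconst : f =ᶠ[𝓝 x] fun _ => f x := by
    filter_upwards [hmin, hmax] with y hle hge using le_antisymm hge hle
  have hzero : f' =ᶠ[𝓝 x] fun _ => 0 := hderiv.symm.trans (by simpa using hconst.deriv)
  exact hl.ne (hf'.unique ((hasDerivAt_const x (0 : ℝ)).congr_of_eventuallyEq hzero))

variable {d : Type*} [DecidableEq d] {φ : C(UnitAddTorus d, ℂ)}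

lemma HasPartialDeriv.re_nonneg_of_isMinOn {i : d} {g h : C(UnitAddTorus d, ℂ)}
    (hg : HasPartialDeriv i φ g) (hh : HasPartialDeriv i g h) {t : UnitAddTorus d}
    (hmin : ∀ s, (φ t).re ≤ (φ s).re) : 0 ≤ (h t).re :=
  nonneg_of_hasDerivAt_of_isLocalMin
    (.of_forall fun s => Complex.reCLM.hasFDerivAt.comp_hasDerivAt s (hg.hasDerivAt t s))
    (Complex.reCLM.hasFDerivAt.comp_hasDerivAt 0 (hh t))
    (.of_forall fun s => by simpa using! hmin (t + toTorus (Pi.single i s)))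

variable [Fintype d] {c : ℝ} {f f₁ f₂ φ₁ φ₂ : C(UnitAddTorus d, ℂ)}

/-- `φ` is a classical solution of `(c - Δ) φ = f`, the derivatives being taken with respect to the
angular coordinates. -/
def IsClassicalSolution (c : ℝ) (φ f : C(UnitAddTorus d, ℂ)) : Prop :=
  ∃ g h : d → C(UnitAddTorus d, ℂ), (∀ i, HasPartialDeriv i φ (g i)) ∧
    (∀ i, HasPartialDeriv i (g i) (h i)) ∧ f = (c : ℂ) • φ - ∑ i, h i

lemma IsClassicalSolution.coeff_eq (hφ : IsClassicalSolution c φ f) (k : d → ℤ) :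
    coeff k f = symbol c k * coeff k φ := by
  obtain ⟨g, h, hg, hh, rfl⟩ := hφ
  have hterm (i : d) : coeff k (h i) = -((k i : ℂ) ^ 2 * coeff k φ) := by
    rw [(hh i).coeff_eq, (hg i).coeff_eq]
    linear_combination (k i : ℂ) ^ 2 * coeff k φ * Complex.I_sq
  simp only [map_sub, map_smul, map_sum, hterm, smul_eq_mul, symbol, Finset.sum_neg_distrib,
    sub_neg_eq_add, ← Finset.sum_mul, ← add_mul]
  push_cast
  rfl

lemma IsClassicalSolution.add (h₁ : IsClassicalSolution c φ₁ f₁)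
    (h₂ : IsClassicalSolution c φ₂ f₂) : IsClassicalSolution c (φ₁ + φ₂) (f₁ + f₂) := by
  obtain ⟨g₁, h₁, hg₁, hh₁, rfl⟩ := h₁
  obtain ⟨g₂, h₂, hg₂, hh₂, rfl⟩ := h₂
  refine ⟨g₁ + g₂, h₁ + h₂, fun i t => (hg₁ i t).add (hg₂ i t),
    fun i t => (hh₁ i t).add (hh₂ i t), ?_⟩
  ext t
  simp only [Pi.add_apply, Finset.sum_add_distrib, ContinuousMap.add_apply,
    ContinuousMap.sub_apply, ContinuousMap.smul_apply, smul_add]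
  abel

lemma IsClassicalSolution.const_smul (hφ : IsClassicalSolution c φ f) (b : ℂ) :
    IsClassicalSolution c (b • φ) (b • f) := by
  obtain ⟨g, h, hg, hh, rfl⟩ := hφ
  refine ⟨b • g, b • h, fun i => (hg i).const_smul b, fun i => (hh i).const_smul b, ?_⟩
  simp only [Pi.smul_apply, smul_sub, Finset.smul_sum, smul_comm b]

lemma isClassicalSolution_mFourier (c : ℝ) (k : d → ℤ) :
    IsClassicalSolution c (mFourier k) ((symbol c k : ℂ) • mFourier k) := by
  refine ⟨fun i => (k i * Complex.I) • mFourier k,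
    fun i => (k i * Complex.I) • (k i * Complex.I) • mFourier k,
    fun i => hasPartialDeriv_mFourier i k,
    fun i => (hasPartialDeriv_mFourier i k).const_smul _, ?_⟩
  ext t
  simp only [smul_smul, ← Finset.sum_smul, mul_mul_mul_comm _ Complex.I, Complex.I_mul_I,
    ContinuousMap.sub_apply, ContinuousMap.smul_apply, ← sub_smul]
  simp [symbol, pow_two]

lemma IsClassicalSolution.neg_div_le_re (hφ : IsClassicalSolution c φ f) (hc : 0 < c) {δ : ℝ}
    (hδ : ∀ t, -δ ≤ (f t).re) (t : UnitAddTorus d) : -δ / c ≤ (φ t).re := by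
  obtain ⟨g, h, hg, hh, rfl⟩ := hφ
  obtain ⟨t₀, -, ht₀⟩ := isCompact_univ.exists_isMinOn ⟨t, Set.mem_univ t⟩
    (Complex.continuous_re.comp φ.continuous).continuousOn
  have hmin (s : UnitAddTorus d) : (φ t₀).re ≤ (φ s).re := ht₀ (Set.mem_univ s)
  have hlap : 0 ≤ ∑ i, (h i t₀).re := Finset.sum_nonneg fun i _ =>
    (hg i).re_nonneg_of_isMinOn (hh i) hmin
  have hval : (((c : ℂ) • φ - ∑ i, h i) t₀).re = c * (φ t₀).re - ∑ i, (h i t₀).re := by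
    simp
  refine le_trans ?_ (hmin t)
  rw [div_le_iff₀ hc]
  linarith [hδ t₀]

end MaximumPrinciple

section Positivity

variable {c : ℝ} {f g φ : C(Torus, ℂ)}

lemma IsClassicalSolution.resolvent_eq (h : IsClassicalSolution c φ f) (hc : 0 < c) :
    resolvent c f = φ :=
  eq_of_coeff_eq fun k => by
    have hk : (symbol c k : ℂ) ≠ 0 := by exact_mod_cast (symbol_pos hc k).ne'
    rw [coeff_resolvent hc, h.coeff_eq, Complex.ofReal_inv, inv_mul_cancel_left₀ hk]

lemma exists_isClassicalSolution_of_mem_span (hc : 0 < c)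
    (hf : f ∈ Submodule.span ℂ (Set.range (mFourier (d := Fin 2)))) :
    ∃ φ, IsClassicalSolution c φ f := by
  induction hf using Submodule.span_induction with
  | mem f hf =>
    obtain ⟨k, rfl⟩ := hf
    have hk : (symbol c k : ℂ) ≠ 0 := by exact_mod_cast (symbol_pos hc k).ne'
    have h := (isClassicalSolution_mFourier c k).const_smul (symbol c k : ℂ)⁻¹
    rw [inv_smul_smul₀ hk] at h
    exact ⟨_, h⟩
  | zero => exact ⟨0, 0, 0, fun _ _ => hasDerivAt_const _ _, fun _ _ => hasDerivAt_const _ _, by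
      ext; simp⟩
  | add f₁ f₂ _ _ h₁ h₂ =>
    obtain ⟨φ₁, h₁⟩ := h₁
    obtain ⟨φ₂, h₂⟩ := h₂
    exact ⟨_, h₁.add h₂⟩
  | smul b f _ h =>
    obtain ⟨φ, h⟩ := h
    exact ⟨_, h.const_smul b⟩

lemma continuous_resolvent (hc : 0 < c) : Continuous (resolvent c) := by
  refine SeqContinuous.continuous fun f g hfg => ?_
  obtain ⟨K, hK⟩ := hfg.norm.bddAbove_range
  refine tendsto_resolvent hc (K := K ^ 2) (fun n => ?_) fun k =>
    ((coeff k).continuous.tendsto g).comp hfg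
  have hle : ∫ t, ‖f n t‖ ^ 2 ≤ ∫ _ : Torus, K ^ 2 :=
    integral_mono (integrable_of_continuous (by fun_prop)) (integrable_const _) fun t =>
      pow_le_pow_left₀ (norm_nonneg _)
        (((f n).norm_coe_le_norm t).trans (hK (Set.mem_range_self n))) 2
  simpa using hle

lemma resolvent_re_nonneg (hc : 0 < c) (hf : ∀ t, 0 ≤ (f t).re) (t : Torus) :
    0 ≤ (resolvent c f t).re := by
  have hdense : f ∈ closure (Submodule.span ℂ (Set.range (mFourier (d := Fin 2))) : Set _) := by
    rw [← Submodule.topologicalClosure_coe, span_mFourier_closure_eq_top]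
    trivial
  obtain ⟨q, hq, hqf⟩ := mem_closure_iff_seq_limit.mp hdense
  have hlower (n : ℕ) : -‖f - q n‖ / c ≤ (resolvent c (q n) t).re := by
    obtain ⟨φ, hφ⟩ := exists_isClassicalSolution_of_mem_span hc (hq n)
    rw [hφ.resolvent_eq hc]
    refine hφ.neg_div_le_re hc (fun s => ?_) t
    have hnorm := (Complex.re_le_norm _).trans ((f - q n).norm_coe_le_norm s)
    rw [ContinuousMap.sub_apply, Complex.sub_re] at hnorm
    linarith [hf s]
  have hleft : Tendsto (fun n => -‖f - q n‖ / c) atTop (𝓝 0) := by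
    simpa using ((hqf.const_sub f).norm.neg.div_const c)
  have hright : Tendsto (fun n => (resolvent c (q n) t).re) atTop (𝓝 (resolvent c f t).re) :=
    (Complex.continuous_re.comp (continuous_eval_const t)).continuousAt.tendsto.comp
      (((continuous_resolvent hc).tendsto f).comp hqf)
  exact le_of_tendsto_of_tendsto' hleft hright hlower

lemma resolvent_im_eq_zero (hc : 0 < c) (hf : ∀ t, (f t).im = 0) (t : Torus) :
    (resolvent c f t).im = 0 := by
  have hle := resolvent_re_nonneg hc (f := Complex.I • f) (fun t => by simp [hf t]) t
  have hge := resolvent_re_nonneg hc (f := (-Complex.I) • f) (fun t => by simp [hf t]) t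
  simp only [resolvent_smul hc, ContinuousMap.smul_apply, smul_eq_mul, neg_mul, Complex.neg_re,
    Complex.I_mul_re] at hle hge
  linarith

lemma norm_resolvent_le (hc : 0 < c) (hfg : ∀ t, ‖g t‖ ≤ (f t).re) (t : Torus) :
    ‖resolvent c g t‖ ≤ (resolvent c f t).re := by
  obtain ⟨θ, hθ, hθg⟩ := RCLike.exists_norm_eq_mul_self (resolvent c g t)
  have h := resolvent_re_nonneg hc (f := f - θ • g) (fun s => by
    have hre := Complex.re_le_norm (θ * g s)
    rw [norm_mul, hθ, one_mul] at hre
    simpa using! hre.trans (hfg s)) t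
  rw [resolvent_sub hc, resolvent_smul hc, ContinuousMap.sub_apply, ContinuousMap.smul_apply,
    smul_eq_mul, ← hθg] at h
  simpa using h

end Positivity

section Duality

variable {d : Type*} [Fintype d]

/-- The real `L²` pairing `Re ∫ f̄ g`. -/
def pairing (f g : C(UnitAddTorus d, ℂ)) : ℝ := (∫ t, conj (f t) * g t).re

lemma hasSum_pairing (f g : C(UnitAddTorus d, ℂ)) :
    HasSum (fun k => (conj (coeff k f) * coeff k g).re) (pairing f g) :=
  Complex.hasSum_re (hasSum_conj_coeff_mul_coeff f g)

variable {c : ℝ} {f φ : C(Torus, ℂ)}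

lemma energy_resolvent (hc : 0 < c) (f : C(Torus, ℂ)) :
    energy c (resolvent c f) = pairing f (resolvent c f) := by
  refine (hasFiniteEnergy_resolvent hc f).hasSum_energy.unique
    ((hasSum_pairing f _).congr_fun fun k => ?_)
  have hk := (symbol_pos hc k).ne'
  rw [coeff_resolvent hc, mul_left_comm, Complex.conj_mul', norm_mul, mul_pow, Complex.norm_real,
    Real.norm_eq_abs, sq_abs, ← Complex.ofReal_pow, ← Complex.ofReal_mul, Complex.ofReal_re]
  field_simp

lemma hasSum_symbol_mul_norm_coeff_sub_sq (hc : 0 < c) (f : C(Torus, ℂ))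
    (hφ : HasFiniteEnergy c φ) (b : ℝ) :
    HasSum (fun k => symbol c k * ‖coeff k (resolvent c f) - b * coeff k φ‖ ^ 2)
      (energy c (resolvent c f) - 2 * b * pairing f φ + b ^ 2 * energy c φ) := by
  refine (((hasFiniteEnergy_resolvent hc f).hasSum_energy.sub
    ((hasSum_pairing f φ).mul_left (2 * b))).add
    (hφ.hasSum_energy.mul_left (b ^ 2))).congr_fun fun k => ?_
  have hk : (symbol c k : ℂ) ≠ 0 := by exact_mod_cast (symbol_pos hc k).ne'
  have hf : coeff k f = symbol c k * coeff k (resolvent c f) := by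
    rw [coeff_resolvent hc, Complex.ofReal_inv, mul_inv_cancel_left₀ hk]
  rw [hf]
  simp only [← Complex.normSq_eq_norm_sq, Complex.normSq_apply, Complex.sub_re, Complex.sub_im,
    Complex.mul_re, Complex.mul_im, Complex.conj_re, Complex.conj_im, Complex.ofReal_re,
    Complex.ofReal_im, map_mul, Complex.conj_ofReal]
  ring

lemma sq_pairing_le (hc : 0 < c) (f : C(Torus, ℂ)) (hφ : HasFiniteEnergy c φ) :
    pairing f φ ^ 2 ≤ energy c (resolvent c f) * energy c φ := by
  have h := discrim_le_zero (a := energy c φ) (b := -2 * pairing f φ)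
    (c := energy c (resolvent c f)) fun b => by
      have hsum := (hasSum_symbol_mul_norm_coeff_sub_sq hc f hφ b).nonneg fun k =>
        mul_nonneg (symbol_pos hc k).le (sq_nonneg _)
      linarith
  rw [discrim] at h
  linarith

lemma resolvent_eq_sqrt_energy_smul (hc : 0 < c) (hφ : HasFiniteEnergy c φ)
    (hφ1 : energy c φ = 1) (heq : pairing f φ = √(energy c (resolvent c f))) :
    resolvent c f = (√(energy c (resolvent c f)) : ℂ) • φ := by
  have hsum := hasSum_symbol_mul_norm_coeff_sub_sq hc f hφ √(energy c (resolvent c f))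
  have hzero : energy c (resolvent c f) - 2 * √(energy c (resolvent c f)) * pairing f φ +
      √(energy c (resolvent c f)) ^ 2 * energy c φ = 0 := by
    rw [heq, hφ1, mul_assoc, ← pow_two, Real.sq_sqrt (energy_nonneg hc _)]
    ring
  rw [hzero, hasSum_zero_iff_of_nonneg fun k =>
    mul_nonneg (symbol_pos hc k).le (sq_nonneg _)] at hsum
  refine eq_of_coeff_eq fun k => ?_
  have hk := congrFun hsum k
  simpa [(symbol_pos hc k).ne', sub_eq_zero] using hk

end Duality

section Reflections

variable {d : Type*} [DecidableEq d]

/-- The reflection `xᵢ ↦ -xᵢ` of the torus. -/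
def reflect (i : d) : C(UnitAddTorus d, UnitAddTorus d) where
  toFun t := Function.update t i (-t i)
  continuous_toFun := continuous_id.update i (continuous_apply i).neg

/-- A function on the torus that is even in each variable. -/
def IsSymmetric (φ : C(UnitAddTorus d, ℂ)) : Prop := ∀ i, φ.comp (reflect i) = φ

variable [Fintype d]

lemma mFourier_reflect (i : d) (k : d → ℤ) (t : UnitAddTorus d) :
    mFourier k (reflect i t) = mFourier (Function.update k i (-k i)) t := by
  refine Finset.prod_congr rfl fun j _ => ?_
  rcases eq_or_ne j i with rfl | hj
  · simp [reflect, fourier_apply]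
  · simp [reflect, hj]

lemma symbol_update_neg (c : ℝ) (i : d) (k : d → ℤ) :
    symbol c (Function.update k i (-k i)) = symbol c k := by
  refine congrArg (c + ·) (Finset.sum_congr rfl fun j _ => ?_)
  rcases eq_or_ne j i with rfl | hj
  · simp
  · simp [hj]

lemma measurePreserving_reflect (i : d) :
    MeasurePreserving (reflect i : UnitAddTorus d → UnitAddTorus d) := by
  have h := volume_preserving_pi (f := fun j : d => if j = i then Neg.neg else id)
    fun j => (?_ : MeasurePreserving _ (volume : Measure UnitAddCircle) volume)
  · convert h using 1
    ext t j
    rcases eq_or_ne j i with rfl | hj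
    · simp [reflect]
    · simp [reflect, hj]
  · split_ifs
    · exact Measure.measurePreserving_neg volume
    · exact MeasurePreserving.id _

lemma integral_comp_reflect (i : d) (g : C(UnitAddTorus d, ℂ)) :
    ∫ t, g (reflect i t) = ∫ t, g t := by
  conv_rhs => rw [← (measurePreserving_reflect i).map_eq]
  exact (integral_map (reflect i).continuous.aemeasurable
    g.continuous.aestronglyMeasurable).symm

lemma coeff_comp_reflect (i : d) (k : d → ℤ) (φ : C(UnitAddTorus d, ℂ)) :
    coeff k (φ.comp (reflect i)) = coeff (Function.update k i (-k i)) φ := by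
  have hneg : -k = Function.update (-Function.update k i (-k i)) i
      (-(-Function.update k i (-k i)) i) := by
    simp [← Function.update_neg]
  rw [coeff_apply, coeff_apply, hneg]
  simp only [ContinuousMap.comp_apply, ← mFourier_reflect]
  exact integral_comp_reflect i (mFourier (-Function.update k i (-k i)) * φ)

lemma IsSymmetric.resolvent {c : ℝ} (hc : 0 < c) {f : C(Torus, ℂ)} (hf : IsSymmetric f) :
    IsSymmetric (resolvent c f) := fun i =>
  eq_of_coeff_eq fun k => by
    rw [coeff_comp_reflect, coeff_resolvent hc, coeff_resolvent hc, symbol_update_neg,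
      ← coeff_comp_reflect, hf i]

end Reflections

section Slices

variable {E : Type*} [NormedAddCommGroup E] [NormedSpace ℝ E]

lemma intervalIntegral_circle (f : UnitAddCircle → E) :
    ∫ s in (0 : ℝ)..2 * π, f ((s / (2 * π) : ℝ) : UnitAddCircle) = (2 * π) • ∫ s, f s := by
  have hhaar := AddCircle.integral_haarAddCircle (T := 1) (f := f)
  rw [inv_one, one_smul, ← UnitAddCircle.intervalIntegral_preimage 0, zero_add] at hhaar
  rw [intervalIntegral.integral_comp_div (fun s : ℝ => f s) two_pi_pos.ne', zero_div,
    div_self two_pi_pos.ne', ← hhaar]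
  rfl

variable {d : Type*} [DecidableEq d]

lemma intervalIntegral_add_toTorus_single (f : UnitAddTorus d → E) (t : UnitAddTorus d) (i : d) :
    ∫ s in (0 : ℝ)..2 * π, f (t + toTorus (Pi.single i s)) =
      (2 * π) • ∫ s, f (Function.update t i s) := by
  have hupdate (s : ℝ) : t + toTorus (Pi.single i s) =
      Function.update t i (t i + ((s / (2 * π) : ℝ) : UnitAddCircle)) := by
    ext j
    obtain rfl | hj := eq_or_ne j i
    · simp [toTorus]
    · simp [toTorus, hj]
  simp only [hupdate]
  rw [intervalIntegral_circle fun s => f (Function.update t i (t i + s)),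
    integral_add_left_eq_self fun s => f (Function.update t i s)]

lemma mul_norm_le_integral_norm_add_mul_integral_norm_deriv [CompleteSpace E] {f f' : ℝ → E}
    (hf : ∀ s, HasDerivAt f (f' s) s) (hf' : Continuous f') {a : ℝ} (ha : 0 ≤ a) :
    a * ‖f 0‖ ≤ (∫ s in (0 : ℝ)..a, ‖f s‖) + a * ∫ s in (0 : ℝ)..a, ‖f' s‖ := by
  have hint : IntervalIntegrable (fun s => ‖f s‖) volume 0 a :=
    (continuous_iff_continuousAt.mpr fun s => (hf s).continuousAt).norm.intervalIntegrable _ _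
  have hbound (s : ℝ) (hs : s ∈ Set.Icc 0 a) : ‖f 0‖ ≤ ‖f s‖ + ∫ r in (0 : ℝ)..a, ‖f' r‖ := by
    have hftc := intervalIntegral.integral_eq_sub_of_hasDerivAt (fun r _ => hf r)
      (hf'.intervalIntegrable 0 s)
    calc ‖f 0‖ = ‖f s - ∫ r in (0 : ℝ)..s, f' r‖ := by rw [hftc, sub_sub_cancel]
      _ ≤ ‖f s‖ + ‖∫ r in (0 : ℝ)..s, f' r‖ := norm_sub_le _ _
      _ ≤ ‖f s‖ + ∫ r in (0 : ℝ)..s, ‖f' r‖ := by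
        gcongr
        exact intervalIntegral.norm_integral_le_integral_norm hs.1
      _ ≤ ‖f s‖ + ∫ r in (0 : ℝ)..a, ‖f' r‖ := by
        gcongr
        exact intervalIntegral.integral_mono_interval le_rfl hs.1 hs.2
          (ae_of_all _ fun _ => norm_nonneg _) (hf'.norm.intervalIntegrable _ _)
  have hmono := intervalIntegral.integral_mono_on ha intervalIntegrable_const
    (hint.add intervalIntegrable_const) hbound
  rw [intervalIntegral.integral_add hint intervalIntegrable_const] at hmono
  simpa using hmono

lemma HasPartialDeriv.norm_le_integral_update {i : d} {f g : C(UnitAddTorus d, ℂ)}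
    (h : HasPartialDeriv i f g) (t : UnitAddTorus d) :
    ‖f t‖ ≤ ∫ s, (‖f (Function.update t i s)‖ + 2 * π * ‖g (Function.update t i s)‖) := by
  have hslice := mul_norm_le_integral_norm_add_mul_integral_norm_deriv (h.hasDerivAt t)
    (g.continuous.comp (continuous_const.add
      (continuous_toTorus.comp (continuous_single (A := fun _ => ℝ) i)))) two_pi_pos.le
  rw [intervalIntegral_add_toTorus_single (fun t => ‖f t‖) t i,
    intervalIntegral_add_toTorus_single (fun t => ‖g t‖) t i] at hslice
  rw [integral_add (integrable_of_continuous (by fun_prop))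
    (integrable_of_continuous (by fun_prop)), integral_const_mul]
  refine le_of_mul_le_mul_left ?_ two_pi_pos
  simpa [mul_add] using hslice

end Slices

section Sobolev

-- The Loomis–Whitney inequality in dimension two, provided by Mathlib's grid-lines lemma.
lemma integral_sq_le_sq_integral_of_le_integral_update {f F : C(Torus, ℝ)} (hf : ∀ t, 0 ≤ f t)
    (hF : ∀ t, 0 ≤ F t) (hfF : ∀ i t, f t ≤ ∫ s, F (Function.update t i s)) :
    ∫ t, f t ^ 2 ≤ (∫ t, F t) ^ 2 := by
  have hgrid := lintegral_prod_lintegral_pow_le (ι := Fin 2)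
    (fun _ => (volume : Measure UnitAddCircle)) (p := 2)
    (by simpa using Real.HolderConjugate.two_two)
    (f := fun t => ENNReal.ofReal (F t)) (by fun_prop)
  have hone : (1 : ℝ) / ((Fintype.card (Fin 2) : ℝ) - 1) = 1 := by norm_num
  simp only [hone, ENNReal.rpow_one, ENNReal.rpow_ofNat, Fin.prod_univ_two] at hgrid
  have hofReal (i : Fin 2) (t : Torus) : ENNReal.ofReal (f t) ≤
      ∫⁻ s, ENNReal.ofReal (F (Function.update t i s)) := by
    rw [← ofReal_integral_eq_lintegral_ofReal (integrable_of_continuous (by fun_prop))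
      (ae_of_all _ fun s => hF _)]
    exact ENNReal.ofReal_le_ofReal (hfF i t)
  rw [← ENNReal.ofReal_le_ofReal_iff (sq_nonneg _)]
  calc ENNReal.ofReal (∫ t, f t ^ 2) = ∫⁻ t, ENNReal.ofReal (f t ^ 2) :=
        ofReal_integral_eq_lintegral_ofReal (integrable_of_continuous (by fun_prop))
          (ae_of_all _ fun t => sq_nonneg _)
    _ ≤ ∫⁻ t : Torus, (∫⁻ s, ENNReal.ofReal (F (Function.update t 0 s))) *
          ∫⁻ s, ENNReal.ofReal (F (Function.update t 1 s)) := by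
      refine lintegral_mono fun t => ?_
      rw [sq, ENNReal.ofReal_mul (hf t)]
      exact mul_le_mul' (hofReal 0 t) (hofReal 1 t)
    _ ≤ (∫⁻ t, ENNReal.ofReal (F t)) ^ 2 := hgrid
    _ = ENNReal.ofReal ((∫ t, F t) ^ 2) := by
      rw [ENNReal.ofReal_pow (integral_nonneg hF), ofReal_integral_eq_lintegral_ofReal
        (integrable_of_continuous (by fun_prop)) (ae_of_all _ hF)]

lemma integral_norm_sq_le_sq_integral {f : C(Torus, ℂ)} {g : Fin 2 → C(Torus, ℂ)}
    (h : ∀ i, HasPartialDeriv i f (g i)) :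
    ∫ t, ‖f t‖ ^ 2 ≤ (∫ t, (‖f t‖ + 2 * π * ∑ i, ‖g i t‖)) ^ 2 := by
  refine integral_sq_le_sq_integral_of_le_integral_update (f := ⟨fun t => ‖f t‖, by fun_prop⟩)
    (F := ⟨fun t => ‖f t‖ + 2 * π * ∑ i, ‖g i t‖, by fun_prop⟩) (fun t => norm_nonneg (f t))
    (fun t => by simp only [ContinuousMap.coe_mk]; positivity) fun i t => ?_
  refine ((h i).norm_le_integral_update t).trans ?_
  refine integral_mono (integrable_of_continuous (by fun_prop))
    (integrable_of_continuous (by fun_prop)) fun s => ?_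
  simp only [ContinuousMap.coe_mk]
  gcongr
  exact Finset.single_le_sum (f := fun j => ‖g j (Function.update t i s)‖)
    (fun j _ => norm_nonneg _) (Finset.mem_univ i)

lemma sq_integral_mul_le {X : Type*} [TopologicalSpace X] [CompactSpace X] [MeasurableSpace X]
    [OpensMeasurableSpace X] {μ : Measure X} [IsFiniteMeasure μ] {f g : X → ℝ}
    (hf : Continuous f) (hg : Continuous g) :
    (∫ x, f x * g x ∂μ) ^ 2 ≤ (∫ x, f x ^ 2 ∂μ) * ∫ x, g x ^ 2 ∂μ := by
  have hquad (b : ℝ) : 0 ≤ (∫ x, g x ^ 2 ∂μ) * (b * b) + (2 * ∫ x, f x * g x ∂μ) * b +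
      ∫ x, f x ^ 2 ∂μ := by
    calc 0 ≤ ∫ x, (b * g x + f x) ^ 2 ∂μ := integral_nonneg fun x => sq_nonneg _
      _ = ∫ x, ((g x ^ 2 * (b * b) + f x * g x * (2 * b)) + f x ^ 2) ∂μ := by
        congr 1 with x
        ring
      _ = _ := by
        rw [integral_add (integrable_of_continuous (by fun_prop))
          (integrable_of_continuous (by fun_prop)),
          integral_add (integrable_of_continuous (by fun_prop))
          (integrable_of_continuous (by fun_prop)), integral_mul_const, integral_mul_const]
        ring
  have hdiscrim := discrim_le_zero hquad
  rw [discrim] at hdiscrim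
  linarith

lemma integral_norm_pow_succ_le {f : C(Torus, ℂ)} {g : Fin 2 → C(Torus, ℂ)}
    (h : ∀ i, HasPartialDeriv i f (g i)) (m : ℕ) :
    ∫ t, ‖f t‖ ^ (2 * (m + 1)) ≤ (∫ t, ‖f t‖ ^ (2 * m)) *
      (3 * (2 * π * (m + 1)) ^ 2 * ((∫ t, ‖f t‖ ^ 2) + ∑ i, ∫ t, ‖g i t‖ ^ 2)) := by
  have hpow := integral_norm_sq_le_sq_integral fun i => (h i).pow (m + 1)
  have hfactor (t : Torus) : ‖(f ^ (m + 1)) t‖ + 2 * π *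
      ∑ i, ‖(((m + 1 : ℕ) : ℂ) • (f ^ (m + 1 - 1) * g i)) t‖ =
      ‖f t‖ ^ m * (‖f t‖ + 2 * π * (m + 1) * ∑ i, ‖g i t‖) := by
    have hcast : ‖((m : ℂ) + 1)‖ = m + 1 := by exact_mod_cast Complex.norm_natCast (m + 1)
    simp only [ContinuousMap.smul_apply, ContinuousMap.mul_apply, ContinuousMap.pow_apply,
      smul_eq_mul, norm_mul, norm_pow, Nat.cast_add, Nat.cast_one, hcast, add_tsub_cancel_right,
      ← Finset.mul_sum]
    ring
  have hgrad (t : Torus) : (‖f t‖ + 2 * π * (m + 1) * ∑ i, ‖g i t‖) ^ 2 ≤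
      3 * (2 * π * (m + 1)) ^ 2 * (‖f t‖ ^ 2 + ∑ i, ‖g i t‖ ^ 2) := by
    have hone : 1 ≤ 2 * π * ((m : ℝ) + 1) := by
      nlinarith [pi_gt_three, (Nat.cast_nonneg m : (0 : ℝ) ≤ m)]
    have hsq : 1 ≤ (2 * π * ((m : ℝ) + 1)) ^ 2 := one_le_pow₀ hone
    have hcauchy (x y z : ℝ) : (x + 2 * π * (m + 1) * (y + z)) ^ 2 ≤
        3 * x ^ 2 + 3 * (2 * π * (m + 1)) ^ 2 * (y ^ 2 + z ^ 2) := by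
      nlinarith [sq_nonneg (x - 2 * π * (m + 1) * y), sq_nonneg (x - 2 * π * (m + 1) * z),
        sq_nonneg (2 * π * (m + 1) * y - 2 * π * (m + 1) * z)]
    simp only [Fin.sum_univ_two]
    refine (hcauchy _ _ _).trans ?_
    nlinarith [mul_le_mul_of_nonneg_right hsq (sq_nonneg ‖f t‖)]
  simp only [hfactor] at hpow
  calc ∫ t, ‖f t‖ ^ (2 * (m + 1)) = ∫ t, ‖(f ^ (m + 1)) t‖ ^ 2 := by
        simp only [ContinuousMap.pow_apply, norm_pow, ← pow_mul, mul_comm]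
    _ ≤ (∫ t, ‖f t‖ ^ m * (‖f t‖ + 2 * π * (m + 1) * ∑ i, ‖g i t‖)) ^ 2 := hpow
    _ ≤ (∫ t, (‖f t‖ ^ m) ^ 2) * ∫ t, (‖f t‖ + 2 * π * (m + 1) * ∑ i, ‖g i t‖) ^ 2 :=
      sq_integral_mul_le (by fun_prop) (by fun_prop)
    _ ≤ (∫ t, (‖f t‖ ^ m) ^ 2) *
        ∫ t, 3 * (2 * π * (m + 1)) ^ 2 * (‖f t‖ ^ 2 + ∑ i, ‖g i t‖ ^ 2) := by
      refine mul_le_mul_of_nonneg_left ?_ (by positivity)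
      exact integral_mono (integrable_of_continuous (by fun_prop))
        (integrable_of_continuous (by fun_prop)) hgrad
    _ = _ := by
      rw [integral_const_mul, integral_add (integrable_of_continuous (by fun_prop))
        (integrable_of_continuous (by fun_prop)),
        integral_finsetSum _ fun i _ => integrable_of_continuous (by fun_prop)]
      simp only [← pow_mul, mul_comm m 2]

lemma exists_integral_norm_pow_le_of_hasPartialDeriv (m : ℕ) :
    ∃ C : ℝ, 0 ≤ C ∧ ∀ (f : C(Torus, ℂ)) (g : Fin 2 → C(Torus, ℂ)),
      (∀ i, HasPartialDeriv i f (g i)) →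
      ∫ t, ‖f t‖ ^ (2 * m) ≤ C * ((∫ t, ‖f t‖ ^ 2) + ∑ i, ∫ t, ‖g i t‖ ^ 2) ^ m := by
  induction m with
  | zero => exact ⟨1, zero_le_one, fun f g _ => by simp⟩
  | succ m ih =>
    obtain ⟨C, hC, hm⟩ := ih
    refine ⟨C * (3 * (2 * π * (m + 1)) ^ 2), by positivity, fun f g h => ?_⟩
    calc ∫ t, ‖f t‖ ^ (2 * (m + 1)) ≤ (∫ t, ‖f t‖ ^ (2 * m)) *
          (3 * (2 * π * (m + 1)) ^ 2 * ((∫ t, ‖f t‖ ^ 2) + ∑ i, ∫ t, ‖g i t‖ ^ 2)) :=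
        integral_norm_pow_succ_le h m
      _ ≤ C * ((∫ t, ‖f t‖ ^ 2) + ∑ i, ∫ t, ‖g i t‖ ^ 2) ^ m *
          (3 * (2 * π * (m + 1)) ^ 2 * ((∫ t, ‖f t‖ ^ 2) + ∑ i, ∫ t, ‖g i t‖ ^ 2)) := by
        gcongr
        exact hm f g h
      _ = _ := by ring

lemma hasPartialDeriv_sum_smul_mFourier {d : Type*} [Fintype d] [DecidableEq d]
    (s : Finset (d → ℤ)) (a : (d → ℤ) → ℂ) (i : d) :
    HasPartialDeriv i (∑ k ∈ s, a k • mFourier k)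
      (∑ k ∈ s, a k • (k i * Complex.I) • mFourier k) :=
  .sum fun k _ => (hasPartialDeriv_mFourier i k).const_smul (a k)

lemma energy_sum_coeff_smul_mFourier_le {d : Type*} [Fintype d] {c : ℝ} (hc : 0 < c)
    {φ : C(UnitAddTorus d, ℂ)} (hφ : HasFiniteEnergy c φ) (s : Finset (d → ℤ)) :
    energy c (∑ k ∈ s, coeff k φ • mFourier k) ≤ energy c φ := by
  classical
  have hcoeff (j : d → ℤ) : coeff j (∑ k ∈ s, coeff k φ • mFourier k) =
      if j ∈ s then coeff j φ else 0 := by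
    simp [map_sum, coeff_mFourier]
  rw [energy, tsum_eq_sum (s := s) fun j hj => by simp [hcoeff, hj]]
  refine (Finset.sum_congr rfl fun j hj => ?_).trans_le
    (hφ.summable_energy.sum_le_tsum s fun k _ => energy_term_nonneg hc φ k)
  rw [hcoeff, if_pos hj]

lemma integral_norm_sq_add_sum_le {d : Type*} [Fintype d] [DecidableEq d] {c : ℝ} (hc : 0 < c)
    {φ : C(UnitAddTorus d, ℂ)} {g : d → C(UnitAddTorus d, ℂ)}
    (h : ∀ i, HasPartialDeriv i φ (g i)) :
    (∫ t, ‖φ t‖ ^ 2) + ∑ i, ∫ t, ‖g i t‖ ^ 2 ≤ max 1 c⁻¹ * energy c φ := by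
  have hmass : 0 ≤ ∫ t, ‖φ t‖ ^ 2 := by positivity
  have hgrad : 0 ≤ ∑ i, ∫ t, ‖g i t‖ ^ 2 := by positivity
  have hmax : 1 ≤ max 1 c⁻¹ * c := by
    calc 1 = c⁻¹ * c := (inv_mul_cancel₀ hc.ne').symm
      _ ≤ max 1 c⁻¹ * c := by gcongr; exact le_max_right _ _
  rw [energy, (hasSum_energy_of_hasPartialDeriv h c).tsum_eq, mul_add, ← mul_assoc]
  exact add_le_add (le_mul_of_one_le_left hmass hmax)
    (le_mul_of_one_le_left hgrad (le_max_left _ _))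

lemma continuous_integral_norm_pow {X : Type*} [TopologicalSpace X] [CompactSpace X]
    [MeasurableSpace X] [OpensMeasurableSpace X] (μ : Measure X) [IsFiniteMeasure μ] (n : ℕ) :
    Continuous fun φ : C(X, ℂ) => ∫ x, ‖φ x‖ ^ n ∂μ := by
  refine continuous_iff_continuousAt.mpr fun φ => ?_
  refine tendsto_integral_filter_of_norm_le_const (.of_forall fun ψ =>
    (integrable_of_continuous (by fun_prop)).aestronglyMeasurable) ⟨(‖φ‖ + 1) ^ n, ?_⟩
    (.of_forall fun x => ((continuous_eval_const x).tendsto φ).norm.pow n)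
  filter_upwards [(continuous_norm.tendsto φ).eventually_le_const (lt_add_one ‖φ‖)] with ψ hψ
  refine .of_forall fun x => ?_
  rw [norm_pow, norm_norm]
  gcongr
  exact (ψ.norm_coe_le_norm x).trans hψ

lemma exists_integral_norm_pow_le_energy_pow {c : ℝ} (hc : 0 < c) (m : ℕ) :
    ∃ C : ℝ, 0 ≤ C ∧ ∀ φ : C(Torus, ℂ), HasFiniteEnergy c φ →
      ∫ t, ‖φ t‖ ^ (2 * m) ≤ C * energy c φ ^ m := by
  obtain ⟨C, hC, hsobolev⟩ := exists_integral_norm_pow_le_of_hasPartialDeriv m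
  have hmax : 0 ≤ max 1 c⁻¹ := zero_le_one.trans (le_max_left _ _)
  refine ⟨C * max 1 c⁻¹ ^ m, by positivity, fun φ hφ => ?_⟩
  have hseries := hasSum_trigSeries hφ.summable_coeff
  rw [trigSeries_coeff hφ.summable_coeff] at hseries
  refine le_of_tendsto (((continuous_integral_norm_pow volume (2 * m)).tendsto φ).comp hseries)
    (.of_forall fun s => ?_)
  have hderiv := hasPartialDeriv_sum_smul_mFourier s fun k => coeff k φ
  refine (hsobolev _ _ hderiv).trans ?_
  rw [mul_assoc, ← mul_pow]
  gcongr
  exact (integral_norm_sq_add_sum_le hc hderiv).trans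
    (mul_le_mul_of_nonneg_left (energy_sum_coeff_smul_mFourier_le hc hφ s) hmax)

end Sobolev

section Improvement

variable {d : Type*}

/-- The function `|φ|ⁿ`, viewed as a complex-valued one. -/
def normPow (n : ℕ) (φ : C(UnitAddTorus d, ℂ)) : C(UnitAddTorus d, ℂ) where
  toFun t := (‖φ t‖ : ℂ) ^ n

lemma normPow_apply (n : ℕ) (φ : C(UnitAddTorus d, ℂ)) (t : UnitAddTorus d) :
    normPow n φ t = ((‖φ t‖ ^ n : ℝ) : ℂ) :=
  (Complex.ofReal_pow _ _).symm

lemma norm_normPow_apply (n : ℕ) (φ : C(UnitAddTorus d, ℂ)) (t : UnitAddTorus d) :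
    ‖normPow n φ t‖ = ‖φ t‖ ^ n := by
  rw [normPow_apply, Complex.norm_real, Real.norm_of_nonneg (by positivity)]

lemma IsSymmetric.normPow [DecidableEq d] {φ : C(UnitAddTorus d, ℂ)} (hφ : IsSymmetric φ) (n : ℕ) :
    IsSymmetric (normPow n φ) := fun i =>
  ContinuousMap.ext fun t => by
    simp only [ContinuousMap.comp_apply, normPow_apply, ← DFunLike.congr_fun (hφ i) t]

lemma IsSymmetric.smul [DecidableEq d] {φ : C(UnitAddTorus d, ℂ)} (hφ : IsSymmetric φ) (b : ℂ) :
    IsSymmetric (b • φ) := fun i =>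
  ContinuousMap.ext fun t => congrArg (b * ·) (DFunLike.congr_fun (hφ i) t)

variable [Fintype d]

/-- The integral `∫ |φ|ⁿ`, to be maximised over the unit ball of the energy when `n = p + 2`. -/
def powIntegral (n : ℕ) (φ : C(UnitAddTorus d, ℂ)) : ℝ := ∫ t, ‖φ t‖ ^ n

lemma powIntegral_smul (n : ℕ) (b : ℂ) (φ : C(UnitAddTorus d, ℂ)) :
    powIntegral n (b • φ) = ‖b‖ ^ n * powIntegral n φ := by
  simp only [powIntegral, ContinuousMap.smul_apply, smul_eq_mul, norm_mul, mul_pow,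
    integral_const_mul]

lemma pairing_normPow_mul_self (n : ℕ) (φ : C(UnitAddTorus d, ℂ)) :
    pairing (normPow n φ * φ) φ = powIntegral (n + 2) φ := by
  have hint (t : UnitAddTorus d) :
      conj ((normPow n φ * φ) t) * φ t = ((‖φ t‖ ^ (n + 2) : ℝ) : ℂ) := by
    rw [ContinuousMap.mul_apply, normPow_apply, map_mul, Complex.conj_ofReal, mul_assoc,
      Complex.conj_mul', ← Complex.ofReal_pow, ← Complex.ofReal_mul, pow_add]
  simp only [pairing, hint, integral_complex_ofReal, Complex.ofReal_re, powIntegral]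

lemma pairing_normPow_of_eq_norm (n : ℕ) (φ : C(UnitAddTorus d, ℂ)) {w : C(UnitAddTorus d, ℂ)}
    (hw : ∀ t, w t = ‖w t‖) : pairing (normPow n φ) w = ∫ t, ‖φ t‖ ^ n * ‖w t‖ := by
  have hint (t : UnitAddTorus d) :
      conj (normPow n φ t) * w t = ((‖φ t‖ ^ n * ‖w t‖ : ℝ) : ℂ) := by
    rw [normPow_apply, Complex.conj_ofReal, Complex.ofReal_mul, ← hw t]
  simp only [pairing, hint, integral_complex_ofReal, Complex.ofReal_re]

variable {c : ℝ}

lemma energy_resolvent_le_of_norm_le (hc : 0 < c) {f g : C(Torus, ℂ)}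
    (hfg : ∀ t, ‖g t‖ ≤ (f t).re) (hf : ∀ t, (f t).im = 0) :
    energy c (resolvent c g) ≤ energy c (resolvent c f) := by
  have hre (h : C(Torus, ℂ)) :
      pairing h (resolvent c h) = ∫ t, (conj (h t) * resolvent c h t).re :=
    (integral_re (f := fun t => conj (h t) * resolvent c h t)
      (integrable_of_continuous (by fun_prop))).symm
  rw [energy_resolvent hc, energy_resolvent hc, hre, hre]
  refine integral_mono (integrable_of_continuous (by fun_prop))
    (integrable_of_continuous (by fun_prop)) fun t => ?_
  calc (conj (g t) * resolvent c g t).re ≤ ‖conj (g t) * resolvent c g t‖ := Complex.re_le_norm _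
    _ = ‖g t‖ * ‖resolvent c g t‖ := by rw [norm_mul, Complex.norm_conj]
    _ ≤ (f t).re * (resolvent c f t).re :=
      mul_le_mul (hfg t) (norm_resolvent_le hc hfg t) (norm_nonneg _)
        ((norm_nonneg _).trans (hfg t))
    _ = (conj (f t) * resolvent c f t).re := by simp [hf t]

lemma sq_powIntegral_le (hc : 0 < c) (p : ℕ) {φ : C(Torus, ℂ)} (hφ : HasFiniteEnergy c φ) :
    powIntegral (p + 2) φ ^ 2 ≤ energy c (resolvent c (normPow (p + 1) φ)) * energy c φ := by
  have hnorm (t : Torus) : ‖(normPow p φ * φ) t‖ ≤ (normPow (p + 1) φ t).re := by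
    rw [ContinuousMap.mul_apply, norm_mul, norm_normPow_apply, normPow_apply, Complex.ofReal_re,
      pow_succ]
  have him (t : Torus) : (normPow (p + 1) φ t).im = 0 := by
    rw [normPow_apply, Complex.ofReal_im]
  rw [← pairing_normPow_mul_self]
  exact (sq_pairing_le hc _ hφ).trans <|
    mul_le_mul_of_nonneg_right (energy_resolvent_le_of_norm_le hc hnorm him) (energy_nonneg hc φ)

/-- The improvement map `φ ↦ (c - Δ)⁻¹|φ|^{p+1}`, normalised to energy one: it does not decrease
`∫ |φ|^{p+2}` on the unit ball of the energy. -/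
def improve (c : ℝ) (p : ℕ) (φ : C(Torus, ℂ)) : C(Torus, ℂ) :=
  (((√(energy c (resolvent c (normPow (p + 1) φ))))⁻¹ : ℝ) : ℂ) • resolvent c (normPow (p + 1) φ)

lemma improve_apply_eq_norm (hc : 0 < c) (p : ℕ) (φ : C(Torus, ℂ)) (t : Torus) :
    improve c p φ t = ‖improve c p φ t‖ := by
  have hre := resolvent_re_nonneg hc (f := normPow (p + 1) φ) (fun t => by
    rw [normPow_apply, Complex.ofReal_re]; positivity) t
  have him := resolvent_im_eq_zero hc (f := normPow (p + 1) φ) (fun t => by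
    rw [normPow_apply, Complex.ofReal_im]) t
  rw [improve, ContinuousMap.smul_apply, smul_eq_mul,
    ← Complex.re_add_im (resolvent c (normPow (p + 1) φ) t), him, Complex.ofReal_zero, zero_mul,
    add_zero, ← Complex.ofReal_mul, Complex.norm_real, Real.norm_of_nonneg (by positivity)]

lemma integral_norm_pow_mul_norm_improve (hc : 0 < c) (p : ℕ) (φ : C(Torus, ℂ)) :
    ∫ t, ‖φ t‖ ^ (p + 1) * ‖improve c p φ t‖ =
      √(energy c (resolvent c (normPow (p + 1) φ))) := by
  have hsmul (f w : C(Torus, ℂ)) (b : ℝ) : pairing f ((b : ℂ) • w) = b * pairing f w := by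
    simp only [pairing, ContinuousMap.smul_apply, smul_eq_mul, mul_left_comm, integral_const_mul,
      Complex.re_ofReal_mul]
  rw [← pairing_normPow_of_eq_norm (p + 1) φ (improve_apply_eq_norm hc p φ), improve, hsmul,
    ← energy_resolvent hc, inv_mul_eq_div, Real.div_sqrt]

-- Convexity of `x ↦ x^{p+2}` puts the integral at `improve c p φ` above its tangent at `φ`.
lemma powIntegral_add_le_powIntegral_improve (hc : 0 < c) (p : ℕ) (φ : C(Torus, ℂ)) :
    powIntegral (p + 2) φ +
        (p + 2) * (√(energy c (resolvent c (normPow (p + 1) φ))) - powIntegral (p + 2) φ) ≤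
      powIntegral (p + 2) (improve c p φ) := by
  have htangent (t : Torus) :
      ‖φ t‖ ^ (p + 2) + (p + 2) * (‖φ t‖ ^ (p + 1) * ‖improve c p φ t‖ - ‖φ t‖ ^ (p + 2)) ≤
        ‖improve c p φ t‖ ^ (p + 2) := by
    have h := pow_add_mul_le_add_pow (a := ‖φ t‖) (b := ‖improve c p φ t‖ - ‖φ t‖)
      (norm_nonneg _) (by linarith [norm_nonneg (φ t), norm_nonneg (improve c p φ t)]) (p + 2)
    rw [add_sub_cancel] at h
    refine le_trans (le_of_eq ?_) h
    push_cast
    ring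
  rw [← integral_norm_pow_mul_norm_improve hc, powIntegral, powIntegral,
    ← integral_sub (integrable_of_continuous (by fun_prop))
      (integrable_of_continuous (by fun_prop)), ← integral_const_mul,
    ← integral_add (integrable_of_continuous (by fun_prop))
      (integrable_of_continuous (by fun_prop))]
  exact integral_mono (integrable_of_continuous (by fun_prop))
    (integrable_of_continuous (by fun_prop)) htangent

/-- The competitors on the torus: symmetric functions of energy at most one. -/
structure IsAdmissible (c : ℝ) (φ : C(Torus, ℂ)) : Prop where
  hasFiniteEnergy : HasFiniteEnergy c φ
  isSymmetric : IsSymmetric φ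
  energy_le_one : energy c φ ≤ 1

lemma IsAdmissible.smul {φ : C(Torus, ℂ)} (hφ : IsAdmissible c φ) {b : ℂ}
    (hb : ‖b‖ ^ 2 * energy c φ ≤ 1) : IsAdmissible c (b • φ) :=
  ⟨hφ.hasFiniteEnergy.smul b, hφ.isSymmetric.smul b, (energy_smul c b φ).trans_le hb⟩

lemma IsAdmissible.powIntegral_le_sqrt (hc : 0 < c) {φ : C(Torus, ℂ)} (hφ : IsAdmissible c φ)
    (p : ℕ) :
    powIntegral (p + 2) φ ≤ √(energy c (resolvent c (normPow (p + 1) φ))) :=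
  Real.le_sqrt_of_sq_le <| (sq_powIntegral_le hc p hφ.hasFiniteEnergy).trans <|
    mul_le_of_le_one_right (energy_nonneg hc _) hφ.energy_le_one

lemma IsAdmissible.powIntegral_le_improve (hc : 0 < c) {φ : C(Torus, ℂ)} (hφ : IsAdmissible c φ)
    (p : ℕ) : powIntegral (p + 2) φ ≤ powIntegral (p + 2) (improve c p φ) := by
  have hgain : 0 ≤ (p + 2 : ℝ) *
      (√(energy c (resolvent c (normPow (p + 1) φ))) - powIntegral (p + 2) φ) :=
    mul_nonneg (by positivity) (sub_nonneg.mpr (hφ.powIntegral_le_sqrt hc p))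
  linarith [powIntegral_add_le_powIntegral_improve hc p φ]

lemma IsAdmissible.improve (hc : 0 < c) {φ : C(Torus, ℂ)} (hφ : IsAdmissible c φ) (p : ℕ) :
    IsAdmissible c (improve c p φ) where
  hasFiniteEnergy := (hasFiniteEnergy_resolvent hc _).smul _
  isSymmetric := ((hφ.isSymmetric.normPow (p + 1)).resolvent hc).smul _
  energy_le_one := by
    rw [GroundState.improve, energy_smul, Complex.norm_real, Real.norm_eq_abs, sq_abs, inv_pow,
      Real.sq_sqrt (energy_nonneg hc _)]
    exact inv_mul_le_one

end Improvement

section Maximizer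

variable {c : ℝ}

lemma exists_integral_norm_pow_le_of_isAdmissible (hc : 0 < c) (m : ℕ) :
    ∃ C, ∀ φ, IsAdmissible c φ → ∫ t, ‖φ t‖ ^ (2 * m) ≤ C := by
  obtain ⟨C, hC, hsobolev⟩ := exists_integral_norm_pow_le_energy_pow hc m
  exact ⟨C, fun φ hφ => (hsobolev φ hφ.hasFiniteEnergy).trans <|
    mul_le_of_le_one_right hC (pow_le_one₀ (energy_nonneg hc φ) hφ.energy_le_one)⟩

lemma bddAbove_powIntegral (hc : 0 < c) (n : ℕ) :
    BddAbove (powIntegral n '' {φ | IsAdmissible c φ}) := by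
  obtain ⟨C, hC⟩ := exists_integral_norm_pow_le_of_isAdmissible hc n
  refine ⟨1 + C, ?_⟩
  rintro _ ⟨φ, hφ, rfl⟩
  calc powIntegral n φ ≤ ∫ t, (1 + ‖φ t‖ ^ (2 * n)) := by
        refine integral_mono (integrable_of_continuous (by fun_prop))
          (integrable_of_continuous (by fun_prop)) fun t => ?_
        rw [mul_comm 2 n, pow_mul]
        linarith [sq_nonneg (‖φ t‖ ^ n - 1), sq_nonneg (‖φ t‖ ^ n)]
    _ = 1 + ∫ t, ‖φ t‖ ^ (2 * n) := by
        rw [integral_add (integrable_of_continuous (by fun_prop))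
          (integrable_of_continuous (by fun_prop)), integral_const, probReal_univ, one_smul]
    _ ≤ 1 + C := by gcongr; exact hC φ hφ

lemma exists_isAdmissible_powIntegral_pos (hc : 0 < c) (n : ℕ) :
    ∃ φ, IsAdmissible c φ ∧ 0 < powIntegral n φ := by
  have hcoeff (k : Fin 2 → ℤ) (hk : k ∉ ({0} : Finset (Fin 2 → ℤ))) :
      coeff k (mFourier 0) = 0 := by
    rw [coeff_mFourier, if_neg (by simpa only [Finset.mem_singleton] using hk)]
  have hfinite : HasFiniteEnergy c (mFourier (0 : Fin 2 → ℤ)) :=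
    ⟨summable_of_ne_finset_zero (s := {0}) fun k hk => by rw [hcoeff k hk, norm_zero],
      summable_of_ne_finset_zero (s := {0}) fun k hk => by simp [hcoeff k hk]⟩
  have henergy : energy c (mFourier (0 : Fin 2 → ℤ)) = c := by
    rw [energy, tsum_eq_sum (s := {0}) fun k hk => by simp [hcoeff k hk]]
    simp [symbol, coeff_mFourier]
  refine ⟨(((√c)⁻¹ : ℝ) : ℂ) • mFourier 0, ⟨hfinite.smul _, fun i => ?_, ?_⟩, ?_⟩
  · rw [mFourier_zero]
    rfl
  · rw [energy_smul, henergy, Complex.norm_real, Real.norm_eq_abs, sq_abs, inv_pow,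
      Real.sq_sqrt hc.le, inv_mul_cancel₀ hc.ne']
  · have hmass : powIntegral n (mFourier (0 : Fin 2 → ℤ)) = 1 := by
      simp only [powIntegral, norm_mFourier_apply, one_pow, integral_const, probReal_univ, one_smul]
    rw [powIntegral_smul, hmass, mul_one]
    exact pow_pos (norm_pos_iff.mpr (by simpa using! (Real.sqrt_pos.mpr hc).ne')) n

lemma exists_maximizing_seq (hc : 0 < c) (n : ℕ) : ∃ (M : ℝ) (φ : ℕ → C(Torus, ℂ)), 0 < M ∧
    (∀ φ, IsAdmissible c φ → powIntegral n φ ≤ M) ∧ (∀ j, IsAdmissible c (φ j)) ∧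
    (∀ j, M / 2 ≤ powIntegral n (φ j)) ∧ Tendsto (fun j => powIntegral n (φ j)) atTop (𝓝 M) := by
  obtain ⟨φ₀, hφ₀, hpos⟩ := exists_isAdmissible_powIntegral_pos hc n
  set M := sSup (powIntegral n '' {φ | IsAdmissible c φ})
  have hle (φ : C(Torus, ℂ)) (hφ : IsAdmissible c φ) : powIntegral n φ ≤ M :=
    le_csSup (bddAbove_powIntegral hc n) ⟨φ, hφ, rfl⟩
  have hM : 0 < M := hpos.trans_le (hle φ₀ hφ₀)
  obtain ⟨u, hmono, hu, hmem⟩ :=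
    exists_seq_tendsto_sSup (Set.Nonempty.image _ ⟨φ₀, hφ₀⟩) (bddAbove_powIntegral hc n)
  choose φ hφ hφu using hmem
  obtain ⟨N, hN⟩ := (hu.eventually (lt_mem_nhds (half_lt_self hM))).exists
  refine ⟨M, fun j => φ (j + N), hM, hle, fun j => hφ _, fun j => ?_, ?_⟩
  · exact (hφu (j + N)).symm ▸ hN.le.trans (hmono (Nat.le_add_left N j))
  · exact (hu.comp (tendsto_add_atTop_nat N)).congr fun j => (hφu (j + N)).symm

lemma exists_tendsto_improve_comp (hc : 0 < c) (p : ℕ) {φ : ℕ → C(Torus, ℂ)} {δ : ℝ} (hδ : 0 < δ)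
    (hφ : ∀ n, IsAdmissible c (φ n)) (hφδ : ∀ n, δ ≤ powIntegral (p + 2) (φ n)) :
    ∃ v, HasFiniteEnergy c v ∧ ∃ ψ : ℕ → ℕ, StrictMono ψ ∧
      Tendsto (fun n => improve c p (φ (ψ n))) atTop (𝓝 v) := by
  obtain ⟨C, hC⟩ := exists_integral_norm_pow_le_of_isAdmissible hc (p + 1)
  set b : ℕ → ℝ := fun n => (√(energy c (resolvent c (normPow (p + 1) (φ n)))))⁻¹
  have hb (n : ℕ) : b n ^ 2 ≤ (δ⁻¹) ^ 2 :=
    pow_le_pow_left₀ (by positivity)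
      (inv_anti₀ hδ ((hφδ n).trans ((hφ n).powIntegral_le_sqrt hc p))) 2
  have hbound (n : ℕ) : ∫ t, ‖((b n : ℂ) • normPow (p + 1) (φ n)) t‖ ^ 2 ≤ (δ⁻¹) ^ 2 * C := by
    have hmoment : 0 ≤ ∫ t, ‖φ n t‖ ^ (2 * (p + 1)) := by positivity
    simp only [ContinuousMap.smul_apply, smul_eq_mul, norm_mul, norm_normPow_apply, mul_pow,
      Complex.norm_real, Real.norm_eq_abs, sq_abs, integral_const_mul, ← pow_mul,
      mul_comm (p + 1) 2]
    exact mul_le_mul (hb n) (hC _ (hφ n)) hmoment (sq_nonneg _)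
  simpa only [resolvent_smul hc] using! exists_tendsto_resolvent_comp hc hbound

lemma IsAdmissible.of_tendsto (hc : 0 < c) {w : ℕ → C(Torus, ℂ)} {v : C(Torus, ℂ)}
    (hw : ∀ n, IsAdmissible c (w n)) (hlim : Tendsto w atTop (𝓝 v)) (hv : HasFiniteEnergy c v) :
    IsAdmissible c v where
  hasFiniteEnergy := hv
  isSymmetric i := tendsto_nhds_unique
    ((((reflect i).continuous_precomp).tendsto v).comp hlim)
    (hlim.congr fun n => ((hw n).isSymmetric i).symm)
  energy_le_one := hv.summable_energy.tsum_le_of_sum_le fun s =>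
    le_of_tendsto (tendsto_finsetSum s fun k _ =>
      ((((coeff k).continuous.tendsto v).comp hlim).norm.pow 2).const_mul (symbol c k))
      (.of_forall fun n => ((hw n).hasFiniteEnergy.summable_energy.sum_le_tsum s
        fun k _ => energy_term_nonneg hc (w n) k).trans (hw n).energy_le_one)

lemma exists_isMaxOn_powIntegral (hc : 0 < c) (p : ℕ) : ∃ v, IsAdmissible c v ∧
    0 < powIntegral (p + 2) v ∧ (∀ t, v t = ‖v t‖) ∧
    IsMaxOn (powIntegral (p + 2)) {φ | IsAdmissible c φ} v := by
  obtain ⟨M, φ, hM, hle, hφ, hφM, hlim⟩ := exists_maximizing_seq hc (p + 2)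
  obtain ⟨v, hv, ψ, hψ, hψv⟩ := exists_tendsto_improve_comp hc p (half_pos hM) hφ hφM
  have himprove : Tendsto (fun n => powIntegral (p + 2) (improve c p (φ n))) atTop (𝓝 M) :=
    tendsto_of_tendsto_of_tendsto_of_le_of_le hlim tendsto_const_nhds
      (fun n => (hφ n).powIntegral_le_improve hc p) fun n => hle _ ((hφ n).improve hc p)
  have hvM : powIntegral (p + 2) v = M := tendsto_nhds_unique
    (((continuous_integral_norm_pow volume (p + 2)).tendsto v).comp hψv)
    (himprove.comp hψ.tendsto_atTop)
  refine ⟨v, .of_tendsto hc (fun n => (hφ (ψ n)).improve hc p) hψv hv, hvM ▸ hM, fun t => ?_,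
    fun φ hφ => hvM ▸ hle φ hφ⟩
  have ht := ((continuous_eval_const t).tendsto v).comp hψv
  exact tendsto_nhds_unique ht <| ((Complex.continuous_ofReal.tendsto _).comp ht.norm).congr
    fun n => (improve_apply_eq_norm hc p (φ (ψ n)) t).symm

lemma IsAdmissible.energy_eq_one (hc : 0 < c) {n : ℕ} (hn : n ≠ 0) {v φ : C(Torus, ℂ)}
    (hmax : IsMaxOn (powIntegral n) {φ | IsAdmissible c φ} v) (hv : 0 < powIntegral n v)
    (hφ : IsAdmissible c φ) (hle : powIntegral n v ≤ powIntegral n φ) : energy c φ = 1 := by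
  have henergy := energy_nonneg hc φ
  refine hφ.energy_le_one.antisymm (le_of_not_gt fun hlt => ?_)
  set r : ℝ := 2 / (1 + energy c φ)
  have hr : 1 < r := (one_lt_div (by positivity)).mpr (by linarith)
  have hre : ‖(r : ℂ)‖ ^ 2 * energy c φ ≤ 1 := by
    rw [Complex.norm_real, Real.norm_eq_abs, sq_abs, div_pow, div_mul_eq_mul_div,
      div_le_one (by positivity)]
    linarith [sq_nonneg (1 - energy c φ)]
  have hscaled : powIntegral n ((r : ℂ) • φ) ≤ powIntegral n v := hmax (hφ.smul hre)
  rw [powIntegral_smul, Complex.norm_real, Real.norm_of_nonneg (by positivity)]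
    at hscaled
  have hpow : 1 < r ^ n := one_lt_pow₀ hr hn
  nlinarith

lemma sq_le_energy_of_isMaxOn (hc : 0 < c) {n : ℕ} (hn : n ≠ 0) {v φ : C(Torus, ℂ)}
    (hmax : IsMaxOn (powIntegral n) {φ | IsAdmissible c φ} v) (hv : 0 < powIntegral n v)
    (hφ : HasFiniteEnergy c φ) (hsymm : IsSymmetric φ) {b : ℝ} (hb : 0 < b)
    (hle : b ^ n * powIntegral n v ≤ powIntegral n φ) : b ^ 2 ≤ energy c φ := by
  by_contra! hlt
  have hnorm : ‖((b⁻¹ : ℝ) : ℂ)‖ = b⁻¹ := by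
    rw [Complex.norm_real, Real.norm_of_nonneg (by positivity)]
  have henergy : energy c (((b⁻¹ : ℝ) : ℂ) • φ) < 1 := by
    rw [energy_smul, hnorm, inv_pow, inv_mul_eq_div]
    exact (div_lt_one (by positivity)).mpr hlt
  refine henergy.ne (IsAdmissible.energy_eq_one hc hn hmax hv
    ⟨hφ.smul _, hsymm.smul _, henergy.le⟩ ?_)
  rw [powIntegral_smul, hnorm, inv_pow, inv_mul_eq_div]
  exact (le_div_iff₀' (by positivity)).mpr hle

lemma exists_resolvent_normPow_eq_smul (hc : 0 < c) {p : ℕ} {v : C(Torus, ℂ)}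
    (hv : IsAdmissible c v) (hpos : 0 < powIntegral (p + 2) v) (hnorm : ∀ t, v t = ‖v t‖)
    (hmax : IsMaxOn (powIntegral (p + 2)) {φ | IsAdmissible c φ} v) :
    ∃ b : ℂ, b ≠ 0 ∧ resolvent c (normPow (p + 1) v) = b • v := by
  have himprove := (powIntegral_add_le_powIntegral_improve hc p v).trans (hmax (hv.improve hc p))
  have hle := hv.powIntegral_le_sqrt hc p
  have heq : powIntegral (p + 2) v = √(energy c (resolvent c (normPow (p + 1) v))) :=
    hle.antisymm (by nlinarith [show (0 : ℝ) < p + 2 by positivity])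
  have hpairing : pairing (normPow (p + 1) v) v = powIntegral (p + 2) v := by
    simp only [pairing_normPow_of_eq_norm (p + 1) v hnorm, ← pow_succ, powIntegral]
  refine ⟨_, ?_, resolvent_eq_sqrt_energy_smul hc hv.hasFiniteEnergy
    (hv.energy_eq_one hc (Nat.succ_ne_zero _) hmax hpos le_rfl) (hpairing.trans heq)⟩
  exact_mod_cast (heq ▸ hpos).ne'

-- Each application of the resolvent gains one power of the symbol, and the weighted Wiener algebras
-- are closed under products.
lemma summable_symbol_pow_mul_norm_coeff (hc : 0 < c) {p : ℕ} {v : C(Torus, ℂ)}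
    (hv : HasFiniteEnergy c v) (hnorm : ∀ t, v t = ‖v t‖) {b : ℂ} (hb : b ≠ 0)
    (heq : resolvent c (normPow (p + 1) v) = b • v) (n : ℕ) :
    Summable fun k => symbol c k ^ n * ‖coeff k v‖ := by
  have hpow : normPow (p + 1) v = v ^ (p + 1) := ContinuousMap.ext fun t => by
    rw [ContinuousMap.pow_apply, normPow_apply, Complex.ofReal_pow, ← hnorm t]
  induction n with
  | zero => simpa only [pow_zero, one_mul] using hv.summable_coeff
  | succ n ih =>
    refine ((summable_symbol_pow_mul_norm_coeff_pow hc hv.summable_coeff ih p).mul_left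
      ‖b‖⁻¹).congr fun k => ?_
    have hk := (symbol_pos hc k).ne'
    have hcoeff := congrArg (‖coeff k ·‖) heq
    rw [coeff_resolvent hc, map_smul, smul_eq_mul, norm_mul, norm_mul, Complex.norm_real,
      Real.norm_of_nonneg (inv_nonneg.mpr (symbol_pos hc k).le), hpow] at hcoeff
    have hb' := norm_ne_zero_iff.mpr hb
    field_simp at hcoeff ⊢
    rw [hcoeff]
    ring

lemma exists_isMaxOn_powIntegral_summable (hc : 0 < c) (p : ℕ) : ∃ v, IsAdmissible c v ∧
    0 < powIntegral (p + 2) v ∧ IsMaxOn (powIntegral (p + 2)) {φ | IsAdmissible c φ} v ∧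
    ∀ n, Summable fun k => symbol c k ^ n * ‖coeff k v‖ := by
  obtain ⟨v, hv, hpos, hnorm, hmax⟩ := exists_isMaxOn_powIntegral hc p
  obtain ⟨b, hb, heq⟩ := exists_resolvent_normPow_eq_smul hc hv hpos hnorm hmax
  exact ⟨v, hv, hpos, hmax,
    summable_symbol_pow_mul_norm_coeff hc hv.hasFiniteEnergy hnorm hb heq⟩

end Maximizer

section Descent

lemma isOpenQuotientMap_toTorus {d : Type*} [Finite d] :
    IsOpenQuotientMap (toTorus : (d → ℝ) → UnitAddTorus d) :=
  IsOpenQuotientMap.piMap fun _ : d => QuotientAddGroup.isOpenQuotientMap_mk.comp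
    (Homeomorph.mulRight₀ (2 * π)⁻¹ (by positivity)).isOpenQuotientMap

variable {d : Type*} [DecidableEq d]

lemma toTorus_single_two_pi (i : d) : toTorus (Pi.single i (2 * π)) = 0 := by
  ext j
  obtain rfl | hj := eq_or_ne j i
  · simp [toTorus]
  · simp [toTorus, hj]

lemma exists_eq_sum_of_toTorus_eq_zero [Fintype d] {x : d → ℝ} (hx : toTorus x = 0) :
    ∃ n : d → ℤ, x = ∑ i, n i • Pi.single i (2 * π) := by
  have hcoord (i : d) : ∃ n : ℤ, n • (1 : ℝ) = x i / (2 * π) :=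
    (AddCircle.coe_eq_zero_iff 1).mp (congrFun hx i)
  choose n hn using hcoord
  refine ⟨n, funext fun i => ?_⟩
  have hi : x i = n i * (2 * π) := by
    rw [← div_eq_iff two_pi_pos.ne', ← hn i, zsmul_one]
  simp [Finset.sum_apply, Pi.single_apply, hi]

lemma eq_of_toTorus_eq [Finite d] {E : Type*} {U : (d → ℝ) → E}
    (hper : ∀ i, Function.Periodic U (Pi.single i (2 * π))) {x y : d → ℝ}
    (hxy : toTorus x = toTorus y) : U x = U y := by
  have := Fintype.ofFinite d
  obtain ⟨n, hn⟩ := exists_eq_sum_of_toTorus_eq_zero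
    (show toTorus (x - y) = 0 by rw [map_sub, hxy, sub_self])
  have hsum : Function.Periodic U (∑ i, n i • Pi.single i (2 * π)) :=
    Finset.sum_induction _ (Function.Periodic U) (fun _ _ h₁ h₂ => h₁.add_period h₂) (by simp)
      fun i _ => (hper i).zsmul (n i)
  rw [← hsum y, ← hn, add_sub_cancel]

lemma exists_comp_toTorus_eq [Finite d] {E : Type*} [TopologicalSpace E] {U : (d → ℝ) → E}
    (hU : Continuous U) (hper : ∀ i, Function.Periodic U (Pi.single i (2 * π))) :
    ∃ φ : C(UnitAddTorus d, E), ∀ x, φ (toTorus x) = U x := by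
  have hquot : IsQuotientMap (⟨toTorus, continuous_toTorus⟩ : C(d → ℝ, UnitAddTorus d)) :=
    isOpenQuotientMap_toTorus.isQuotientMap
  exact ⟨hquot.lift ⟨U, hU⟩ fun _ _ => eq_of_toTorus_eq hper,
    DFunLike.congr_fun (hquot.lift_comp ⟨U, hU⟩ fun _ _ => eq_of_toTorus_eq hper)⟩

lemma exists_hasPartialDeriv [Fintype d] {φ : C(UnitAddTorus d, ℂ)} {n : WithTop ℕ∞}
    (hφ : ContDiff ℝ (n + 1) fun x => φ (toTorus x)) (i : d) :
    ∃ g, HasPartialDeriv i φ g ∧ ContDiff ℝ n fun x => g (toTorus x) := by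
  set U : (d → ℝ) → ℂ := fun x => φ (toTorus x) with hU
  have hU' : ContDiff ℝ n fun x => fderiv ℝ U x (Pi.single i 1) :=
    (hφ.fderiv_right le_rfl).clm_apply contDiff_const
  have hper (j : d) : Function.Periodic (fun x => fderiv ℝ U x (Pi.single i 1))
      (Pi.single j (2 * π)) := fun x => by
    have hshift : (fun y => U (y + Pi.single j (2 * π))) = U := by
      simp only [hU, map_add, toTorus_single_two_pi, add_zero]
    beta_reduce
    rw [← fderiv_comp_add_right, hshift]
  obtain ⟨g, hg⟩ := exists_comp_toTorus_eq hU'.continuous hper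
  refine ⟨g, fun t => ?_, by simpa only [hg] using hU'⟩
  obtain ⟨x, rfl⟩ := isOpenQuotientMap_toTorus.surjective t
  have hline := (hφ.differentiable (by simp) x).hasFDerivAt.hasLineDerivAt (Pi.single i 1)
  simpa only [HasLineDerivAt, ← Pi.single_smul, smul_eq_mul, mul_one, hU, map_add, hg] using hline

lemma hasFiniteEnergy_of_contDiff {c : ℝ} (hc : 0 < c) {φ : C(Torus, ℂ)}
    (hφ : ContDiff ℝ 2 fun x => φ (toTorus x)) : HasFiniteEnergy c φ := by
  choose g hg hg' using exists_hasPartialDeriv (n := 1) hφ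
  choose h hh _ using fun i => exists_hasPartialDeriv (n := 0) (hg' i) i
  have hsol : IsClassicalSolution c φ ((c : ℂ) • φ - ∑ i, h i) := ⟨g, h, hg, hh, rfl⟩
  exact hsol.resolvent_eq hc ▸ hasFiniteEnergy_resolvent hc _

end Descent

section Plane

/-- The doubly `2π`-periodic function on the plane induced by a function on the torus. -/
def lift (φ : C(Torus, ℂ)) : ℝ → ℝ → ℂ := fun x y => φ (toTorus ![x, y])

variable {φ : C(Torus, ℂ)}

lemma contDiff_uncurry_iff {E : Type*} [NormedAddCommGroup E] [NormedSpace ℝ E]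
    {U : (Fin 2 → ℝ) → E} {n : WithTop ℕ∞} :
    ContDiff ℝ n (fun q : ℝ × ℝ => U ![q.1, q.2]) ↔ ContDiff ℝ n U :=
  (ContinuousLinearEquiv.finTwoArrow ℝ ℝ).symm.contDiff_comp_iff

lemma smooth2C_lift_iff : Smooth2C (lift φ) ↔ ContDiff ℝ (⊤ : ℕ∞) fun x => φ (toTorus x) :=
  contDiff_uncurry_iff (U := fun x => φ (toTorus x))

lemma dblPeriodicC_lift (φ : C(Torus, ℂ)) : DblPeriodicC (lift φ) := fun x y => by
  have h₀ : ![x + 2 * π, y] = ![x, y] + Pi.single 0 (2 * π) := by ext i; fin_cases i <;> simp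
  have h₁ : ![x, y + 2 * π] = ![x, y] + Pi.single 1 (2 * π) := by ext i; fin_cases i <;> simp
  simp only [lift, h₀, h₁, map_add, toTorus_single_two_pi, add_zero, and_self]

lemma symFunC_lift_iff : SymFunC (lift φ) ↔ IsSymmetric φ := by
  have h₀ (x y : ℝ) : toTorus ![-x, y] = reflect 0 (toTorus ![x, y]) := by
    ext i; fin_cases i <;> simp [toTorus, reflect, neg_div]
  have h₁ (x y : ℝ) : toTorus ![x, -y] = reflect 1 (toTorus ![x, y]) := by
    ext i; fin_cases i <;> simp [toTorus, reflect, neg_div]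
  have hsurj : Function.Surjective fun q : ℝ × ℝ => (toTorus ![q.1, q.2] : Torus) :=
    isOpenQuotientMap_toTorus.surjective.comp (finTwoArrowEquiv ℝ).symm.surjective
  simp only [SymFunC, lift, h₀, h₁, IsSymmetric, Fin.forall_fin_two, ContinuousMap.ext_iff,
    ContinuousMap.comp_apply, hsurj.forall, Prod.forall, forall_and]

lemma exists_lift_eq {u : ℝ → ℝ → ℂ} (hu : Smooth2C u) (hper : DblPeriodicC u) :
    ∃ φ, lift φ = u := by
  have hcont : Continuous fun x : Fin 2 → ℝ => u (x 0) (x 1) :=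
    hu.continuous.comp (by fun_prop : Continuous fun x : Fin 2 → ℝ => (x 0, x 1))
  obtain ⟨φ, hφ⟩ := exists_comp_toTorus_eq hcont fun i x => by
    fin_cases i
    · simpa using (hper (x 0) (x 1)).1
    · simpa using (hper (x 0) (x 1)).2
  exact ⟨φ, funext₂ fun x y => hφ ![x, y]⟩

lemma integ2_toTorus {f : Torus → ℝ} (hf : Continuous f) :
    integ2 (fun x y => f (toTorus ![x, y])) = (2 * π) ^ 2 * ∫ t, f t := by
  have hpoint (x y : ℝ) : toTorus ![x, y] =
      ![((x / (2 * π) : ℝ) : UnitAddCircle), ((y / (2 * π) : ℝ) : UnitAddCircle)] := by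
    ext i; fin_cases i <;> rfl
  have hmeas := volume_preserving_finTwoArrow UnitAddCircle
  have hprod : ∫ t, f t = ∫ q : UnitAddCircle × UnitAddCircle, f ![q.1, q.2] := by
    rw [← hmeas.symm.integral_comp']
    rfl
  have hfubini : ∫ q : UnitAddCircle × UnitAddCircle, f ![q.1, q.2] = ∫ s, ∫ r, f ![s, r] :=
    integral_prod _ (integrable_of_continuous (by fun_prop))
  have hinner (s : UnitAddCircle) :
      ∫ y in (0 : ℝ)..2 * π, f ![s, ((y / (2 * π) : ℝ) : UnitAddCircle)] =
        2 * π * ∫ r, f ![s, r] :=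
    intervalIntegral_circle fun r => f ![s, r]
  simp only [integ2, hpoint, hinner, intervalIntegral.integral_const_mul]
  rw [intervalIntegral_circle fun s => ∫ r, f ![s, r], hprod, hfubini, smul_eq_mul]
  ring

lemma integ2_norm_lift_pow (φ : C(Torus, ℂ)) (n : ℕ) :
    integ2 (fun x y => ‖lift φ x y‖ ^ n) = (2 * π) ^ 2 * powIntegral n φ :=
  integ2_toTorus (f := fun t => ‖φ t‖ ^ n) (by fun_prop)

lemma HasPartialDeriv.deriv_lift_fst {g : C(Torus, ℂ)} (h : HasPartialDeriv 0 φ g) (x y : ℝ) :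
    deriv (fun s => lift φ s y) x = g (toTorus ![x, y]) := by
  have hshift (s : ℝ) : toTorus ![s, y] = toTorus ![0, y] + toTorus (Pi.single 0 s) := by
    rw [← map_add]; congr 1; ext i; fin_cases i <;> simp
  rw [hshift x, ← (h.hasDerivAt (toTorus ![0, y]) x).deriv]
  exact congrArg (deriv · x) (funext fun s => congrArg φ (hshift s))

lemma HasPartialDeriv.deriv_lift_snd {g : C(Torus, ℂ)} (h : HasPartialDeriv 1 φ g) (x y : ℝ) :
    deriv (fun s => lift φ x s) y = g (toTorus ![x, y]) := by
  have hshift (s : ℝ) : toTorus ![x, s] = toTorus ![x, 0] + toTorus (Pi.single 1 s) := by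
    rw [← map_add]; congr 1; ext i; fin_cases i <;> simp
  rw [hshift y, ← (h.hasDerivAt (toTorus ![x, 0]) y).deriv]
  exact congrArg (deriv · y) (funext fun s => congrArg φ (hshift s))

lemma bcC_lift (hφ : Smooth2C (lift φ)) (c : ℝ) :
    BcC c (lift φ) = (2 * π) ^ 2 / 2 * energy c φ := by
  choose g hg _ using exists_hasPartialDeriv (n := (⊤ : ℕ∞)) (smooth2C_lift_iff.mp hφ)
  have hint := integ2_toTorus (f := fun t => ‖g 0 t‖ ^ 2 + ‖g 1 t‖ ^ 2 + c * ‖φ t‖ ^ 2)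
    (by fun_prop)
  rw [integral_add (integrable_of_continuous (by fun_prop))
      (integrable_of_continuous (by fun_prop)),
    integral_add (integrable_of_continuous (by fun_prop))
      (integrable_of_continuous (by fun_prop)), integral_const_mul] at hint
  have henergy := (hasSum_energy_of_hasPartialDeriv hg c).tsum_eq
  rw [Fin.sum_univ_two, ← energy] at henergy
  simp only [BcC, (hg 0).deriv_lift_fst, (hg 1).deriv_lift_snd]
  simp only [lift, hint, henergy]
  ring

end Plane

lemma exists_pos_pow_mul_eq {n : ℕ} (hn : n ≠ 0) {a l : ℝ} (ha : 0 < a) (hl : 0 < l) :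
    ∃ b, 0 < b ∧ b ^ n * a = l :=
  ⟨(l / a) ^ (n : ℝ)⁻¹, by positivity, by
    rw [Real.rpow_inv_natCast_pow (by positivity) hn, div_mul_cancel₀ l ha.ne']⟩

end GroundState

open GroundState

/-- Existence of a ground state for the constrained minimization problem
inf{ B_c(u) : ∫|u|^{p+2} = λ } in the class of smooth doubly 2π-periodic symmetric functions. -/
theorem exists_ground_state (p : ℕ) (hp : 1 ≤ p) (c : ℝ) (hc : 0 < c)
    (lam : ℝ) (hlam : 0 < lam) :
    ∃ Ψ : ℝ → ℝ → ℂ,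
      Smooth2C Ψ ∧ DblPeriodicC Ψ ∧ SymFunC Ψ ∧
      integ2 (fun x y => ‖Ψ x y‖^(p+2)) = lam ∧
      ∀ u : ℝ → ℝ → ℂ,
        Smooth2C u → DblPeriodicC u → SymFunC u →
        integ2 (fun x y => ‖u x y‖^(p+2)) = lam →
        BcC c Ψ ≤ BcC c u := by
  obtain ⟨v, hv, hpos, hmax, hdecay⟩ := exists_isMaxOn_powIntegral_summable hc p
  obtain ⟨b, hb, hbl⟩ := exists_pos_pow_mul_eq (Nat.succ_ne_zero (p + 1))
    (mul_pos (sq_pos_of_pos two_pi_pos) hpos) hlam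
  have hnorm : ‖(b : ℂ)‖ = b := Complex.norm_of_nonneg hb.le
  have hsmooth : Smooth2C (lift ((b : ℂ) • v)) :=
    smooth2C_lift_iff.mpr ((contDiff_comp_toTorus hc.le hdecay).const_smul (b : ℂ))
  refine ⟨lift ((b : ℂ) • v), hsmooth, dblPeriodicC_lift _,
    symFunC_lift_iff.mpr (hv.isSymmetric.smul _), ?_, fun u hu hper hsymm hint => ?_⟩
  · rw [integ2_norm_lift_pow, powIntegral_smul, hnorm, mul_left_comm, hbl]
  obtain ⟨φ, rfl⟩ := exists_lift_eq hu hper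
  have hφ : HasFiniteEnergy c φ :=
    hasFiniteEnergy_of_contDiff hc ((smooth2C_lift_iff.mp hu).of_le (WithTop.coe_le_coe.mpr le_top))
  have hpow : b ^ (p + 2) * powIntegral (p + 2) v = powIntegral (p + 2) φ := by
    rw [integ2_norm_lift_pow, ← hbl, mul_left_comm] at hint
    exact (mul_left_cancel₀ (by positivity) hint).symm
  rw [bcC_lift hsmooth, bcC_lift hu, energy_smul, hnorm,
    hv.energy_eq_one hc (Nat.succ_ne_zero _) hmax hpos le_rfl, mul_one]
  gcongr
  exact sq_le_energy_of_isMaxOn hc (Nat.succ_ne_zero _) hmax hpos hφ (symFunC_lift_iff.mp hsymm)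
    hb hpow.le
end
end
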